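/- The variational problem: find W ∈ X such that B(W,V) = ⟨Y, V⟩ for all V ∈ X, where Y is a given bounded conjugate-linear functional on X, satisfies the Fredholm alternative. Equivalently, the bounded linear operator 𝓛 : X → X* defined by (𝓛W)(V) = B(W,V) is a Fredholm operator of index zero: its kernel is finite-dimensional, its range is closed with finite codimension equal to the dimension of the kernel, and in particular 𝓛 is invertible if and only if its kernel is trivial. -/

import Mathlib

noncomputable section

open MeasureTheory Complex Filter Topology
open scoped Real NNReal ContDiff

/-- The plane `ℝ²`. -/
abbrev R2 : Type := EuclideanSpace ℝ (Fin 2)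

/-- Euclidean dot product on `ℝ²`. -/
def rdot (x ξ : R2) : ℝ := x 0 * ξ 0 + x 1 * ξ 1

/-- `testFT φ ξ = ∫ e^{i x·ξ} φ(x) dx`, the (inverse-type) Fourier integral of a
test function `φ`. -/
def testFT (φ : R2 → ℂ) (ξ : R2) : ℂ :=
  ∫ x : R2, Complex.exp (Complex.I * (rdot x ξ : ℂ)) * φ x

/-- The squared `H^s(ℝ²)` norm of the distribution whose Fourier transform is `F`:
`‖f‖² = (2π)⁻² ∫ (1+|ξ|²)^s |f̂(ξ)|² dξ`. -/
def wnormSq (s : ℝ) (F : R2 → ℂ) : ℝ :=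
  ((2 * π) ^ 2)⁻¹ * ∫ ξ : R2, ((1 : ℝ) + ‖ξ‖ ^ 2) ^ s * ‖F ξ‖ ^ 2

/-- The `H^s(ℝ²)` norm (Fourier-side representation). -/
def wnorm (s : ℝ) (F : R2 → ℂ) : ℝ := Real.sqrt (wnormSq s F)

/-- `F` is the Fourier transform of an element of `H^s(ℝ²)`. -/
def MemHs (s : ℝ) (F : R2 → ℂ) : Prop :=
  AEStronglyMeasurable F (volume : Measure R2) ∧
    Integrable (fun ξ : R2 => ((1 : ℝ) + ‖ξ‖ ^ 2) ^ s * ‖F ξ‖ ^ 2) volume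

/-- An element `f` of `H̃^s(Γ)`: a distribution on `ℝ²` of Sobolev regularity `s`
supported in the closure of `Γ`, represented by its Fourier transform `ft`
(a continuous function, `f` being a compactly supported distribution).
The support condition is expressed by testing against smooth compactly supported
functions `φ` whose support avoids `closure Γ`, via the Parseval pairing
`∫ f φ dx = (2π)⁻² ∫ f̂(ξ) φ̌(ξ) dξ` with `φ̌(ξ) = ∫ e^{ix·ξ} φ(x) dx`. -/
structure HTildeElt (s : ℝ) (Γ : Set R2) where
  ft : R2 → ℂ
  cont : Continuous ft
  mem : Integrable (fun ξ : R2 => ((1 : ℝ) + ‖ξ‖ ^ 2) ^ s * ‖ft ξ‖ ^ 2) volume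
  supp : ∀ φ : R2 → ℂ, ContDiff ℝ ∞ φ → HasCompactSupport φ →
    tsupport φ ∩ closure Γ = ∅ → (∫ ξ : R2, ft ξ * testFT φ ξ) = 0

/-- `Γ` is a bounded Lipschitz domain in `ℝ²`: a nonempty bounded open set whose
boundary is locally, after a rigid motion, the graph of a Lipschitz function with
the domain on one side. -/
def IsLipschitzDomain (Γ : Set R2) : Prop :=
  IsOpen Γ ∧ Bornology.IsBounded Γ ∧ Γ.Nonempty ∧
    ∀ x ∈ frontier Γ, ∃ (e : R2 ≃ₗᵢ[ℝ] R2) (L : ℝ≥0) (f : ℝ → ℝ) (U : Set R2),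
      LipschitzWith L f ∧ IsOpen U ∧ x ∈ U ∧
        ∀ y ∈ U, (y ∈ Γ ↔ f (e y 0) < e y 1)

/-- `ξ·V̂(ξ)`, i.e. `-i` times the Fourier transform of `div V`. -/
def dotFt (F1 F2 : R2 → ℂ) (ξ : R2) : ℂ := (ξ 0 : ℂ) * F1 ξ + (ξ 1 : ℂ) * F2 ξ

/-- `ξ⊥·V̂(ξ)`, i.e. `-i` times the Fourier transform of `curl V`. -/
def curlFt (F1 F2 : R2 → ℂ) (ξ : R2) : ℂ := (ξ 1 : ℂ) * F1 ξ - (ξ 0 : ℂ) * F2 ξ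

/-- An element of `X = H̃^{-1/2}_div(Γ)`: a pair of elements of `H̃^{-1/2}(Γ)`
whose distributional divergence also belongs to `H̃^{-1/2}(Γ)`. -/
structure Xelt (Γ : Set R2) where
  c1 : HTildeElt (-(1/2) : ℝ) Γ
  c2 : HTildeElt (-(1/2) : ℝ) Γ
  divMem : Integrable (fun ξ : R2 =>
    ((1 : ℝ) + ‖ξ‖ ^ 2) ^ (-(1/2) : ℝ) * ‖dotFt c1.ft c2.ft ξ‖ ^ 2) volume

/-- The Fourier transform of `div V`. -/
def divFt {Γ : Set R2} (V : Xelt Γ) (ξ : R2) : ℂ :=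
  Complex.I * dotFt V.c1.ft V.c2.ft ξ

/-- The squared `H`-norm `‖V‖²_H` of a vector field. -/
def HnormSq {Γ : Set R2} (V : Xelt Γ) : ℝ :=
  wnormSq (-(1/2)) V.c1.ft + wnormSq (-(1/2)) V.c2.ft

/-- The squared `X`-norm `‖V‖²_X = ‖V‖²_H + ‖div V‖²_{H̃^{-1/2}}`. -/
def XnormSq {Γ : Set R2} (V : Xelt Γ) : ℝ :=
  HnormSq V + wnormSq (-(1/2)) (divFt V)

/-- The `X`-norm. -/
def Xnorm {Γ : Set R2} (V : Xelt Γ) : ℝ := Real.sqrt (XnormSq V)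

/-- `ĝ₀(ξ) = i/√(k²-|ξ|²)`, with the branch `√(k²-|ξ|²) = i√(|ξ|²-k²)` for `|ξ| > k`. -/
def g0hat (k : ℝ) (ξ : R2) : ℂ :=
  if ‖ξ‖ < k then Complex.I / ((Real.sqrt (k ^ 2 - ‖ξ‖ ^ 2) : ℝ) : ℂ)
  else 1 / ((Real.sqrt (‖ξ‖ ^ 2 - k ^ 2) : ℝ) : ℂ)

/-- The integrand of the sesquilinear form `B`:
`ĝ₀(ξ) [ (|ξ|²-k²) a₁ b̄₁ - k² a₂ b̄₂ ]` with `a₁ = ξ·Ŵ/|ξ|`, `a₂ = ξ⊥·Ŵ/|ξ|`, etc. -/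
def Bintegrand (k : ℝ) (F1 F2 G1 G2 : R2 → ℂ) (ξ : R2) : ℂ :=
  g0hat k ξ *
    (((‖ξ‖ ^ 2 - k ^ 2 : ℝ) : ℂ) * (dotFt F1 F2 ξ * starRingEnd ℂ (dotFt G1 G2 ξ)) -
      ((k ^ 2 : ℝ) : ℂ) * (curlFt F1 F2 ξ * starRingEnd ℂ (curlFt G1 G2 ξ))) /
    ((‖ξ‖ ^ 2 : ℝ) : ℂ)

/-- The sesquilinear form `B(W,V)`. -/
def Bform (k : ℝ) {Γ : Set R2} (W V : Xelt Γ) : ℂ :=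
  ∫ ξ : R2, Bintegrand k W.c1.ft W.c2.ft V.c1.ft V.c2.ft ξ

/-- The sesquilinear form `E(q,V) = B(curl⃗ q, V)`, where
`curl⃗ q = (∂q/∂x₂, -∂q/∂x₁)` has Fourier transform `(iξ₂ q̂, -iξ₁ q̂)`. -/
def Eform (k : ℝ) {Γ : Set R2} (q : HTildeElt (1/2 : ℝ) Γ) (V : Xelt Γ) : ℂ :=
  ∫ ξ : R2, Bintegrand k (fun η => Complex.I * (η 1 : ℂ) * q.ft η)
      (fun η => -(Complex.I * (η 0 : ℂ) * q.ft η)) V.c1.ft V.c2.ft ξ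

/-- The inner product of the Hilbert space `X`; by the Riesz representation
theorem, every bounded conjugate-linear functional on `X` is `V ↦ Xinner Y V`
for a unique `Y ∈ X`, with functional norm `Xnorm Y`. -/
def Xinner {Γ : Set R2} (Y V : Xelt Γ) : ℂ :=
  ((((2 * π) ^ 2)⁻¹ : ℝ) : ℂ) * ∫ ξ : R2, ((((1 : ℝ) + ‖ξ‖ ^ 2) ^ (-(1/2) : ℝ) : ℝ) : ℂ) *
    (Y.c1.ft ξ * starRingEnd ℂ (V.c1.ft ξ) + Y.c2.ft ξ * starRingEnd ℂ (V.c2.ft ξ) +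
      divFt Y ξ * starRingEnd ℂ (divFt V ξ))

/-- `√(k²-|ξ|²)`, with the branch `i√(|ξ|²-k²)` for `|ξ| > k`. -/
def rootk (k : ℝ) (ξ : R2) : ℂ :=
  if ‖ξ‖ < k then ((Real.sqrt (k ^ 2 - ‖ξ‖ ^ 2) : ℝ) : ℂ)
  else Complex.I * ((Real.sqrt (‖ξ‖ ^ 2 - k ^ 2) : ℝ) : ℂ)

/-- The Fourier multiplier `i/(2√(k²-|ξ|²))` of the Helmholtz single-layer
operator `T` with kernel `e^{ik|x-y|}/(4π|x-y|)`. -/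
def mT (k : ℝ) (ξ : R2) : ℂ := Complex.I / (2 * rootk k ξ)

/-- The Fourier multiplier `1/(2|ξ|)` of the Laplace single-layer operator `T₀`
with kernel `1/(4π|x-y|)`. -/
def mT0 (ξ : R2) : ℂ := 1 / (2 * ((‖ξ‖ : ℝ) : ℂ))

/-- The Fourier multiplier of `R = T - T₀`. -/
def mR (k : ℝ) (ξ : R2) : ℂ := mT k ξ - mT0 ξ

/-- The distributions with Fourier data `G` and `E` have the same restriction to
the open set `Γ`: `⟨G - E, φ⟩ = 0` for all smooth `φ` compactly supported in `Γ`
(pairing written on the Fourier side). -/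
def AgreeOn (Γ : Set R2) (G E : R2 → ℂ) : Prop :=
  ∀ φ : R2 → ℂ, ContDiff ℝ ∞ φ → HasCompactSupport φ → tsupport φ ⊆ Γ →
    (∫ ξ : R2, (G ξ - E ξ) * testFT φ ξ) = 0

/-- The duality pairing `⟨f, ψ⟩` between `H^{1/2}(Γ)` and `H̃^{-1/2}(Γ)`, written
on the Fourier side (Plancherel): `(2π)⁻² ∫ f̂(ξ) conj(ψ̂(ξ)) dξ`, where `G = f̂`
is the Fourier data of (an extension of) `f`. -/
def dualPair (G ψ : R2 → ℂ) : ℂ :=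
  ((((2 * π) ^ 2)⁻¹ : ℝ) : ℂ) * ∫ ξ : R2, G ξ * starRingEnd ℂ (ψ ξ)


/-- bounded sequences converging weakly to zero -/
def WSeq {S : Type*} [NormedAddCommGroup S] [InnerProductSpace ℂ S] (u : ℕ → S) : Prop :=
  (∃ C : ℝ, ∀ n, ‖u n‖ ≤ C) ∧ ∀ v : S, Tendsto (fun n => inner ℂ v (u n)) atTop (𝓝 0)

/-- completely continuous operators -/
def CC {S : Type*} [NormedAddCommGroup S] [InnerProductSpace ℂ S] (K : S →L[ℂ] S) : Prop :=
  ∀ u : ℕ → S, WSeq u → Tendsto (fun n => K (u n)) atTop (𝓝 0)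

/-- weakly null sequences with null image are null -/
def PH {S : Type*} [NormedAddCommGroup S] [InnerProductSpace ℂ S] (A : S →L[ℂ] S) : Prop :=
  ∀ u : ℕ → S, WSeq u → Tendsto (fun n => A (u n)) atTop (𝓝 0) → Tendsto u atTop (𝓝 0)

section abstractPart

variable {S : Type*} [NormedAddCommGroup S] [InnerProductSpace ℂ S]

lemma WSeq.map [CompleteSpace S] {u : ℕ → S} (hu : WSeq u) (K : S →L[ℂ] S) :
    WSeq (fun n => K (u n)) := by
  obtain ⟨⟨C, hC⟩, hw⟩ := hu
  refine ⟨⟨‖K‖ * C, fun n => (K.le_opNorm _).trans (by gcongr; exact hC n)⟩, fun v => ?_⟩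
  have := hw (ContinuousLinearMap.adjoint K v)
  simpa [ContinuousLinearMap.adjoint_inner_left] using this

lemma weak_subseq [CompleteSpace S] [TopologicalSpace.SeparableSpace S] (u : ℕ → S) (C : ℝ)
    (hC : ∀ n, ‖u n‖ ≤ C) :
    ∃ (x : S) (φ : ℕ → ℕ), StrictMono φ ∧ WSeq (fun n => u (φ n) - x) := by
  have h := WeakDual.isSeqCompact_closedBall ℂ S (0 : StrongDual ℂ S) C
  obtain ⟨a, -, φ, hφ, ha⟩ := h (x := fun n =>
      StrongDual.toWeakDual (InnerProductSpace.toDual ℂ S (u n))) (by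
    intro n
    simp [hC n])
  refine ⟨(InnerProductSpace.toDual ℂ S).symm (WeakDual.toStrongDual a), φ, hφ,
    ⟨C + ‖(InnerProductSpace.toDual ℂ S).symm (WeakDual.toStrongDual a)‖, fun n => ?_⟩, fun v => ?_⟩
  · exact (norm_sub_le _ _).trans (by gcongr; exact hC _)
  · have h1 := tendsto_iff_forall_eval_tendsto_topDualPairing.1 ha v
    have h2 : Tendsto (fun n => inner ℂ (u (φ n)) v) atTop (𝓝 (a v)) := by
      exact h1
    have h3 : Tendsto (fun n => inner ℂ (u (φ n)) v -
      inner ℂ ((InnerProductSpace.toDual ℂ S).symm (WeakDual.toStrongDual a)) v) atTop (𝓝 0) := by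
      rw [InnerProductSpace.toDual_symm_apply]
      have := h2.sub_const (a v)
      rw [sub_self] at this
      exact this
    have h4 := (Complex.continuous_conj.tendsto _).comp h3
    simp only [Function.comp_def, map_sub, inner_conj_symm, map_zero] at h4
    simpa [inner_sub_right] using h4

lemma WSeq.comp {u : ℕ → S} (hu : WSeq u) {φ : ℕ → ℕ} (hφ : StrictMono φ) :
    WSeq (fun n => u (φ n)) :=
  ⟨⟨hu.1.choose, fun n => hu.1.choose_spec _⟩, fun v => (hu.2 v).comp hφ.tendsto_atTop⟩

lemma weak_lim_norm_le {u : ℕ → S} {x : S} (hu : WSeq (fun n => u n - x)) {C : ℝ}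
    (hC : ∀ n, ‖u n‖ ≤ C) : ‖x‖ ≤ C := by
  have h := hu.2 x
  have h1 : Tendsto (fun n => inner ℂ x (u n)) atTop (𝓝 (inner ℂ x x)) := by
    have := h.add_const (inner ℂ x x)
    simpa [inner_sub_right] using this
  have h2 := h1.norm
  have h3 : ‖(inner ℂ x x : ℂ)‖ = ‖x‖ * ‖x‖ := by
    rw [inner_self_eq_norm_sq_to_K]; simp [sq]
  rw [h3] at h2
  have h4 : ‖x‖ * ‖x‖ ≤ ‖x‖ * C :=
    le_of_tendsto h2 (Eventually.of_forall fun n => (norm_inner_le_norm _ _).trans (by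
      gcongr; exact hC n))
  rcases eq_or_lt_of_le (norm_nonneg x) with h0 | h0
  · rw [← h0]; exact (norm_nonneg _).trans (hC 0)
  · exact le_of_mul_le_mul_left h4 h0

lemma CC.isCompact [CompleteSpace S] [TopologicalSpace.SeparableSpace S] {K : S →L[ℂ] S}
    (hK : CC K) : IsCompactOperator K := by
  refine ⟨K '' Metric.closedBall 0 1, ?_, ?_⟩
  · apply IsSeqCompact.isCompact
    intro y hy
    choose u hu huy using hy
    obtain ⟨x, φ, hφ, hw⟩ := weak_subseq u 1 (fun n => by simpa using hu n)
    refine ⟨K x, ⟨x, ?_, rfl⟩, φ, hφ, ?_⟩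
    · simpa using weak_lim_norm_le hw (C := 1) (fun n => by simpa using hu (φ n))
    · have := hK _ hw
      simp only [map_sub, huy] at this
      have := this.add_const (K x)
      simpa [Function.comp_def] using this
  · exact Filter.mem_of_superset (Metric.closedBall_mem_nhds 0 one_pos)
      (fun x hx => ⟨x, hx, rfl⟩)

lemma CC.comp_left [CompleteSpace S] {K : S →L[ℂ] S} (hK : CC K) (T : S →L[ℂ] S) :
    CC (T ∘L K) := by
  intro u hu
  have := (T.continuous.tendsto 0).comp (hK u hu)
  simpa [Function.comp_def] using this

lemma CC.add {K T : S →L[ℂ] S} (hK : CC K) (hT : CC T) : CC (K + T) := by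
  intro u hu
  simpa using (hK u hu).add (hT u hu)

lemma CC.neg {K : S →L[ℂ] S} (hK : CC K) : CC (-K) := by
  intro u hu
  simpa using (hK u hu).neg

lemma CC.adjoint [CompleteSpace S] {K : S →L[ℂ] S} (hK : CC K) :
    CC (ContinuousLinearMap.adjoint K) := by
  intro u hu
  have h1 := hK _ (hu.map (ContinuousLinearMap.adjoint K))
  obtain ⟨⟨C, hC⟩, hw⟩ := hu
  rw [tendsto_zero_iff_norm_tendsto_zero]
  have h2 : Tendsto (fun n => ‖ContinuousLinearMap.adjoint K (u n)‖ ^ 2) atTop (𝓝 0) := by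
    have h3 : Tendsto (fun n => ‖K (ContinuousLinearMap.adjoint K (u n))‖ * C) atTop (𝓝 0) := by
      simpa using h1.norm.mul_const C
    refine squeeze_zero (fun n => by positivity) (fun n => ?_) h3
    have : ‖ContinuousLinearMap.adjoint K (u n)‖ ^ 2
        = ‖(inner ℂ (K (ContinuousLinearMap.adjoint K (u n))) (u n) : ℂ)‖ := by
      rw [← ContinuousLinearMap.adjoint_inner_right, inner_self_eq_norm_sq_to_K]; simp
    rw [this]
    exact (norm_inner_le_norm _ _).trans (by gcongr; exact hC n)
  have h4 := h2.sqrt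
  simpa [Real.sqrt_sq] using h4

lemma PH.add_CC {A K : S →L[ℂ] S} (hA : PH A) (hK : CC K) : PH (A + K) := by
  intro u hu h
  refine hA u hu ?_
  have := h.sub (hK u hu)
  simpa using this

lemma PH.finite_ker [CompleteSpace S] [TopologicalSpace.SeparableSpace S] {A : S →L[ℂ] S}
    (hA : PH A) : FiniteDimensional ℂ (LinearMap.ker (A : S →ₗ[ℂ] S)) := by
  apply FiniteDimensional.of_isCompact_closedBall ℂ (r := 1) one_pos (c := 0)
  apply IsSeqCompact.isCompact
  intro u hu
  obtain ⟨x, φ, hφ, hw⟩ := weak_subseq (fun n => (u n : S)) 1 (fun n => by simpa using hu n)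
  have hx : A x = 0 := by
    have h1 := (hw.map A).2 (A x)
    have h2 : ∀ n, A (u n : S) = 0 := fun n => (u n).2
    simp only [map_sub, h2, zero_sub, inner_neg_right] at h1
    have := tendsto_nhds_unique h1 tendsto_const_nhds
    simpa using this.symm
  refine ⟨⟨x, hx⟩, ?_, φ, hφ, ?_⟩
  · have := weak_lim_norm_le hw (C := 1) (fun n => by simpa using hu (φ n))
    simpa using this
  · have h := hA _ hw (by
      have h2 : ∀ n, A (u n : S) = 0 := fun n => (u n).2
      simp [h2, hx])
    rw [tendsto_subtype_rng]
    have := h.add_const x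
    simpa using this

lemma PH.bdd_below [CompleteSpace S] [TopologicalSpace.SeparableSpace S] {A : S →L[ℂ] S}
    (hA : PH A) : ∃ c : ℝ, 0 < c ∧ ∀ u ∈ (LinearMap.ker (A : S →ₗ[ℂ] S))ᗮ, c * ‖u‖ ≤ ‖A u‖ := by
  by_contra! hcon
  have h1 : ∀ n : ℕ, ∃ u ∈ (LinearMap.ker (A : S →ₗ[ℂ] S))ᗮ, ‖u‖ = 1 ∧ ‖A u‖ ≤ 1 / ((n : ℝ) + 1) := by
    intro n
    obtain ⟨u, hu, hlt⟩ := hcon (1 / ((n : ℝ) + 1)) (by positivity)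
    have hu0 : 0 < ‖u‖ := by
      by_contra h0
      have : u = 0 := by simpa using h0
      simp [this] at hlt
    refine ⟨((‖u‖⁻¹ : ℝ) : ℂ) • u, Submodule.smul_mem _ _ hu, ?_, ?_⟩
    · rw [norm_smul]; simp [hu0.ne']
    · rw [map_smul, norm_smul]
      simp only [norm_real, norm_inv, norm_norm]
      rw [inv_mul_le_iff₀ hu0]
      linarith
  choose u hu hn hAu using h1
  obtain ⟨x, φ, hφ, hw⟩ := weak_subseq u 1 (fun n => (hn n).le)
  have hA0 : Tendsto (fun n => A (u n)) atTop (𝓝 0) :=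
    squeeze_zero_norm hAu tendsto_one_div_add_atTop_nhds_zero_nat
  have hA1 := hA0.comp hφ.tendsto_atTop
  have hx : A x = 0 := by
    have h1 := (hw.map A).2 (A x)
    simp only [map_sub, inner_sub_right] at h1
    have h2 : Tendsto (fun n => inner ℂ (A x) (A (u (φ n)))) atTop (𝓝 (inner ℂ (A x) 0)) :=
      (tendsto_const_nhds).inner hA1
    have h3 := h2.sub h1
    simp only [inner_zero_right, sub_zero, sub_sub_cancel] at h3
    have := tendsto_nhds_unique h3 tendsto_const_nhds
    simpa using this.symm
  have hx0 : x = 0 := by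
    have h1 := hw.2 x
    have h2 : ∀ n, inner ℂ x (u n) = 0 := fun n => (hu n) x hx
    simp only [inner_sub_right, h2, zero_sub] at h1
    have := tendsto_nhds_unique h1 tendsto_const_nhds
    simpa using this.symm
  subst hx0
  simp only [sub_zero] at hw
  have := (hA _ hw hA1).norm
  simp only [hn, norm_zero] at this
  exact one_ne_zero (tendsto_nhds_unique tendsto_const_nhds this)

lemma PH.range_eq [CompleteSpace S] [TopologicalSpace.SeparableSpace S] {A : S →L[ℂ] S}
    (hA : PH A) : LinearMap.range (A : S →ₗ[ℂ] S) =
      (LinearMap.ker (ContinuousLinearMap.adjoint A : S →ₗ[ℂ] S))ᗮ := by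
  obtain ⟨c, hc, hb⟩ := hA.bdd_below
  have := hA.finite_ker
  have hcl : IsClosed (LinearMap.range (A : S →ₗ[ℂ] S) : Set S) := by
    set N := LinearMap.ker (A : S →ₗ[ℂ] S) with hN
    have hcN : IsClosed (Nᗮ : Set S) := Submodule.isClosed_orthogonal N
    have hcomp : CompleteSpace Nᗮ := hcN.completeSpace_coe
    have h1 : AntilipschitzWith (Real.toNNReal c⁻¹) (A ∘L Nᗮ.subtypeL) := by
      apply ContinuousLinearMap.antilipschitz_of_bound
      intro x
      have := hb x x.2
      rw [Real.coe_toNNReal _ (by positivity)]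
      rw [le_inv_mul_iff₀ hc]
      exact this
    have h2 := h1.isClosed_range (A ∘L Nᗮ.subtypeL).uniformContinuous
    convert h2 using 1
    ext y
    constructor
    · rintro ⟨x, rfl⟩
      refine ⟨⟨x - N.starProjection x, N.sub_starProjection_mem_orthogonal x⟩, ?_⟩
      have : A (N.starProjection x) = 0 := (N.starProjection_apply_mem x)
      simp [this]
    · rintro ⟨x, rfl⟩
      exact ⟨x, rfl⟩
  have h3 := ContinuousLinearMap.orthogonal_range A
  have h4 : ((LinearMap.range (A : S →ₗ[ℂ] S))ᗮ)ᗮ = LinearMap.range (A : S →ₗ[ℂ] S) := by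
    have : CompleteSpace (LinearMap.range (A : S →ₗ[ℂ] S)) := hcl.completeSpace_coe
    exact Submodule.orthogonal_orthogonal _
  rw [← h4]
  exact congrArg _ h3

lemma CC_starProjection [CompleteSpace S] (N : Submodule ℂ S) [FiniteDimensional ℂ N] :
    CC N.starProjection := by
  intro u hu
  have h1 : ∀ x, N.starProjection x =
      ∑ i, (inner ℂ ((stdOrthonormalBasis ℂ N i : N) : S) x) • ((stdOrthonormalBasis ℂ N i : N) : S) := by
    intro x
    have := (stdOrthonormalBasis ℂ N).sum_repr (N.orthogonalProjectionOnto x)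
    rw [Submodule.starProjection_apply, ← this]
    simp [OrthonormalBasis.repr_apply_apply]
  simp_rw [h1]
  have : Tendsto (fun n => ∑ i, (inner ℂ ((stdOrthonormalBasis ℂ N i : N) : S) (u n)) •
      ((stdOrthonormalBasis ℂ N i : N) : S)) atTop
      (𝓝 (∑ i, (0 : ℂ) • ((stdOrthonormalBasis ℂ N i : N) : S))) :=
    tendsto_finsetSum _ fun i _ => (hu.2 _).smul_const _
  simpa using this

lemma exists_equiv_of_selfAdjoint [CompleteSpace S] [TopologicalSpace.SeparableSpace S]
    {A : S →L[ℂ] S} (hs : ∀ x y, inner ℂ (A x) y = inner ℂ x (A y)) (hA : PH A) :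
    ∃ E : S ≃L[ℂ] S, CC (A - (E : S →L[ℂ] S)) := by
  have := hA.finite_ker
  obtain ⟨c, hc, hb⟩ := hA.bdd_below
  set N := LinearMap.ker (A : S →ₗ[ℂ] S) with hN
  set E := A + N.starProjection with hE
  have hsE : ∀ x y, inner ℂ (E x) y = inner ℂ x (E y) := by
    intro x y
    simp only [hE, ContinuousLinearMap.add_apply, inner_add_left, inner_add_right, hs]
    rw [Submodule.inner_starProjection_left_eq_right]
  have hnorm : ∀ u, min c 1 * ‖u‖ ≤ ‖E u‖ := by
    intro u
    set p := N.starProjection u with hp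
    set m := u - p with hm
    have hmN : m ∈ Nᗮ := N.sub_starProjection_mem_orthogonal u
    have hpN : p ∈ N := N.starProjection_apply_mem u
    have hAp : A p = 0 := hpN
    have hEu : E u = A m + p := by
      have : A m = A u := by rw [hm, map_sub, hAp, sub_zero]
      rw [this]; simp [hE, hp]
    have horth : inner ℂ (A m) p = 0 := by rw [hs, hAp, inner_zero_right]
    have horth2 : inner ℂ m p = 0 := by
      exact Submodule.inner_left_of_mem_orthogonal hpN hmN
    have e1 : ‖E u‖ ^ 2 = ‖A m‖ ^ 2 + ‖p‖ ^ 2 := by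
      rw [hEu, sq, norm_add_sq_eq_norm_sq_add_norm_sq_of_inner_eq_zero _ _ horth]; ring
    have e2 : ‖u‖ ^ 2 = ‖m‖ ^ 2 + ‖p‖ ^ 2 := by
      have : u = m + p := by simp [hm]
      rw [this, sq, norm_add_sq_eq_norm_sq_add_norm_sq_of_inner_eq_zero _ _ horth2]; ring
    have h3 := hb m hmN
    have hmin : 0 < min c 1 := lt_min hc one_pos
    have h4 : min c 1 * ‖m‖ ≤ ‖A m‖ := le_trans (by gcongr; exact min_le_left _ _) h3
    have h5 : min c 1 * ‖p‖ ≤ ‖p‖ := by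
      nlinarith [min_le_right c 1, norm_nonneg p]
    apply le_of_sq_le_sq _ (norm_nonneg _)
    have h6 := pow_le_pow_left₀ (by positivity) h4 2
    have h7 := pow_le_pow_left₀ (by positivity) h5 2
    rw [mul_pow, e2, e1, mul_add, ← mul_pow, ← mul_pow]
    exact add_le_add h6 h7
  have hmin : 0 < min c 1 := lt_min hc one_pos
  have hanti : AntilipschitzWith (Real.toNNReal (min c 1)⁻¹) E := by
    apply ContinuousLinearMap.antilipschitz_of_bound
    intro x
    rw [Real.coe_toNNReal _ (by positivity), le_inv_mul_iff₀ hmin]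
    exact hnorm x
  have hker : LinearMap.ker (E : S →ₗ[ℂ] S) = ⊥ := LinearMap.ker_eq_bot.2 hanti.injective
  have hcl : IsClosed (LinearMap.range (E : S →ₗ[ℂ] S) : Set S) := by
    have := hanti.isClosed_range E.uniformContinuous
    convert this using 1
    ext; simp
  have hrange : LinearMap.range (E : S →ₗ[ℂ] S) = ⊤ := by
    have : CompleteSpace (LinearMap.range (E : S →ₗ[ℂ] S)) := hcl.completeSpace_coe
    rw [← Submodule.orthogonal_eq_bot_iff, Submodule.eq_bot_iff]
    intro x hx
    have h0 : E x = 0 := by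
      rw [← inner_self_eq_zero (𝕜 := ℂ), ← hsE]
      exact hx _ ⟨E x, rfl⟩
    exact hanti.injective (by simpa using h0)
  refine ⟨ContinuousLinearEquiv.ofBijective E hker hrange, ?_⟩
  have : A - (ContinuousLinearEquiv.ofBijective E hker hrange : S →L[ℂ] S) = - N.starProjection := by
    ext x
    simp [hE]
  rw [this]
  exact (CC_starProjection N).neg

lemma surj_of_inj [CompleteSpace S] [TopologicalSpace.SeparableSpace S]
    (E : S ≃L[ℂ] S) {A : S →L[ℂ] S} (hK : CC (A - (E : S →L[ℂ] S)))
    (hinj : Function.Injective A) : Function.Surjective A := by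
  set T : S →L[ℂ] S := (E.symm : S →L[ℂ] S) ∘L (A - (E : S →L[ℂ] S)) with hT
  have hTc : IsCompactOperator T := (hK.comp_left _).isCompact
  have hTx : ∀ x, T x = E.symm (A x) - x := by intro x; simp [hT]
  rcases hTc.hasEigenvalue_or_mem_resolventSet (μ := (-1 : ℂ)) (by norm_num) with h | h
  · exfalso
    obtain ⟨x, hx, hx0⟩ := h.exists_hasEigenvector
    have h1 : T x = (-1 : ℂ) • x := by simpa using Module.End.mem_eigenspace_iff.1 hx
    rw [hTx] at h1
    have h2 : E.symm (A x) = 0 := by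
      have : E.symm (A x) = -1 • x + x := by rw [← sub_eq_iff_eq_add, h1]; simp
      simpa using this
    have h3 : A x = 0 := by simpa using h2
    exact hx0 (hinj (by simpa using h3))
  · rw [spectrum.mem_resolventSet_iff, ContinuousLinearMap.isUnit_iff_bijective] at h
    intro y
    obtain ⟨x, hx⟩ := h.2 (-(E.symm y))
    refine ⟨x, ?_⟩
    have : -x - T x = -(E.symm y) := by
      rw [← hx]; simp [Algebra.algebraMap_eq_smul_one]
    rw [hTx] at this
    have h2 : E.symm (A x) = E.symm y := by
      have h3 : -(E.symm (A x)) = -(E.symm y) := by rw [← this]; abel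
      exact neg_injective h3
    exact E.symm.injective h2

lemma surj_of_inj_ker [CompleteSpace S] [TopologicalSpace.SeparableSpace S]
    (E : S ≃L[ℂ] S) {A : S →L[ℂ] S} (hK : CC (A - (E : S →L[ℂ] S)))
    (N M : Submodule ℂ S) (hN : N = LinearMap.ker (A : S →ₗ[ℂ] S))
    (hM : M = LinearMap.ker (ContinuousLinearMap.adjoint A : S →ₗ[ℂ] S))
    [FiniteDimensional ℂ N] (F : N →ₗ[ℂ] M)
    (hF : Function.Injective F) : Function.Surjective F := by
  set G : S →L[ℂ] S := (M.subtypeL ∘L F.toContinuousLinearMap) ∘L N.orthogonalProjectionOnto with hG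
  have hGx : ∀ x, G x = (F (N.orthogonalProjectionOnto x) : S) := fun x => rfl
  have hGG : G = G ∘L N.starProjection := by
    ext x
    change _ = G (N.starProjection x)
    rw [hGx, hGx]
    have := Submodule.orthogonalProjectionOnto_mem_subspace_eq_self (K := N)
      (N.orthogonalProjectionOnto x)
    rw [Submodule.starProjection_apply, this]
  have hGc : CC G := by
    rw [hGG]; exact (CC_starProjection N).comp_left _
  have horth : ∀ x (m : M), inner ℂ (m : S) (A x) = 0 := by
    intro x m
    rw [← ContinuousLinearMap.adjoint_inner_left]
    have : ContinuousLinearMap.adjoint A (m : S) = 0 := by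
      have := hM.le m.2
      exact this
    rw [this, inner_zero_left]
  have key : ∀ x (m : M), A x = (m : S) → A x = 0 := by
    intro x m h
    rw [← inner_self_eq_zero (𝕜 := ℂ)]
    nth_rewrite 1 [h]
    exact horth x m
  have hinj : Function.Injective (A + G) := by
    rw [injective_iff_map_eq_zero]
    intro x hx
    have h1 : A x = ((-F (N.orthogonalProjectionOnto x) : M) : S) := by
      have : A x + G x = 0 := hx
      rw [eq_neg_of_add_eq_zero_left this, hGx]; rfl
    have h2 := key _ _ h1
    have h3 : F (N.orthogonalProjectionOnto x) = 0 := by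
      rw [h2] at h1
      have : -F (N.orthogonalProjectionOnto x) = 0 := Subtype.ext h1.symm
      simpa using this
    have h4 : N.orthogonalProjectionOnto x = 0 := hF (by simpa using h3)
    have h5 : x ∈ N := by rw [hN]; exact h2
    have h6 := Submodule.orthogonalProjectionOnto_mem_subspace_eq_self (K := N) ⟨x, h5⟩
    have h7 : (⟨x, h5⟩ : N) = 0 := by rw [← h6]; exact h4
    simpa using congrArg Subtype.val h7
  have hsurj := surj_of_inj E (A := A + G) (by
    have : A + G - (E : S →L[ℂ] S) = (A - (E : S →L[ℂ] S)) + G := by abel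
    rw [this]; exact hK.add hGc) hinj
  intro m
  obtain ⟨x, hx⟩ := hsurj m
  have h0 : A x + G x = m := hx
  have h1 : A x = ((m - F (N.orthogonalProjectionOnto x) : M) : S) := by
    rw [← eq_sub_iff_add_eq] at h0; rw [h0, hGx]; rfl
  have h2 := key _ _ h1
  refine ⟨N.orthogonalProjectionOnto x, ?_⟩
  rw [h2] at h1
  have : m - F (N.orthogonalProjectionOnto x) = 0 := Subtype.ext h1.symm
  exact (sub_eq_zero.1 this).symm

lemma finrank_eq_aux [CompleteSpace S] [TopologicalSpace.SeparableSpace S]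
    (E : S ≃L[ℂ] S) {A : S →L[ℂ] S} (hK : CC (A - (E : S →L[ℂ] S)))
    [FiniteDimensional ℂ (LinearMap.ker (A : S →ₗ[ℂ] S))]
    [FiniteDimensional ℂ (LinearMap.ker (ContinuousLinearMap.adjoint A : S →ₗ[ℂ] S))]
    (h : Module.finrank ℂ (LinearMap.ker (A : S →ₗ[ℂ] S)) ≤
      Module.finrank ℂ (LinearMap.ker (ContinuousLinearMap.adjoint A : S →ₗ[ℂ] S))) :
    Module.finrank ℂ (LinearMap.ker (A : S →ₗ[ℂ] S)) =
      Module.finrank ℂ (LinearMap.ker (ContinuousLinearMap.adjoint A : S →ₗ[ℂ] S)) := by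
  obtain ⟨F, hF⟩ := finrank_le_iff_exists_linearMap.1 h
  exact (LinearEquiv.ofBijective F ⟨hF, surj_of_inj_ker E hK _ _ rfl rfl F hF⟩).finrank_eq

/-- Fredholm of index zero. -/
lemma fredholm_abstract [CompleteSpace S] [TopologicalSpace.SeparableSpace S]
    {A0 K : S →L[ℂ] S} (hs : ∀ x y, inner ℂ (A0 x) y = inner ℂ x (A0 y)) (hA : PH A0)
    (hK : CC K) :
    ∃ n : ℕ, ∃ e e' : Fin n → S,
      (∀ i, (A0 + K) (e i) = 0) ∧ LinearIndependent ℂ e ∧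
      (∀ w, (A0 + K) w = 0 → ∃ c : Fin n → ℂ, w = ∑ i, c i • e i) ∧
      (∀ i v, inner ℂ (e' i) ((A0 + K) v) = 0) ∧ LinearIndependent ℂ e' ∧
      (∀ z, (∀ v, inner ℂ z ((A0 + K) v) = 0) → ∃ c : Fin n → ℂ, z = ∑ i, c i • e' i) ∧
      (∀ y, (∃ w, (A0 + K) w = y) ↔ ∀ i, inner ℂ (e' i) y = 0) := by
  set A := A0 + K with hAdef
  have hadj : ContinuousLinearMap.adjoint A = A0 + ContinuousLinearMap.adjoint K := by
    have : ContinuousLinearMap.adjoint A0 = A0 := by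
      refine ((ContinuousLinearMap.eq_adjoint_iff _ _).2 hs).symm
    rw [hAdef, map_add, this]
  have hPA : PH A := hA.add_CC hK
  have hPA' : PH (ContinuousLinearMap.adjoint A) := by
    rw [hadj]; exact hA.add_CC hK.adjoint
  have := hPA.finite_ker
  have := hPA'.finite_ker
  obtain ⟨E, hE⟩ := exists_equiv_of_selfAdjoint hs hA
  have hE1 : CC (A - (E : S →L[ℂ] S)) := by
    have : A - (E : S →L[ℂ] S) = (A0 - (E : S →L[ℂ] S)) + K := by rw [hAdef]; abel
    rw [this]; exact hE.add hK
  have hE2 : CC (ContinuousLinearMap.adjoint A - (E : S →L[ℂ] S)) := by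
    have : ContinuousLinearMap.adjoint A - (E : S →L[ℂ] S)
      = (A0 - (E : S →L[ℂ] S)) + ContinuousLinearMap.adjoint K := by rw [hadj]; abel
    rw [this]; exact hE.add hK.adjoint
  have hdim : Module.finrank ℂ (LinearMap.ker (A : S →ₗ[ℂ] S)) =
      Module.finrank ℂ (LinearMap.ker (ContinuousLinearMap.adjoint A : S →ₗ[ℂ] S)) := by
    rcases le_total (Module.finrank ℂ (LinearMap.ker (A : S →ₗ[ℂ] S)))
      (Module.finrank ℂ (LinearMap.ker (ContinuousLinearMap.adjoint A : S →ₗ[ℂ] S))) with h | h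
    · exact finrank_eq_aux E hE1 h
    · have hAA : ContinuousLinearMap.adjoint (ContinuousLinearMap.adjoint A) = A :=
        ContinuousLinearMap.adjoint_adjoint A
      have : FiniteDimensional ℂ (LinearMap.ker
        (ContinuousLinearMap.adjoint (ContinuousLinearMap.adjoint A) : S →ₗ[ℂ] S)) := by
        rw [hAA]; infer_instance
      have h2 := finrank_eq_aux E hE2 (by rw [hAA]; exact h)
      rw [hAA] at h2
      exact h2.symm
  have hrange := hPA.range_eq
  set N := LinearMap.ker (A : S →ₗ[ℂ] S) with hN
  set M := LinearMap.ker (ContinuousLinearMap.adjoint A : S →ₗ[ℂ] S) with hM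
  let bN := Module.finBasis ℂ N
  let bM := Module.finBasisOfFinrankEq ℂ M hdim.symm
  have hMiff : ∀ z, z ∈ M ↔ ∀ v, inner ℂ z (A v) = 0 := by
    intro z
    constructor
    · intro hz v
      have : ContinuousLinearMap.adjoint A z = 0 := hz
      rw [← ContinuousLinearMap.adjoint_inner_left, this, inner_zero_left]
    · intro h
      have : ContinuousLinearMap.adjoint A z = 0 := by
        rw [← inner_self_eq_zero (𝕜 := ℂ), ContinuousLinearMap.adjoint_inner_left]
        exact h _
      exact this
  refine ⟨Module.finrank ℂ N, fun i => (bN i : S), fun i => (bM i : S), fun i => (bN i).2,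
    bN.linearIndependent.map' N.subtype (by simp), ?_, ?_,
    bM.linearIndependent.map' M.subtype (by simp), ?_, ?_⟩
  · intro w hw
    refine ⟨fun i => bN.repr ⟨w, hw⟩ i, ?_⟩
    have := congrArg (Subtype.val) (bN.sum_repr ⟨w, hw⟩).symm
    rw [Submodule.coe_sum] at this
    exact this
  · intro i v
    exact (hMiff _).1 (bM i).2 v
  · intro z hz
    have hz' := (hMiff z).2 hz
    refine ⟨fun i => bM.repr ⟨z, hz'⟩ i, ?_⟩
    have := congrArg (Subtype.val) (bM.sum_repr ⟨z, hz'⟩).symm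
    rw [Submodule.coe_sum] at this
    exact this
  · intro y
    have h1 : (∃ w, A w = y) ↔ y ∈ Mᗮ := by
      rw [← hrange]; rfl
    rw [h1]
    constructor
    · intro hy i
      exact hy _ (bM i).2
    · intro h m hm
      have := congrArg (Subtype.val) (bM.sum_repr ⟨m, hm⟩).symm
      have h2 : m = ∑ i, bM.repr ⟨m, hm⟩ i • (bM i : S) := by
        rw [Submodule.coe_sum] at this
        exact this
      rw [h2, sum_inner]
      refine Finset.sum_eq_zero fun i _ => ?_
      rw [inner_smul_left, h i, mul_zero]

end abstractPart

/-- the weight `(1+|ξ|²)^{-1/2}` -/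
def wt (ξ : R2) : ℝ := ((1 : ℝ) + ‖ξ‖ ^ 2) ^ (-(1/2) : ℝ)

/-- measurable functions in the weighted `L²` space -/
def MemW (F : R2 → ℂ) : Prop :=
  AEStronglyMeasurable F (volume : Measure R2) ∧ Integrable (fun ξ : R2 => wt ξ * ‖F ξ‖ ^ 2) volume

/-- squared weighted norm -/
def nW (F : R2 → ℂ) : ℝ := ∫ ξ : R2, wt ξ * ‖F ξ‖ ^ 2

/-- rapidly decaying continuous kernels -/
def IsKer (k : R2 → ℂ) : Prop :=
  Continuous k ∧ ∀ N : ℕ, ∃ C : ℝ, ∀ ζ, (1 + ‖ζ‖ ^ 2) ^ N * ‖k ζ‖ ≤ C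

/-- convolution -/
def convK (k F : R2 → ℂ) (ξ : R2) : ℂ := ∫ η : R2, k (ξ - η) * F η

lemma wt_eq (ξ : R2) : wt ξ = (Real.sqrt (1 + ‖ξ‖ ^ 2))⁻¹ := by
  rw [wt, Real.sqrt_eq_rpow, ← Real.rpow_neg (by positivity)]

lemma wt_pos (ξ : R2) : 0 < wt ξ := by unfold wt; positivity

lemma wt_le_one (ξ : R2) : wt ξ ≤ 1 := by
  rw [wt_eq]
  apply inv_le_one_of_one_le₀
  rw [Real.one_le_sqrt]
  nlinarith [sq_nonneg ‖ξ‖]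

lemma wt_cont : Continuous wt := by
  have : wt = fun ξ => (Real.sqrt (1 + ‖ξ‖ ^ 2))⁻¹ := funext wt_eq
  rw [this]
  refine Continuous.inv₀ (by fun_prop) (fun ξ => ?_)
  have : 0 < Real.sqrt (1 + ‖ξ‖ ^ 2) := Real.sqrt_pos.2 (by positivity)
  exact this.ne'

lemma wt_inv_le (ξ : R2) : (wt ξ)⁻¹ ≤ 1 + ‖ξ‖ ^ 2 := by
  rw [wt_eq, inv_inv]
  have h : 1 ≤ 1 + ‖ξ‖ ^ 2 := by nlinarith [sq_nonneg ‖ξ‖]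
  rw [Real.sqrt_le_left (by positivity)]
  nlinarith

lemma peetre (ξ η : R2) : 1 + ‖η‖ ^ 2 ≤ 2 * ((1 + ‖ξ‖ ^ 2) * (1 + ‖ξ - η‖ ^ 2)) := by
  have h : ‖η‖ ≤ ‖ξ‖ + ‖ξ - η‖ := by
    have : η = ξ - (ξ - η) := by abel
    calc ‖η‖ = ‖ξ - (ξ - η)‖ := by rw [← this]
      _ ≤ _ := norm_sub_le _ _
  have h2 : ‖η‖ ^ 2 ≤ (‖ξ‖ + ‖ξ - η‖) ^ 2 := by gcongr
  nlinarith [sq_nonneg (‖ξ‖ - ‖ξ - η‖), sq_nonneg (‖ξ‖ * ‖ξ - η‖)]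

lemma wt_peetre (ξ η : R2) : wt ξ ≤ 2 * (1 + ‖ξ - η‖ ^ 2) * wt η := by
  have h := peetre ξ η
  have hx : 0 < Real.sqrt (1 + ‖ξ‖ ^ 2) := Real.sqrt_pos.2 (by positivity)
  have hy : 0 < Real.sqrt (1 + ‖η‖ ^ 2) := Real.sqrt_pos.2 (by positivity)
  rw [wt_eq, wt_eq, ← div_eq_mul_inv, inv_eq_one_div, div_le_div_iff₀ hx hy, one_mul]
  rw [Real.sqrt_le_left (by positivity), mul_pow, Real.sq_sqrt (by positivity)]
  have h1 : 1 ≤ 1 + ‖ξ - η‖ ^ 2 := by nlinarith [sq_nonneg ‖ξ - η‖]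
  have h2 : 0 ≤ 1 + ‖ξ‖ ^ 2 := by positivity
  have h3 : 2 * (1 + ‖ξ - η‖ ^ 2) ≤ (2 * (1 + ‖ξ - η‖ ^ 2)) ^ 2 := by nlinarith
  nlinarith

lemma integrable_jb : Integrable (fun η : R2 => ((1 + ‖η‖ ^ 2) ^ 2)⁻¹) volume := by
  have h := integrable_rpow_neg_one_add_norm_sq (E := R2) (μ := volume) (r := 4)
    (by simp; norm_num)
  refine h.congr (Eventually.of_forall fun η => ?_)
  simp only
  rw [show (-4 / 2 : ℝ) = -((2 : ℕ) : ℝ) by norm_num, Real.rpow_neg (by positivity),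
    Real.rpow_natCast]

lemma nW_nonneg (F : R2 → ℂ) : 0 ≤ nW F :=
  integral_nonneg fun ξ => mul_nonneg (wt_pos ξ).le (sq_nonneg _)

lemma MemW.int {F : R2 → ℂ} (hF : MemW F) :
    Integrable (fun η : R2 => ((1 + ‖η‖ ^ 2) ^ 2)⁻¹ * ‖F η‖) volume := by
  refine Integrable.mono' (hF.2.add integrable_jb) ?_ (Eventually.of_forall fun η => ?_)
  · exact (integrable_jb.aestronglyMeasurable).mul hF.1.norm
  · simp only [Pi.add_apply]
    rw [Real.norm_of_nonneg (by positivity)]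
    have hw := wt_pos η
    have hi := wt_inv_le η
    set J := 1 + ‖η‖ ^ 2 with hJ
    have hJ1 : 1 ≤ J := by rw [hJ]; nlinarith [sq_nonneg ‖η‖]
    have hJw : 1 ≤ J * wt η := by
      rw [inv_le_iff_one_le_mul₀ hw] at hi; exact hi
    have h1 : (J ^ 2)⁻¹ * J ≤ 1 := by
      rw [inv_mul_le_iff₀ (by positivity)]; nlinarith
    -- AM-GM
    have h2 : (J ^ 2)⁻¹ * ‖F η‖ ≤ (J ^ 2)⁻¹ * (J * wt η * ‖F η‖ ^ 2 + 1) := by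
      have : ‖F η‖ ≤ J * wt η * ‖F η‖ ^ 2 + 1 := by
        nlinarith [sq_nonneg (‖F η‖ - 1), sq_nonneg (‖F η‖)]
      gcongr
    have h3 : (J ^ 2)⁻¹ * (J * wt η * ‖F η‖ ^ 2 + 1) =
      ((J ^ 2)⁻¹ * J) * (wt η * ‖F η‖ ^ 2) + (J ^ 2)⁻¹ := by ring
    have h4 : ((J ^ 2)⁻¹ * J) * (wt η * ‖F η‖ ^ 2) ≤ wt η * ‖F η‖ ^ 2 :=
      mul_le_of_le_one_left (by positivity) h1
    linarith

lemma ker_bound {k : R2 → ℂ} (hk : IsKer k) : ∃ C : ℝ, 0 ≤ C ∧ ∀ ξ η : R2,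
    ‖k (ξ - η)‖ ≤ C * (1 + ‖ξ‖ ^ 2) ^ 2 * ((1 + ‖η‖ ^ 2) ^ 2)⁻¹ := by
  obtain ⟨C, hC⟩ := hk.2 2
  have hC0 : 0 ≤ C := le_trans (by positivity) (hC 0)
  refine ⟨4 * C, by positivity, fun ξ η => ?_⟩
  rw [← div_eq_mul_inv, le_div_iff₀ (by positivity)]
  have h := pow_le_pow_left₀ (by positivity) (peetre ξ η) 2
  calc ‖k (ξ - η)‖ * (1 + ‖η‖ ^ 2) ^ 2 ≤ ‖k (ξ - η)‖ * (2 * ((1 + ‖ξ‖ ^ 2) * (1 + ‖ξ - η‖ ^ 2))) ^ 2 := by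
        gcongr
    _ = 4 * ((1 + ‖ξ - η‖ ^ 2) ^ 2 * ‖k (ξ - η)‖) * (1 + ‖ξ‖ ^ 2) ^ 2 := by ring
    _ ≤ 4 * C * (1 + ‖ξ‖ ^ 2) ^ 2 := by gcongr; exact hC _

lemma IsKer.integrable {k : R2 → ℂ} (hk : IsKer k) : Integrable k volume := by
  obtain ⟨C, hC0, hC⟩ := ker_bound hk
  refine Integrable.mono' (integrable_jb.const_mul C) hk.1.aestronglyMeasurable
    (Eventually.of_forall fun η => ?_)
  have := hC 0 (-η)
  simpa using this

lemma conv_aesm {k F : R2 → ℂ} (hk : IsKer k) (hF : MemW F) (ξ : R2) :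
    AEStronglyMeasurable (fun η => k (ξ - η) * F η) volume :=
  (hk.1.comp (continuous_const.sub continuous_id)).aestronglyMeasurable.mul hF.1

lemma conv_integrable {k F : R2 → ℂ} (hk : IsKer k) (hF : MemW F) (ξ : R2) :
    Integrable (fun η => k (ξ - η) * F η) volume := by
  obtain ⟨C, hC0, hC⟩ := ker_bound hk
  refine Integrable.mono' (hF.int.const_mul (C * (1 + ‖ξ‖ ^ 2) ^ 2)) (conv_aesm hk hF ξ)
    (Eventually.of_forall fun η => ?_)
  rw [norm_mul, ← mul_assoc]
  gcongr
  exact hC ξ η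

lemma conv_cont {k F : R2 → ℂ} (hk : IsKer k) (hF : MemW F) : Continuous (convK k F) := by
  obtain ⟨C, hC0, hC⟩ := ker_bound hk
  rw [continuous_iff_continuousAt]
  intro ξ0
  unfold convK
  refine continuousAt_of_dominated
    (bound := fun η => (C * (1 + (‖ξ0‖ + 1) ^ 2) ^ 2) * (((1 + ‖η‖ ^ 2) ^ 2)⁻¹ * ‖F η‖))
    (Eventually.of_forall fun ξ => conv_aesm hk hF ξ) ?_ (hF.int.const_mul _)
    (Eventually.of_forall fun η => ?_)
  · filter_upwards [Metric.ball_mem_nhds ξ0 one_pos] with ξ hξ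
    refine Eventually.of_forall fun η => ?_
    have h1 : ‖ξ‖ ≤ ‖ξ0‖ + 1 := by
      have : ‖ξ - ξ0‖ < 1 := by simpa [dist_eq_norm] using hξ
      calc ‖ξ‖ = ‖ξ0 + (ξ - ξ0)‖ := by congr 1; abel
        _ ≤ ‖ξ0‖ + ‖ξ - ξ0‖ := norm_add_le _ _
        _ ≤ _ := by linarith
    rw [norm_mul, ← mul_assoc]
    gcongr
    refine (hC ξ η).trans ?_
    gcongr
  · have := hk.1
    exact (by fun_prop : Continuous fun ξ => k (ξ - η) * F η).continuousAt

lemma cs_aux {p f : R2 → ℝ} (hp0 : ∀ x, 0 ≤ p x) (hp : Integrable p volume)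
    (hpf : Integrable (fun x => p x * f x) volume)
    (hpff : Integrable (fun x => p x * f x ^ 2) volume) :
    (∫ x, p x * f x) ^ 2 ≤ (∫ x, p x) * ∫ x, p x * f x ^ 2 := by
  set a := ∫ x, p x
  set b := ∫ x, p x * f x
  set c := ∫ x, p x * f x ^ 2
  have key : ∀ t : ℝ, 0 ≤ a * (t * t) + (-2 * b) * t + c := by
    intro t
    have h0 : 0 ≤ ∫ x, p x * (t - f x) ^ 2 :=
      integral_nonneg fun x => mul_nonneg (hp0 x) (sq_nonneg _)
    have h1 : ∫ x, p x * (t - f x) ^ 2 = (t * t) * a - 2 * t * b + c := by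
      have : ∀ x, p x * (t - f x) ^ 2 = (t * t) * p x - 2 * t * (p x * f x) + p x * f x ^ 2 := by
        intro x; ring
      simp_rw [this]
      have hs : Integrable (fun x => (t * t) * p x - 2 * t * (p x * f x)) volume :=
        (hp.const_mul _).sub (hpf.const_mul _)
      rw [integral_add hs hpff,
        integral_sub (hp.const_mul _) (hpf.const_mul _), integral_const_mul, integral_const_mul]
    rw [h1] at h0
    linarith
  have := discrim_le_zero key
  rw [discrim] at this
  nlinarith

lemma conv_wt {k : R2 → ℂ} (hk : IsKer k) : ∃ C : ℝ, 0 ≤ C ∧ ∀ F, MemW F →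
    (∀ ξ, wt ξ * ‖convK k F ξ‖ ^ 2 ≤ C * nW F) ∧ MemW (convK k F) ∧ nW (convK k F) ≤ C * nW F := by
  set κ : R2 → ℝ := fun ζ => 2 * (1 + ‖ζ‖ ^ 2) * ‖k ζ‖ with hκ
  have hk1 := hk.1
  have hκc : Continuous κ := by rw [hκ]; fun_prop
  have hκ0 : ∀ ζ, 0 ≤ κ ζ := fun ζ => by simp only [hκ]; positivity
  obtain ⟨C1, hC1⟩ := hk.2 1
  obtain ⟨C3, hC3⟩ := hk.2 3
  have hC10 : 0 ≤ C1 := le_trans (by positivity) (hC1 0)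
  have hκb : ∀ ζ, κ ζ ≤ 2 * C1 := fun ζ => by
    have := hC1 ζ
    simp only [hκ, pow_one] at this ⊢
    nlinarith
  have hκi : Integrable κ volume := by
    refine Integrable.mono' (integrable_jb.const_mul (2 * C3)) hκc.aestronglyMeasurable
      (Eventually.of_forall fun ζ => ?_)
    rw [Real.norm_of_nonneg (hκ0 ζ), ← div_eq_mul_inv, le_div_iff₀ (by positivity)]
    have := hC3 ζ
    simp only [hκ]
    nlinarith
  set a := ∫ ζ, ‖k ζ‖ with ha
  have ha0 : 0 ≤ a := integral_nonneg fun _ => norm_nonneg _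
  have hκI : 0 ≤ ∫ ζ, κ ζ := integral_nonneg hκ0
  refine ⟨a * (2 * C1) + a * ∫ ζ, κ ζ, by positivity, fun F hF => ?_⟩
  set g : R2 → ℝ := fun η => wt η * ‖F η‖ ^ 2 with hg
  have hgi : Integrable g volume := hF.2
  have hg0 : ∀ η, 0 ≤ g η := fun η => mul_nonneg (wt_pos η).le (sq_nonneg _)
  have hgκ : ∀ ξ, Integrable (fun η => g η * κ (ξ - η)) volume := fun ξ => by
    refine Integrable.mono' (hgi.mul_const (2 * C1)) ?_ (Eventually.of_forall fun η => ?_)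
    · exact hgi.aestronglyMeasurable.mul
        (hκc.comp (continuous_const.sub continuous_id)).aestronglyMeasurable
    · rw [Real.norm_of_nonneg (mul_nonneg (hg0 _) (hκ0 _))]
      exact mul_le_mul_of_nonneg_left (hκb _) (hg0 _)
  have hpt : ∀ ξ, wt ξ * ‖convK k F ξ‖ ^ 2 ≤ a * ∫ η, g η * κ (ξ - η) := by
    intro ξ
    have hi := conv_integrable hk hF ξ
    have h1 : ‖convK k F ξ‖ ≤ ∫ η, ‖k (ξ - η)‖ * ‖F η‖ := by
      refine (norm_integral_le_integral_norm _).trans (le_of_eq ?_)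
      simp_rw [norm_mul]
    have hkξ : Integrable (fun η => ‖k (ξ - η)‖) volume :=
      (hk.integrable.comp_sub_left ξ).norm
    have hka : ∫ η, ‖k (ξ - η)‖ = a :=
      integral_sub_left_eq_self (fun ζ => ‖k ζ‖) volume ξ
    have hle : ∀ η, ‖k (ξ - η)‖ * ‖F η‖ ^ 2 * wt ξ ≤ g η * κ (ξ - η) := by
      intro η
      have := wt_peetre ξ η
      simp only [hg, hκ]
      calc ‖k (ξ - η)‖ * ‖F η‖ ^ 2 * wt ξ ≤ ‖k (ξ - η)‖ * ‖F η‖ ^ 2 * (2 * (1 + ‖ξ - η‖ ^ 2) * wt η) := by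
            gcongr
        _ = _ := by ring
    have hpff : Integrable (fun η => ‖k (ξ - η)‖ * ‖F η‖ ^ 2) volume := by
      have h2 : Integrable (fun η => ‖k (ξ - η)‖ * ‖F η‖ ^ 2 * wt ξ) volume := by
        refine Integrable.mono' (hgκ ξ) ?_ (Eventually.of_forall fun η => ?_)
        · exact (hkξ.aestronglyMeasurable.mul (hF.1.norm.pow 2)).mul_const _
        · have := wt_pos ξ
          rw [Real.norm_of_nonneg (by positivity)]
          exact hle η
      have := h2.mul_const (wt ξ)⁻¹
      refine this.congr (Eventually.of_forall fun η => ?_)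
      simp only
      rw [mul_assoc, mul_inv_cancel₀ (wt_pos ξ).ne', mul_one]
    have h3 := cs_aux (p := fun η => ‖k (ξ - η)‖) (f := fun η => ‖F η‖) (fun _ => norm_nonneg _) hkξ
      (by simpa only [norm_mul] using hi.norm) hpff
    rw [hka] at h3
    have h4 : ‖convK k F ξ‖ ^ 2 ≤ (∫ η, ‖k (ξ - η)‖ * ‖F η‖) ^ 2 := by gcongr
    have h5 : (∫ η, ‖k (ξ - η)‖ * ‖F η‖ ^ 2) * wt ξ ≤ ∫ η, g η * κ (ξ - η) := by
      rw [← integral_mul_const]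
      exact integral_mono (hpff.mul_const _) (hgκ ξ) hle
    have hw := wt_pos ξ
    calc wt ξ * ‖convK k F ξ‖ ^ 2 ≤ wt ξ * (a * ∫ η, ‖k (ξ - η)‖ * ‖F η‖ ^ 2) := by
          gcongr; exact h4.trans h3
      _ = a * ((∫ η, ‖k (ξ - η)‖ * ‖F η‖ ^ 2) * wt ξ) := by ring
      _ ≤ _ := by gcongr
  have hnW := nW_nonneg F
  have hconv : (convolution g κ (ContinuousLinearMap.mul ℝ ℝ) volume) =
      fun ξ => ∫ η, g η * κ (ξ - η) := by
    ext ξ; simp [convolution]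
  have hci : Integrable (fun ξ => ∫ η, g η * κ (ξ - η)) volume := by
    rw [← hconv]
    exact hgi.integrable_convolution (ContinuousLinearMap.mul ℝ ℝ) hκi
  have hcint : ∫ ξ, ∫ η, g η * κ (ξ - η) = nW F * ∫ ζ, κ ζ := by
    rw [← hconv, integral_convolution (ContinuousLinearMap.mul ℝ ℝ) hgi hκi]
    rfl
  have hInt : Integrable (fun ξ => wt ξ * ‖convK k F ξ‖ ^ 2) volume := by
    refine Integrable.mono' (hci.const_mul a) ?_ (Eventually.of_forall fun ξ => ?_)
    · exact (wt_cont.mul ((conv_cont hk hF).norm.pow 2)).aestronglyMeasurable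
    · have := wt_pos ξ
      rw [Real.norm_of_nonneg (by positivity)]; exact hpt ξ
  refine ⟨fun ξ => (hpt ξ).trans ?_, ⟨(conv_cont hk hF).aestronglyMeasurable, hInt⟩, ?_⟩
  · have : ∫ η, g η * κ (ξ - η) ≤ nW F * (2 * C1) := by
      have e : nW F * (2 * C1) = ∫ η, g η * (2 * C1) := by
        rw [integral_mul_const]; rfl
      rw [e]
      exact integral_mono (hgκ ξ) (hgi.mul_const _)
        (fun η => mul_le_mul_of_nonneg_left (hκb _) (hg0 _))
    have h2 : a * ∫ η, g η * κ (ξ - η) ≤ a * (nW F * (2 * C1)) := by gcongr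
    have h3 : 0 ≤ a * (∫ ζ, κ ζ) * nW F := by positivity
    nlinarith
  · have h1 : nW (convK k F) ≤ ∫ ξ, a * ∫ η, g η * κ (ξ - η) :=
      integral_mono hInt (hci.const_mul a) hpt
    rw [integral_const_mul, hcint] at h1
    have h3 : 0 ≤ a * (2 * C1) * nW F := by positivity
    nlinarith

section FourierFacts
open scoped FourierTransform SchwartzMap

/-- smooth compactly supported -/
def Tst (φ : R2 → ℂ) : Prop := ContDiff ℝ ∞ φ ∧ HasCompactSupport φ

lemma rdot_inner (x ξ : R2) : rdot x ξ = inner ℝ x ξ := by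
  simp [rdot, PiLp.inner_apply, Fin.sum_univ_two]; ring

lemma rdot_cont {α : Type*} [TopologicalSpace α] {f g : α → R2} (hf : Continuous f)
    (hg : Continuous g) : Continuous fun a => rdot (f a) (g a) := by
  simp_rw [rdot_inner]; exact hf.inner hg

lemma rdot_add_left (x y ξ : R2) : rdot (x + y) ξ = rdot x ξ + rdot y ξ := by
  simp [rdot]; ring

lemma rdot_add_right (x y ξ : R2) : rdot x (y + ξ) = rdot x y + rdot x ξ := by
  simp [rdot]; ring

lemma rdot_smul_left (c : ℝ) (x ξ : R2) : rdot (c • x) ξ = c * rdot x ξ := by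
  simp [rdot]; ring

lemma norm_expI (t : ℝ) : ‖Complex.exp (Complex.I * (t : ℂ))‖ = 1 := by
  rw [mul_comm]; exact Complex.norm_exp_ofReal_mul_I t

lemma testFT_eq (φ : R2 → ℂ) (ξ : R2) : testFT φ ξ = 𝓕 φ ((-(2 * π)⁻¹ : ℝ) • ξ) := by
  rw [Real.fourier_eq', testFT]
  congr 1; ext x
  rw [inner_smul_right, ← rdot_inner, smul_eq_mul]
  congr 2
  rw [mul_comm]
  have : π ≠ 0 := Real.pi_ne_zero
  have e : -2 * π * (-(2 * π)⁻¹ * rdot x ξ) = rdot x ξ := by field_simp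
  rw [e]

lemma isKer_schwartz (f : 𝓢(R2, ℂ)) : IsKer f := by
  refine ⟨f.continuous, fun N => ?_⟩
  refine ⟨_, fun ζ => le_trans ?_ (SchwartzMap.one_add_le_sup_seminorm_apply (𝕜 := ℂ) (m := (2 * N, 0)) (k := 2 * N) (n := 0)
    le_rfl le_rfl f ζ)⟩
  rw [norm_iteratedFDeriv_zero, pow_mul]
  gcongr
  nlinarith [norm_nonneg ζ]

lemma IsKer.comp_smul {k : R2 → ℂ} (hk : IsKer k) {c : ℝ} (hc : c ≠ 0) :
    IsKer (fun ζ => k (c • ζ)) := by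
  refine ⟨hk.1.comp (continuous_const_smul c), fun N => ?_⟩
  obtain ⟨C, hC⟩ := hk.2 N
  refine ⟨(1 + (c⁻¹) ^ 2) ^ N * C, fun ζ => ?_⟩
  have h1 : 1 + ‖ζ‖ ^ 2 ≤ (1 + (c⁻¹) ^ 2) * (1 + ‖c • ζ‖ ^ 2) := by
    rw [norm_smul, mul_pow, Real.norm_eq_abs, sq_abs]
    have : (c⁻¹) ^ 2 * c ^ 2 = 1 := by field_simp
    have h2 : (c⁻¹) ^ 2 * (c ^ 2 * ‖ζ‖ ^ 2) = ‖ζ‖ ^ 2 := by rw [← mul_assoc, this, one_mul]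
    nlinarith [sq_nonneg (c⁻¹), mul_nonneg (sq_nonneg c) (sq_nonneg ‖ζ‖)]
  calc (1 + ‖ζ‖ ^ 2) ^ N * ‖k (c • ζ)‖
      ≤ ((1 + (c⁻¹) ^ 2) * (1 + ‖c • ζ‖ ^ 2)) ^ N * ‖k (c • ζ)‖ := by gcongr
    _ = (1 + (c⁻¹) ^ 2) ^ N * ((1 + ‖c • ζ‖ ^ 2) ^ N * ‖k (c • ζ)‖) := by rw [mul_pow]; ring
    _ ≤ _ := by gcongr; exact hC _

lemma IsKer.const_mul {k : R2 → ℂ} (hk : IsKer k) (c : ℂ) : IsKer (fun ζ => c * k ζ) := by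
  have := hk.1
  refine ⟨by fun_prop, fun N => ?_⟩
  obtain ⟨C, hC⟩ := hk.2 N
  refine ⟨‖c‖ * C, fun ζ => ?_⟩
  rw [norm_mul, mul_left_comm]
  gcongr
  exact hC _

lemma coord_le (ζ : R2) (l : Fin 2) : |ζ l| ≤ ‖ζ‖ := by
  have := PiLp.norm_apply_le ζ l
  simpa using this

lemma IsKer.coord_mul {k : R2 → ℂ} (hk : IsKer k) (l : Fin 2) :
    IsKer (fun ζ => (ζ l : ℂ) * k ζ) := by
  have := hk.1
  refine ⟨by fun_prop, fun N => ?_⟩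
  obtain ⟨C, hC⟩ := hk.2 (N + 1)
  refine ⟨C, fun ζ => le_trans ?_ (hC ζ)⟩
  rw [norm_mul, pow_succ _ N, mul_assoc]
  have h1 := coord_le ζ l
  gcongr
  rw [Complex.norm_real, Real.norm_eq_abs]
  nlinarith [norm_nonneg ζ, sq_nonneg (‖ζ‖ - 1)]

lemma Tst.isKer {φ : R2 → ℂ} (h : Tst φ) : IsKer (testFT φ) := by
  have h1 := (isKer_schwartz (𝓕 (h.2.toSchwartzMap h.1))).comp_smul (c := -(2 * π)⁻¹)
    (by have := Real.pi_pos; simp)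
  convert h1 using 2 with ξ
  rw [testFT_eq, SchwartzMap.fourier_coe]
  rfl

lemma Tst.integrable {φ : R2 → ℂ} (h : Tst φ) : Integrable φ volume :=
  h.1.continuous.integrable_of_hasCompactSupport h.2

/-- the convolution kernel of multiplication by `χ` -/
def kern (χ : R2 → ℂ) (ζ : R2) : ℂ := ((((2 * π) ^ 2)⁻¹ : ℝ) : ℂ) * testFT χ (-ζ)

lemma Tst.kern {χ : R2 → ℂ} (h : Tst χ) : IsKer (kern χ) := by
  have h1 := (h.isKer.comp_smul (c := -1) (by norm_num)).const_mul ((((2 * π) ^ 2)⁻¹ : ℝ) : ℂ)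
  convert h1 using 2 with ζ
  simp [_root_.kern]

lemma kern_inv {χ : R2 → ℂ} (h : Tst χ) (x : R2) :
    ∫ ζ : R2, kern χ ζ * Complex.exp (Complex.I * (rdot x ζ : ℂ)) = χ x := by
  have hF : Integrable (𝓕 χ) volume := (𝓕 (h.2.toSchwartzMap h.1)).integrable
  have h1 := congrFun (h.1.continuous.fourierInv_fourier_eq h.integrable hF) x
  rw [Real.fourierInv_eq'] at h1
  have h2 := Measure.integral_comp_smul (volume : Measure R2)
    (fun v => Complex.exp (((2 * π * inner ℝ v x : ℝ) : ℂ) * I) • 𝓕 χ v) ((2 * π)⁻¹)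
  rw [h1] at h2
  have hfr : Module.finrank ℝ R2 = 2 := by simp
  rw [hfr] at h2
  have hp := Real.pi_pos
  have h3 : |(((2 * π)⁻¹) ^ 2)⁻¹| = (2 * π) ^ 2 := by
    rw [abs_of_nonneg (by positivity), inv_pow, inv_inv]
  rw [h3] at h2
  have h4 : ∀ ζ : R2, kern χ ζ * Complex.exp (Complex.I * (rdot x ζ : ℂ)) =
      (((2 * π) ^ 2)⁻¹ : ℝ) • (Complex.exp (((2 * π * inner ℝ ((2 * π)⁻¹ • ζ) x : ℝ) : ℂ) * I) • 𝓕 χ ((2 * π)⁻¹ • ζ)) := by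
    intro ζ
    rw [inner_smul_left, real_inner_comm, ← rdot_inner, kern, testFT_eq]
    have e1 : (2 * π * ((starRingEnd ℝ) (2 * π)⁻¹ * rdot x ζ)) = rdot x ζ := by
      simp; field_simp
    rw [e1, smul_eq_mul, Complex.real_smul, mul_comm I, neg_smul, smul_neg, neg_neg]
    ring
  simp_rw [h4]
  rw [integral_smul, h2, smul_smul, inv_mul_cancel₀ (by positivity), one_smul]

lemma FT_inj {g : R2 → ℂ} (hc : Continuous g) (hi : Integrable g volume)
    (h : ∀ y, ∫ ξ : R2, g ξ * Complex.exp (-(Complex.I * (rdot y ξ : ℂ))) = 0) : g = 0 := by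
  have h0 : 𝓕 g = 0 := by
    ext w
    rw [Real.fourier_eq', Pi.zero_apply, ← h ((2 * π) • w)]
    congr 1; ext v
    rw [rdot_smul_left, smul_eq_mul, mul_comm]
    congr 2
    rw [rdot_inner, real_inner_comm]
    push_cast; ring
  have h1 := hc.fourierInv_fourier_eq hi (by rw [h0]; exact integrable_zero _ _ _)
  rw [← h1, h0]
  ext x
  rw [Real.fourierInv_eq']
  simp

lemma testFT_translate (φ : R2 → ℂ) (y ξ : R2) :
    testFT (fun x => φ (x + y)) ξ = Complex.exp (-(Complex.I * (rdot y ξ : ℂ))) * testFT φ ξ := by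
  unfold testFT
  rw [← integral_const_mul]
  rw [← integral_add_right_eq_self
    (fun x => Complex.exp (-(Complex.I * (rdot y ξ : ℂ))) * (Complex.exp (Complex.I * (rdot x ξ : ℂ)) * φ x)) y]
  congr 1; ext x
  rw [← mul_assoc, ← Complex.exp_add, rdot_add_left]
  congr 2
  push_cast; ring

lemma Tst.translate {φ : R2 → ℂ} (h : Tst φ) (y : R2) : Tst (fun x => φ (x + y)) := by
  refine ⟨h.1.comp (contDiff_id.add contDiff_const), ?_⟩
  exact h.2.comp_homeomorph (Homeomorph.addRight y)

lemma Tst.mul {φ ψ : R2 → ℂ} (h : Tst φ) (h' : Tst ψ) : Tst (fun x => φ x * ψ x) :=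
  ⟨h.1.mul h'.1, h.2.mul_right⟩

lemma Tst.deriv {φ : R2 → ℂ} (h : Tst φ) (v : R2) : Tst (fun x => fderiv ℝ φ x v) :=
  ⟨(h.1.fderiv_right (m := ∞) (by simp)).clm_apply contDiff_const, h.2.fderiv_apply ℝ v⟩

lemma testFT_deriv {φ : R2 → ℂ} (h : Tst φ) (v ξ : R2) :
    testFT (fun x => fderiv ℝ φ x v) ξ = -((Complex.I * (rdot v ξ : ℂ)) * testFT φ ξ) := by
  set f : R2 → ℂ := fun x => Complex.exp (Complex.I * (rdot x ξ : ℂ)) with hf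
  have hd : ∀ x, HasFDerivAt f ((f x * I) • (Complex.ofRealCLM.comp ((innerSL ℝ ξ)))) x := by
    intro x
    have h1 : HasFDerivAt (fun x : R2 => I * ((inner ℝ ξ x : ℝ) : ℂ))
        (I • (Complex.ofRealCLM.comp ((innerSL ℝ ξ)))) x :=
      ((Complex.ofRealCLM.hasFDerivAt.comp x ((innerSL ℝ ξ).hasFDerivAt)).const_mul I)
    have h2 := h1.cexp
    have e : f = fun x => Complex.exp (I * ((inner ℝ ξ x : ℝ) : ℂ)) := by
      ext x; simp only [hf, rdot_inner, real_inner_comm]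
    rw [e]
    rw [smul_smul] at h2
    exact h2
  have hfc : Continuous f := continuous_iff_continuousAt.2 fun x => (hd x).continuousAt
  have hfd : ∀ x, fderiv ℝ f x v = (f x * I) * (rdot v ξ : ℂ) := by
    intro x
    rw [(hd x).fderiv, rdot_inner, real_inner_comm]; simp
  have hfdc : Continuous (fun x => fderiv ℝ f x v) := by
    simp_rw [hfd]; fun_prop
  have hφ := h.1.continuous
  have hφ' := (h.deriv v).1.continuous
  have hmain := integral_mul_fderiv_eq_neg_fderiv_mul_of_integrable (μ := (volume : Measure R2)) (f := f) (g := φ) (v := v)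
    ((hfdc.mul hφ).integrable_of_hasCompactSupport h.2.mul_left)
    ((hfc.mul hφ').integrable_of_hasCompactSupport (h.deriv v).2.mul_left)
    ((hfc.mul hφ).integrable_of_hasCompactSupport h.2.mul_left)
    (fun x _ => (hd x).differentiableAt) (fun x _ => h.1.differentiable (by simp) x)
  have e1 : testFT (fun x => fderiv ℝ φ x v) ξ = ∫ x, f x * fderiv ℝ φ x v := rfl
  rw [e1, hmain]
  congr 1
  unfold testFT
  rw [← integral_const_mul]
  congr 1; ext x
  rw [hfd]; simp only [hf]; ring

lemma MemW.mul_ker {h k : R2 → ℂ} (hh : MemW h) (hk : IsKer k) :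
    Integrable (fun ξ => h ξ * k ξ) volume := by
  obtain ⟨C, hC0, hC⟩ := ker_bound hk
  refine Integrable.mono' (hh.int.const_mul C) (hh.1.mul hk.1.aestronglyMeasurable)
    (Eventually.of_forall fun ξ => ?_)
  have := hC 0 (-ξ)
  simp at this
  rw [norm_mul]
  calc ‖h ξ‖ * ‖k ξ‖ ≤ ‖h ξ‖ * (C * ((1 + ‖ξ‖ ^ 2) ^ 2)⁻¹) := by gcongr
    _ = _ := by ring

/-- pairing of convolution with a test function -/
lemma conv_pair {χ φ F : R2 → ℂ} (hχ : Tst χ) (hφ : Tst φ) (hF : MemW F) :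
    ∫ ξ, convK (kern χ) F ξ * testFT φ ξ = ∫ η, F η * testFT (fun x => χ x * φ x) η := by
  have hk := hχ.kern
  have hφk := hφ.isKer
  -- outer Fubini
  obtain ⟨C, hC0, hC⟩ := ker_bound hk
  obtain ⟨D, hD⟩ := hφk.2 4
  have hD0 : 0 ≤ D := le_trans (by positivity) (hD 0)
  have hIntg : Integrable (Function.uncurry fun ξ η : R2 => kern χ (ξ - η) * F η * testFT φ ξ)
      ((volume : Measure R2).prod volume) := by
    have hdom : Integrable (fun z : R2 × R2 => (C * D * ((1 + ‖z.1‖ ^ 2) ^ 2)⁻¹) *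
        (((1 + ‖z.2‖ ^ 2) ^ 2)⁻¹ * ‖F z.2‖)) ((volume : Measure R2).prod volume) :=
      (integrable_jb.const_mul (C * D)).mul_prod hF.int
    refine Integrable.mono' hdom ?_ (Eventually.of_forall fun z => ?_)
    · have h1 : Continuous fun z : R2 × R2 => kern χ (z.1 - z.2) :=
        hk.1.comp (continuous_fst.sub continuous_snd)
      have h2 : Continuous fun z : R2 × R2 => testFT φ z.1 := hφk.1.comp continuous_fst
      have h3 : AEStronglyMeasurable (fun z : R2 × R2 => F z.2) ((volume : Measure R2).prod volume) :=
        hF.1.comp_snd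
      exact (h1.aestronglyMeasurable.mul h3).mul h2.aestronglyMeasurable
    · rcases z with ⟨ξ, η⟩
      simp only [Function.uncurry]
      rw [norm_mul, norm_mul]
      have h1 := hC ξ η
      have h2 : ‖testFT φ ξ‖ * (1 + ‖ξ‖ ^ 2) ^ 2 ≤ D * ((1 + ‖ξ‖ ^ 2) ^ 2)⁻¹ := by
        rw [← div_eq_mul_inv, le_div_iff₀ (by positivity)]
        have := hD ξ
        nlinarith
      calc ‖kern χ (ξ - η)‖ * ‖F η‖ * ‖testFT φ ξ‖
          ≤ (C * (1 + ‖ξ‖ ^ 2) ^ 2 * ((1 + ‖η‖ ^ 2) ^ 2)⁻¹) * ‖F η‖ * ‖testFT φ ξ‖ := by gcongr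
        _ = C * (((1 + ‖η‖ ^ 2) ^ 2)⁻¹ * ‖F η‖) * (‖testFT φ ξ‖ * (1 + ‖ξ‖ ^ 2) ^ 2) := by ring
        _ ≤ C * (((1 + ‖η‖ ^ 2) ^ 2)⁻¹ * ‖F η‖) * (D * ((1 + ‖ξ‖ ^ 2) ^ 2)⁻¹) := by gcongr
        _ = _ := by ring
  have hin : ∀ η, ∫ ξ, kern χ (ξ - η) * testFT φ ξ = testFT (fun x => χ x * φ x) η := by
    intro η
    rw [← integral_add_right_eq_self (fun ξ => kern χ (ξ - η) * testFT φ ξ) η]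
    simp only [add_sub_cancel_right]
    have e1 : ∀ ζ, kern χ ζ * testFT φ (ζ + η) =
        ∫ x, kern χ ζ * (Complex.exp (Complex.I * (rdot x (ζ + η) : ℂ)) * φ x) := by
      intro ζ; rw [integral_const_mul]; rfl
    simp_rw [e1]
    rw [integral_integral_swap]
    · unfold testFT
      congr 1; ext x
      simp only
      rw [← kern_inv hχ x, ← integral_mul_const, ← integral_const_mul]
      congr 1; ext ζ
      rw [rdot_add_right, Complex.ofReal_add, mul_add, Complex.exp_add]
      ring
    · have hdom := hk.integrable.norm.mul_prod hφ.integrable.norm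
      refine Integrable.mono' hdom ?_ (Eventually.of_forall fun z => ?_)
      · have h1 : Continuous fun z : R2 × R2 => rdot z.2 (z.1 + η) :=
          rdot_cont continuous_snd (by fun_prop)
        have h2 := hk.1
        have h3 := hφ.1.continuous
        have : Continuous (Function.uncurry fun ζ x : R2 =>
          kern χ ζ * (Complex.exp (Complex.I * (rdot x (ζ + η) : ℂ)) * φ x)) := by
          unfold Function.uncurry; fun_prop
        exact this.aestronglyMeasurable
      · simp only [Function.uncurry]
        rw [norm_mul, norm_mul, norm_expI, one_mul]
  unfold convK
  simp_rw [← integral_mul_const]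
  rw [integral_integral_swap hIntg]
  congr 1; ext η
  rw [← hin η, ← integral_const_mul]
  congr 1; ext ξ; ring

lemma testFT_inj {h : R2 → ℂ} (hc : Continuous h) (hm : MemW h)
    (h0 : ∀ φ, Tst φ → ∫ ξ, h ξ * testFT φ ξ = 0) : h = 0 := by
  ext ξ0
  let b : ContDiffBump (0 : R2) := default
  set φ : R2 → ℂ := fun x => Complex.exp (-(Complex.I * (rdot x ξ0 : ℂ))) * ((b x : ℝ) : ℂ) with hφdef
  have hφ : Tst φ := by
    refine ⟨?_, ?_⟩
    · have h1 : ContDiff ℝ ∞ (fun x : R2 => ((rdot x ξ0 : ℝ) : ℂ)) := by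
        simp_rw [rdot_inner]
        exact Complex.ofRealCLM.contDiff.comp (contDiff_id.inner ℝ contDiff_const)
      have h2 : ContDiff ℝ ∞ (fun x : R2 => ((b x : ℝ) : ℂ)) :=
        Complex.ofRealCLM.contDiff.comp b.contDiff
      exact ((contDiff_const.mul h1).neg.cexp).mul h2
    · have : HasCompactSupport (fun x : R2 => ((b x : ℝ) : ℂ)) :=
        b.hasCompactSupport.comp_left (g := fun t : ℝ => (t : ℂ)) (by simp)
      exact this.mul_left
  have hpos : testFT φ ξ0 ≠ 0 := by
    have e : testFT φ ξ0 = ((∫ x, b x : ℝ) : ℂ) := by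
      unfold testFT
      rw [← integral_complex_ofReal]
      congr 1; ext x
      rw [hφdef]
      simp only
      rw [← mul_assoc, ← Complex.exp_add]
      simp
    rw [e]
    have := b.integral_pos (μ := (volume : Measure R2))
    exact_mod_cast this.ne'
  have hg : (fun ξ => h ξ * testFT φ ξ) = 0 := by
    refine FT_inj (hc.mul hφ.isKer.1) (hm.mul_ker hφ.isKer) (fun y => ?_)
    rw [← h0 _ (hφ.translate y)]
    congr 1; ext ξ
    rw [testFT_translate]; ring
  have := congrFun hg ξ0
  simpa [hpos] using this

end FourierFacts

section Geometry
open scoped Manifold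

lemma geo_local {Γ : Set R2} (hΓ : IsLipschitzDomain Γ) {x : R2} (hx : x ∈ closure Γ) :
    ∃ (δ : ℝ) (y0 : R2) (r0 : ℝ), 0 < δ ∧ 0 < r0 ∧ ∀ z ∈ closure Γ, z ∈ Metric.ball x δ →
      ∀ t ∈ Set.Icc (0 : ℝ) 1, ∀ y ∈ Metric.ball y0 r0, z + t • y ∈ closure Γ := by
  obtain ⟨ho, -, -, hb⟩ := hΓ
  -- it suffices to treat points of `Γ`
  have red : ∀ (δ : ℝ) (y : R2) (t : ℝ),
      (∀ z ∈ Γ, z ∈ Metric.ball x δ → z + t • y ∈ Γ) →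
      ∀ z ∈ closure Γ, z ∈ Metric.ball x δ → z + t • y ∈ closure Γ := by
    intro δ y t h z hz hzb
    have h1 : z ∈ closure (Metric.ball x δ ∩ Γ) :=
      Metric.isOpen_ball.inter_closure ⟨hzb, hz⟩
    exact map_mem_closure (f := fun z => z + t • y) (by fun_prop) h1 (fun w hw => h w hw.2 hw.1)
  by_cases hxΓ : x ∈ Γ
  · obtain ⟨ε, hε, hεb⟩ := Metric.isOpen_iff.1 ho x hxΓ
    refine ⟨ε / 2, 0, ε / 2, by positivity, by positivity, ?_⟩
    intro z hz hzb t ht y hy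
    refine red (ε / 2) y t (fun z hz hzb => hεb ?_) z hz hzb
    simp only [Metric.mem_ball, dist_eq_norm, sub_zero] at *
    have : ‖t • y‖ ≤ ‖y‖ := by
      rw [norm_smul, Real.norm_of_nonneg ht.1]
      exact mul_le_of_le_one_left (norm_nonneg _) ht.2
    calc ‖z + t • y - x‖ = ‖(z - x) + t • y‖ := by congr 1; abel
      _ ≤ ‖z - x‖ + ‖t • y‖ := norm_add_le _ _
      _ < ε := by linarith
  · have hfr : x ∈ frontier Γ := by
      rw [frontier, ho.interior_eq]; exact ⟨hx, hxΓ⟩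
    obtain ⟨e, L, f, U, hL, hU, hxU, hiff⟩ := hb x hfr
    obtain ⟨ε, hε, hεb⟩ := Metric.isOpen_iff.1 hU x hxU
    set δ := ε / 2 with hδ
    have hδ0 : 0 < δ := by positivity
    have hL0 : (0 : ℝ) ≤ L := L.2
    set r0 := δ / (4 * (1 + L)) with hr0
    have hr0p : 0 < r0 := by positivity
    have hr1 : (1 + (L : ℝ)) * r0 = δ / 4 := by rw [hr0]; field_simp
    have hr2 : r0 ≤ δ / 4 := by nlinarith
    set y0 : R2 := e.symm (!₂[0, δ / 2]) with hy0
    have hny0 : ‖y0‖ = δ / 2 := by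
      rw [hy0, LinearIsometryEquiv.norm_map, EuclideanSpace.norm_eq]
      rw [Fin.sum_univ_two]
      have e1 : ‖(!₂[(0 : ℝ), δ / 2] : R2) 0‖ ^ 2 + ‖(!₂[(0 : ℝ), δ / 2] : R2) 1‖ ^ 2 = (δ / 2) ^ 2 := by
        rw [Real.norm_eq_abs, Real.norm_eq_abs, sq_abs, sq_abs]; simp
      rw [e1, Real.sqrt_sq (by positivity)]
    refine ⟨δ, y0, r0, hδ0, hr0p, ?_⟩
    intro z hz hzb t ht y hy
    have hy' : ‖y - y0‖ < r0 := by simpa [dist_eq_norm] using hy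
    refine red δ y t (fun z hz hzb => ?_) z hz hzb
    have hey : e y = !₂[0, δ / 2] + e (y - y0) := by
      rw [map_sub, hy0, LinearIsometryEquiv.apply_symm_apply]; abel
    have hc : ∀ l, |e (y - y0) l| < r0 := fun l =>
      (coord_le _ l).trans_lt (by rw [LinearIsometryEquiv.norm_map]; exact hy')
    have h0 : |e y 0| ≤ r0 := by
      have := hc 0
      rw [hey]; simpa using this.le
    have h1 : δ / 2 - r0 ≤ e y 1 := by
      have := abs_lt.1 (hc 1)
      have e1 : e y 1 = δ / 2 + e (y - y0) 1 := by rw [hey]; simp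
      linarith
    have hyn : ‖y‖ < δ := by
      calc ‖y‖ = ‖y0 + (y - y0)‖ := by congr 1; abel
        _ ≤ ‖y0‖ + ‖y - y0‖ := norm_add_le _ _
        _ < δ := by linarith
    have hzU : z ∈ U := hεb (Metric.ball_subset_ball (by linarith) hzb)
    have hmU : z + t • y ∈ U := by
      apply hεb
      simp only [Metric.mem_ball, dist_eq_norm] at *
      have : ‖t • y‖ ≤ ‖y‖ := by
        rw [norm_smul, Real.norm_of_nonneg ht.1]
        exact mul_le_of_le_one_left (norm_nonneg _) ht.2
      calc ‖z + t • y - x‖ = ‖(z - x) + t • y‖ := by congr 1; abel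
        _ ≤ ‖z - x‖ + ‖t • y‖ := norm_add_le _ _
        _ < ε := by linarith
    rw [hiff _ hmU]
    have hz1 := (hiff _ hzU).1 hz
    have e0 : e (z + t • y) 0 = e z 0 + t * e y 0 := by simp
    have e1 : e (z + t • y) 1 = e z 1 + t * e y 1 := by simp
    rw [e0, e1]
    have hf := hL.dist_le_mul (e z 0 + t * e y 0) (e z 0)
    rw [Real.dist_eq, Real.dist_eq, add_sub_cancel_left, abs_mul, abs_of_nonneg ht.1] at hf
    have hf' := (abs_le.1 hf).2
    have h3 : (L : ℝ) * |e y 0| ≤ e y 1 := by nlinarith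
    have h4 : t * (L * |e y 0|) ≤ t * e y 1 := mul_le_mul_of_nonneg_left h3 ht.1
    nlinarith

lemma geo {Γ : Set R2} (hΓ : IsLipschitzDomain Γ) :
    ∃ (ι : Type) (_ : Fintype ι) (χ : ι → R2 → ℂ) (y0 : ι → R2) (r0 : ι → ℝ),
      (∀ j, Tst (χ j)) ∧ (∀ j, 0 < r0 j) ∧
      (∃ U, IsOpen U ∧ closure Γ ⊆ U ∧ ∀ x ∈ U, ∑ j, χ j x = 1) ∧
      (∀ j, ∀ z ∈ closure Γ, z ∈ tsupport (χ j) → ∀ t ∈ Set.Icc (0 : ℝ) 1,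
        ∀ y ∈ Metric.ball (y0 j) (r0 j), z + t • y ∈ closure Γ) := by
  classical
  have hK : IsCompact (closure Γ) := hΓ.2.1.isCompact_closure
  choose! δ y0 r0 hδ hr0 hg using fun x (hx : x ∈ closure Γ) => geo_local hΓ hx
  obtain ⟨s, hsK, hcov⟩ := hK.elim_nhds_subcover (fun x => Metric.ball x (δ x))
    (fun x hx => Metric.ball_mem_nhds x (hδ x hx))
  have hopen : IsOpen (⋃ x ∈ s, Metric.ball x (δ x)) :=
    isOpen_biUnion fun _ _ => Metric.isOpen_ball
  obtain ⟨ε, hε, hεs⟩ := hK.exists_cthickening_subset_open hopen hcov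
  obtain ⟨f, hf⟩ := SmoothPartitionOfUnity.exists_isSubordinate (ι := s) 𝓘(ℝ, R2)
    (s := Metric.cthickening ε (closure Γ)) Metric.isClosed_cthickening
    (fun x => Metric.ball (x : R2) (δ x)) (fun _ => Metric.isOpen_ball)
    (fun x hx => by
      have := hεs hx
      simp only [Set.mem_iUnion] at this ⊢
      obtain ⟨i, hi, h⟩ := this
      exact ⟨⟨i, hi⟩, h⟩)
  have hsub : ∀ j : s, tsupport (fun x => ((f j x : ℝ) : ℂ)) ⊆ Metric.ball (j : R2) (δ j) := by
    intro j
    refine subset_trans ?_ (hf j)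
    refine closure_mono ?_
    intro x hx
    simpa using hx
  refine ⟨s, inferInstance, fun j x => ((f j x : ℝ) : ℂ), fun j => y0 j, fun j => r0 j, ?_, ?_, ?_, ?_⟩
  · intro j
    refine ⟨Complex.ofRealCLM.contDiff.comp (f j).contMDiff.contDiff, ?_⟩
    exact (isCompact_closedBall (j : R2) (δ j)).of_isClosed_subset isClosed_closure
      ((hsub j).trans Metric.ball_subset_closedBall)
  · exact fun j => hr0 j (hsK j j.2)
  · refine ⟨Metric.thickening ε (closure Γ), Metric.isOpen_thickening,
      Metric.self_subset_thickening hε _, fun x hx => ?_⟩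
    have := f.sum_eq_one (Metric.thickening_subset_cthickening _ _ hx)
    rw [finsum_eq_sum_of_fintype] at this
    have h2 : ((∑ i, f i x : ℝ) : ℂ) = 1 := by rw [this]; simp
    push_cast at h2
    exact h2
  · intro j z hz hzs
    exact hg j (hsK j j.2) z hz (hsub j hzs)

end Geometry

/-- bounded continuous multipliers vanishing at infinity -/
def Mult (m : R2 → ℂ) : Prop :=
  Continuous m ∧ (∃ C, 0 ≤ C ∧ ∀ ξ, ‖m ξ‖ ≤ C) ∧ ∀ ε > 0, ∃ R, 0 < R ∧ ∀ ξ : R2, R ≤ ‖ξ‖ → ‖m ξ‖ ≤ ε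

/-- `∫₀¹ ψ̂(tξ) dt` -/
def mlt (ψ : R2 → ℂ) (ξ : R2) : ℂ := ∫ t in (0 : ℝ)..1, testFT ψ (-(t • ξ))

lemma IsKer.bdd {k : R2 → ℂ} (hk : IsKer k) : ∃ C, 0 ≤ C ∧ ∀ ξ, (1 + ‖ξ‖ ^ 2) * ‖k ξ‖ ≤ C := by
  obtain ⟨C, hC⟩ := hk.2 1
  exact ⟨C, le_trans (by positivity) (hC 0), fun ξ => by simpa using hC ξ⟩

lemma IsKer.bdd' {k : R2 → ℂ} (hk : IsKer k) : ∃ C, 0 ≤ C ∧ ∀ ξ, ‖k ξ‖ ≤ C := by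
  obtain ⟨C, hC⟩ := hk.2 0
  exact ⟨C, le_trans (by positivity) (hC 0), fun ξ => by simpa using hC ξ⟩

lemma IsKer.tendsto {k : R2 → ℂ} (hk : IsKer k) : Tendsto k (comap norm atTop) (𝓝 0) := by
  obtain ⟨C, hC0, hC⟩ := hk.bdd
  have h1 : Tendsto (fun ξ : R2 => C / ‖ξ‖) (comap norm atTop) (𝓝 0) :=
    (tendsto_const_nhds.div_atTop tendsto_id).comp tendsto_comap
  refine squeeze_zero_norm' ?_ h1
  filter_upwards [tendsto_comap (eventually_gt_atTop (0 : ℝ))] with ξ hξ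
  rw [le_div_iff₀ hξ]
  refine le_trans ?_ (hC ξ)
  rw [mul_comm]
  gcongr
  nlinarith [sq_nonneg (‖ξ‖ - 1)]

lemma mult_of_tendsto {m : R2 → ℂ} (hc : Continuous m) {C : ℝ} (hC0 : 0 ≤ C) (hC : ∀ ξ, ‖m ξ‖ ≤ C)
    (ht : Tendsto m (comap norm atTop) (𝓝 0)) : Mult m := by
  refine ⟨hc, ⟨C, hC0, hC⟩, fun ε hε => ?_⟩
  have := (Metric.tendsto_nhds.1 ht ε hε)
  rw [eventually_comap] at this
  obtain ⟨R, hR⟩ := eventually_atTop.1 this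
  refine ⟨max R 1, by positivity, fun ξ hξ => ?_⟩
  have := hR ‖ξ‖ ((le_max_left _ _).trans hξ) ξ rfl
  simpa using this.le

lemma IsKer.mult {k : R2 → ℂ} (hk : IsKer k) : Mult k := by
  obtain ⟨C, hC0, hC⟩ := hk.bdd'
  exact mult_of_tendsto hk.1 hC0 hC hk.tendsto

lemma mlt_mult {ψ : R2 → ℂ} (hψ : Tst ψ) : Mult (mlt ψ) := by
  obtain ⟨C, hC0, hC⟩ := hψ.isKer.bdd'
  have hc := hψ.isKer.1
  refine mult_of_tendsto (C := C) ?_ hC0 (fun ξ => ?_) ?_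
  · unfold mlt
    apply intervalIntegral.continuous_parametric_intervalIntegral_of_continuous'
    unfold Function.uncurry
    fun_prop
  · have := intervalIntegral.norm_integral_le_of_norm_le_const (a := (0 : ℝ)) (b := 1)
      (f := fun t : ℝ => testFT ψ (-(t • ξ))) (C := C) (fun t _ => hC _)
    simpa [mlt] using this
  · have h0 : (∫ t in (0 : ℝ)..1, (0 : ℂ)) = 0 := by simp
    unfold mlt
    rw [← h0]
    refine intervalIntegral.tendsto_integral_filter_of_dominated_convergence (fun _ => C) ?_ ?_ ?_ ?_
    · refine Eventually.of_forall fun ξ => ?_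
      have : Continuous fun t : ℝ => testFT ψ (-(t • ξ)) := by fun_prop
      exact this.aestronglyMeasurable
    · exact Eventually.of_forall fun ξ => Eventually.of_forall fun t _ => hC _
    · exact intervalIntegrable_const
    · refine Eventually.of_forall fun t ht => ?_
      rw [Set.uIoc_of_le zero_le_one] at ht
      refine hψ.isKer.tendsto.comp ?_
      rw [tendsto_comap_iff]
      have : (norm ∘ fun ξ : R2 => -(t • ξ)) = fun ξ => t * ‖ξ‖ := by
        ext ξ; simp [norm_smul, abs_of_pos ht.1]
      rw [this]
      exact Tendsto.const_mul_atTop ht.1 tendsto_comap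

lemma Tst.coord_mul {ψ : R2 → ℂ} (hψ : Tst ψ) (l : Fin 2) : Tst (fun y => (y l : ℂ) * ψ y) := by
  refine ⟨ContDiff.mul ?_ hψ.1, hψ.2.mul_left⟩
  have h1 : ContDiff ℝ ∞ (fun y : R2 => y l) := by fun_prop
  exact Complex.ofRealCLM.contDiff.comp h1

lemma rdot_neg_right (x ξ : R2) : rdot x (-ξ) = - rdot x ξ := by simp [rdot]; ring

lemma rdot_smul_right (c : ℝ) (x ξ : R2) : rdot x (c • ξ) = c * rdot x ξ := by
  simp [rdot]; ring

lemma mlt_div {ψ : R2 → ℂ} (hψ : Tst ψ) (ξ : R2) :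
    I * ((ξ 0 : ℂ) * mlt (fun y => (y 0 : ℂ) * ψ y) ξ + (ξ 1 : ℂ) * mlt (fun y => (y 1 : ℂ) * ψ y) ξ) =
      testFT ψ 0 - testFT ψ (-ξ) := by
  set f' : ℝ → ℂ := fun t => -(I * ((ξ 0 : ℂ) * testFT (fun y => (y 0 : ℂ) * ψ y) (-(t • ξ)) +
    (ξ 1 : ℂ) * testFT (fun y => (y 1 : ℂ) * ψ y) (-(t • ξ)))) with hf'
  have hk0 := (hψ.coord_mul 0).isKer.1
  have hk1 := (hψ.coord_mul 1).isKer.1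
  have hψc := hψ.1.continuous
  have hrc : Continuous fun y => rdot y ξ := rdot_cont continuous_id continuous_const
  have hder : ∀ t : ℝ, HasDerivAt (fun t : ℝ => testFT ψ (-(t • ξ))) (f' t) t := by
    intro t
    have h := hasDerivAt_integral_of_dominated_loc_of_deriv_le (μ := (volume : Measure R2))
      (F := fun (t : ℝ) (y : R2) => Complex.exp (I * (rdot y (-(t • ξ)) : ℂ)) * ψ y)
      (F' := fun (t : ℝ) (y : R2) => -(I * (rdot y ξ : ℂ)) * (Complex.exp (I * (rdot y (-(t • ξ)) : ℂ)) * ψ y))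
      (x₀ := t) (s := Set.univ) (bound := fun y => |rdot y ξ| * ‖ψ y‖) univ_mem
      (Eventually.of_forall fun t => ?_) ?_ ?_ (Eventually.of_forall fun y t _ => ?_) ?_
      (Eventually.of_forall fun y t _ => ?_)
    · have h2 := h.2
      have e : f' t = ∫ y, -(I * (rdot y ξ : ℂ)) * (Complex.exp (I * (rdot y (-(t • ξ)) : ℂ)) * ψ y) := by
        simp only [hf']
        unfold testFT
        rw [← integral_const_mul, ← integral_const_mul, ← integral_add, ← integral_const_mul, ← integral_neg]
        · congr 1; ext y
          simp only [rdot]; push_cast; ring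
        · refine Integrable.const_mul ?_ _
          refine (Continuous.integrable_of_hasCompactSupport ?_ (hψ.coord_mul 0).2.mul_left)
          have := (rdot_cont (continuous_id (X := R2)) (continuous_const (y := -(t • ξ))))
          simp only [id] at this
          fun_prop
        · refine Integrable.const_mul ?_ _
          refine (Continuous.integrable_of_hasCompactSupport ?_ (hψ.coord_mul 1).2.mul_left)
          have := (rdot_cont (continuous_id (X := R2)) (continuous_const (y := -(t • ξ))))
          simp only [id] at this
          fun_prop
      rw [e]
      exact h2
    · have := (rdot_cont (continuous_id (X := R2)) (continuous_const (y := -(t • ξ))))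
      simp only [id] at this
      exact (by fun_prop : Continuous _).aestronglyMeasurable
    · refine (Continuous.integrable_of_hasCompactSupport ?_ hψ.2.mul_left)
      have := (rdot_cont (continuous_id (X := R2)) (continuous_const (y := -(t • ξ))))
      simp only [id] at this
      fun_prop
    · have := (rdot_cont (continuous_id (X := R2)) (continuous_const (y := -(t • ξ))))
      simp only [id] at this
      exact (by fun_prop : Continuous _).aestronglyMeasurable
    · rw [norm_mul, norm_neg, norm_mul, norm_mul, norm_expI]; simp
    · refine (Continuous.integrable_of_hasCompactSupport (by fun_prop) hψ.2.norm.mul_left)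
    · have e1 : ∀ t : ℝ, (rdot y (-(t • ξ)) : ℂ) = -((t : ℂ) * (rdot y ξ : ℂ)) := by
        intro t; rw [rdot_neg_right, rdot_smul_right]; push_cast; ring
      simp_rw [e1]
      have h1 : HasDerivAt (fun t : ℝ => (t : ℂ)) 1 t := Complex.ofRealCLM.hasDerivAt
      have h2 := ((((h1.mul_const (rdot y ξ : ℂ)).neg.const_mul I).cexp).mul_const (ψ y))
      refine h2.congr_deriv ?_
      simp only [Pi.neg_apply]
      ring
  have hf'c : Continuous f' := by
    simp only [hf']; fun_prop
  have hFTC := intervalIntegral.integral_eq_sub_of_hasDerivAt (a := 0) (b := 1)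
    (fun t _ => hder t) (hf'c.intervalIntegrable _ _)
  simp only [zero_smul, one_smul, neg_zero] at hFTC
  have e2 : ∫ t in (0 : ℝ)..1, f' t = -(I * ((ξ 0 : ℂ) * mlt (fun y => (y 0 : ℂ) * ψ y) ξ +
      (ξ 1 : ℂ) * mlt (fun y => (y 1 : ℂ) * ψ y) ξ)) := by
    simp only [hf', mlt]
    rw [intervalIntegral.integral_neg, intervalIntegral.integral_const_mul,
      intervalIntegral.integral_add, intervalIntegral.integral_const_mul,
      intervalIntegral.integral_const_mul]
    · exact (by fun_prop : Continuous _).intervalIntegrable _ _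
    · exact (by fun_prop : Continuous _).intervalIntegrable _ _
  rw [e2] at hFTC
  linear_combination -hFTC

lemma mlt_zero {ψ h : R2 → ℂ} (hψ : Tst ψ) (hh : Integrable h volume)
    (h0 : ∀ t ∈ Set.Icc (0 : ℝ) 1, ∀ y, ψ y ≠ 0 →
      ∫ ξ, h ξ * Complex.exp (-(I * (rdot (t • y) ξ : ℂ))) = 0) :
    ∫ ξ, mlt ψ ξ * h ξ = 0 := by
  obtain ⟨C, hC0, hC⟩ := hψ.isKer.bdd'
  have hc := hψ.isKer.1
  have hψc := hψ.1.continuous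
  have inner0 : ∀ t ∈ Set.Icc (0 : ℝ) 1, ∫ ξ, testFT ψ (-(t • ξ)) * h ξ = 0 := by
    intro t ht
    unfold testFT
    simp_rw [← integral_mul_const]
    rw [integral_integral_swap]
    · rw [← integral_zero R2 ℂ (μ := volume)]
      congr 1; ext y
      by_cases hy : ψ y = 0
      · simp [hy]
      · have := h0 t ht y hy
        have e : ∀ ξ, Complex.exp (I * (rdot y (-(t • ξ)) : ℂ)) * ψ y * h ξ =
          ψ y * (h ξ * Complex.exp (-(I * (rdot (t • y) ξ : ℂ)))) := by
          intro ξ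
          rw [rdot_neg_right, rdot_smul_right, rdot_smul_left]
          rw [Complex.ofReal_neg, mul_neg]; ring
        simp_rw [e]
        rw [integral_const_mul, this, mul_zero]
    · have hdom := hh.norm.mul_prod hψ.integrable.norm
      refine Integrable.mono' hdom ?_ (Eventually.of_forall fun z => ?_)
      · have h1 : Continuous fun z : R2 × R2 => rdot z.2 (-(t • z.1)) :=
          rdot_cont continuous_snd (by fun_prop)
        have h2 : Continuous fun z : R2 × R2 => Complex.exp (I * (rdot z.2 (-(t • z.1)) : ℂ)) * ψ z.2 := by
          fun_prop
        exact h2.aestronglyMeasurable.mul hh.1.comp_fst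
      · simp only [Function.uncurry]
        rw [norm_mul, norm_mul, norm_expI, one_mul, mul_comm]
  unfold mlt
  simp_rw [intervalIntegral.integral_of_le zero_le_one, ← integral_mul_const]
  rw [integral_integral_swap]
  · rw [setIntegral_congr_fun measurableSet_Ioc (g := fun _ => 0)
      (fun t ht => inner0 t ⟨ht.1.le, ht.2⟩)]
    simp
  · have hdom := hh.norm.mul_prod
      (integrable_const C (μ := (volume : Measure ℝ).restrict (Set.Ioc 0 1)))
    refine Integrable.mono' hdom ?_ (Eventually.of_forall fun z => ?_)
    · have h2 : Continuous fun z : R2 × ℝ => testFT ψ (-(z.2 • z.1)) := by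
        fun_prop
      exact h2.aestronglyMeasurable.mul hh.1.comp_fst
    · simp only [Function.uncurry]
      rw [norm_mul, mul_comm]
      gcongr
      exact hC _

/-! ### algebra of the weighted space -/

lemma MemW.add {F G : R2 → ℂ} (hF : MemW F) (hG : MemW G) : MemW (F + G) := by
  refine ⟨hF.1.add hG.1, ?_⟩
  refine Integrable.mono' ((hF.2.const_mul 2).add (hG.2.const_mul 2)) ?_ (Eventually.of_forall fun ξ => ?_)
  · exact wt_cont.aestronglyMeasurable.mul ((hF.1.add hG.1).norm.pow 2)
  · have hw := wt_pos ξ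
    rw [Real.norm_of_nonneg (by positivity)]
    simp only [Pi.add_apply]
    have h1 : ‖F ξ + G ξ‖ ^ 2 ≤ 2 * ‖F ξ‖ ^ 2 + 2 * ‖G ξ‖ ^ 2 := by
      have := norm_add_le (F ξ) (G ξ)
      have h2 : ‖F ξ + G ξ‖ ^ 2 ≤ (‖F ξ‖ + ‖G ξ‖) ^ 2 := by gcongr
      nlinarith [sq_nonneg (‖F ξ‖ - ‖G ξ‖)]
    nlinarith

lemma nW_add_le {F G : R2 → ℂ} (hF : MemW F) (hG : MemW G) : nW (F + G) ≤ 2 * nW F + 2 * nW G := by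
  unfold nW
  rw [← integral_const_mul, ← integral_const_mul, ← integral_add (hF.2.const_mul 2) (hG.2.const_mul 2)]
  refine integral_mono (hF.add hG).2 ((hF.2.const_mul 2).add (hG.2.const_mul 2)) (fun ξ => ?_)
  have hw := wt_pos ξ
  simp only [Pi.add_apply]
  have h1 : ‖F ξ + G ξ‖ ^ 2 ≤ 2 * ‖F ξ‖ ^ 2 + 2 * ‖G ξ‖ ^ 2 := by
    have := norm_add_le (F ξ) (G ξ)
    have h2 : ‖F ξ + G ξ‖ ^ 2 ≤ (‖F ξ‖ + ‖G ξ‖) ^ 2 := by gcongr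
    nlinarith [sq_nonneg (‖F ξ‖ - ‖G ξ‖)]
  nlinarith

lemma MemW.mul_bdd {F m : R2 → ℂ} (hF : MemW F) (hm : Continuous m) {C : ℝ} (hC : ∀ ξ, ‖m ξ‖ ≤ C) :
    MemW (m * F) ∧ nW (m * F) ≤ C ^ 2 * nW F := by
  have hle : ∀ ξ, wt ξ * ‖(m * F) ξ‖ ^ 2 ≤ C ^ 2 * (wt ξ * ‖F ξ‖ ^ 2) := by
    intro ξ
    have hw := wt_pos ξ
    rw [Pi.mul_apply, norm_mul, mul_pow]
    have : ‖m ξ‖ ^ 2 ≤ C ^ 2 := by gcongr; exact hC ξ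
    calc wt ξ * (‖m ξ‖ ^ 2 * ‖F ξ‖ ^ 2) ≤ wt ξ * (C ^ 2 * ‖F ξ‖ ^ 2) := by gcongr
      _ = _ := by ring
  have hI : MemW (m * F) := by
    refine ⟨hm.aestronglyMeasurable.mul hF.1, ?_⟩
    refine Integrable.mono' (hF.2.const_mul (C ^ 2)) ?_ (Eventually.of_forall fun ξ => ?_)
    · exact wt_cont.aestronglyMeasurable.mul ((hm.aestronglyMeasurable.mul hF.1).norm.pow 2)
    · have hw := wt_pos ξ
      rw [Real.norm_of_nonneg (by positivity)]
      exact hle ξ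
  refine ⟨hI, ?_⟩
  unfold nW
  rw [← integral_const_mul]
  exact integral_mono hI.2 (hF.2.const_mul _) hle

lemma MemW.smul {F : R2 → ℂ} (hF : MemW F) (c : ℂ) : MemW (c • F) := by
  have := (hF.mul_bdd (m := fun _ => c) continuous_const (C := ‖c‖) (fun _ => le_rfl)).1
  exact this

lemma MemW.zero : MemW 0 := ⟨aestronglyMeasurable_zero, by simp⟩

lemma MemW.sub {F G : R2 → ℂ} (hF : MemW F) (hG : MemW G) : MemW (F - G) := by
  have := hF.add (hG.smul (-1))
  convert this using 1
  simp [sub_eq_add_neg]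

/-- Fourier transforms of elements of `H̃^{-1/2}(Γ)` -/
def HT (Γ : Set R2) (F : R2 → ℂ) : Prop :=
  Continuous F ∧ Integrable (fun ξ : R2 => wt ξ * ‖F ξ‖ ^ 2) volume ∧
    ∀ φ : R2 → ℂ, Tst φ → tsupport φ ∩ closure Γ = ∅ → (∫ ξ : R2, F ξ * testFT φ ξ) = 0

lemma HT.memW {Γ : Set R2} {F : R2 → ℂ} (h : HT Γ F) : MemW F := ⟨h.1.aestronglyMeasurable, h.2.1⟩

lemma dotFt_add (F1 F2 G1 G2 : R2 → ℂ) : dotFt (F1 + G1) (F2 + G2) = dotFt F1 F2 + dotFt G1 G2 := by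
  ext ξ; simp only [dotFt, Pi.add_apply]; ring

lemma dotFt_smul (c : ℂ) (F1 F2 : R2 → ℂ) : dotFt (c • F1) (c • F2) = c • dotFt F1 F2 := by
  ext ξ; simp only [dotFt, Pi.smul_apply, smul_eq_mul]; ring

lemma curlFt_add (F1 F2 G1 G2 : R2 → ℂ) : curlFt (F1 + G1) (F2 + G2) = curlFt F1 F2 + curlFt G1 G2 := by
  ext ξ; simp only [curlFt, Pi.add_apply]; ring

lemma curlFt_smul (c : ℂ) (F1 F2 : R2 → ℂ) : curlFt (c • F1) (c • F2) = c • curlFt F1 F2 := by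
  ext ξ; simp only [curlFt, Pi.smul_apply, smul_eq_mul]; ring

lemma HT.add {Γ : Set R2} {F G : R2 → ℂ} (h : HT Γ F) (h' : HT Γ G) : HT Γ (F + G) := by
  refine ⟨h.1.add h'.1, (h.memW.add h'.memW).2, fun φ hφ hs => ?_⟩
  simp only [Pi.add_apply, add_mul]
  rw [integral_add (h.memW.mul_ker hφ.isKer) (h'.memW.mul_ker hφ.isKer), h.2.2 φ hφ hs, h'.2.2 φ hφ hs,
    add_zero]

lemma HT.smul {Γ : Set R2} {F : R2 → ℂ} (h : HT Γ F) (c : ℂ) : HT Γ (c • F) := by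
  refine ⟨h.1.const_smul c, (h.memW.smul c).2, fun φ hφ hs => ?_⟩
  simp only [Pi.smul_apply, smul_eq_mul, mul_assoc]
  rw [integral_const_mul, h.2.2 φ hφ hs, mul_zero]

lemma HT.zero (Γ : Set R2) : HT Γ 0 := ⟨continuous_zero, MemW.zero.2, by simp⟩

/-- The space `X` as a space of pairs of functions. -/
def XS (Γ : Set R2) : Submodule ℂ ((R2 → ℂ) × (R2 → ℂ)) where
  carrier := {F | HT Γ F.1 ∧ HT Γ F.2 ∧ MemW (dotFt F.1 F.2)}
  add_mem' {a b} ha hb := ⟨ha.1.add hb.1, ha.2.1.add hb.2.1, by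
    have := ha.2.2.add hb.2.2
    rw [← dotFt_add] at this
    exact this⟩
  zero_mem' := ⟨HT.zero Γ, HT.zero Γ, by
    have : dotFt 0 0 = 0 := by ext ξ; simp [dotFt]
    have h := MemW.zero
    rw [← this] at h
    exact h⟩
  smul_mem' c a ha := ⟨ha.1.smul c, ha.2.1.smul c, by
    have := ha.2.2.smul c
    rw [← dotFt_smul] at this
    exact this⟩

/-- first component -/
def cp0 {Γ : Set R2} : XS Γ →ₗ[ℂ] (R2 → ℂ) := (LinearMap.fst ℂ _ _).comp (XS Γ).subtype
/-- second component -/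
def cp1 {Γ : Set R2} : XS Γ →ₗ[ℂ] (R2 → ℂ) := (LinearMap.snd ℂ _ _).comp (XS Γ).subtype
/-- divergence -/
def cpd {Γ : Set R2} : XS Γ →ₗ[ℂ] (R2 → ℂ) where
  toFun F := dotFt (cp0 F) (cp1 F)
  map_add' a b := by rw [map_add, map_add, dotFt_add]
  map_smul' c a := by rw [map_smul, map_smul, dotFt_smul]; rfl
/-- curl -/
def cpc {Γ : Set R2} : XS Γ →ₗ[ℂ] (R2 → ℂ) where
  toFun F := curlFt (cp0 F) (cp1 F)
  map_add' a b := by rw [map_add, map_add, curlFt_add]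
  map_smul' c a := by rw [map_smul, map_smul, curlFt_smul]; rfl

lemma cp0_HT {Γ : Set R2} (F : XS Γ) : HT Γ (cp0 F) := F.2.1
lemma cp1_HT {Γ : Set R2} (F : XS Γ) : HT Γ (cp1 F) := F.2.2.1
lemma cpd_memW {Γ : Set R2} (F : XS Γ) : MemW (cpd F) := F.2.2.2

/-- squared norm -/
def NX {Γ : Set R2} (F : XS Γ) : ℝ := nW (cp0 F) + nW (cp1 F) + nW (cpd F)

lemma NX_nonneg {Γ : Set R2} (F : XS Γ) : 0 ≤ NX F :=
  add_nonneg (add_nonneg (nW_nonneg _) (nW_nonneg _)) (nW_nonneg _)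

/-- bounded operators from `X` -/
def BO {Γ : Set R2} (T : XS Γ →ₗ[ℂ] (R2 → ℂ)) : Prop :=
  ∃ C, 0 ≤ C ∧ ∀ F, Continuous (T F) ∧ MemW (T F) ∧ nW (T F) ≤ C * NX F ∧
    ∀ ξ, wt ξ * ‖T F ξ‖ ^ 2 ≤ C * NX F

lemma BO.add {Γ : Set R2} {T T' : XS Γ →ₗ[ℂ] (R2 → ℂ)} (h : BO T) (h' : BO T') : BO (T + T') := by
  obtain ⟨C, hC0, hC⟩ := h
  obtain ⟨C', hC0', hC'⟩ := h'
  refine ⟨2 * C + 2 * C', by positivity, fun F => ?_⟩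
  obtain ⟨h1, h2, h3, h4⟩ := hC F
  obtain ⟨h1', h2', h3', h4'⟩ := hC' F
  rw [LinearMap.add_apply]
  refine ⟨h1.add h1', h2.add h2', ?_, fun ξ => ?_⟩
  · have := nW_add_le h2 h2'
    linarith
  · have hw := wt_pos ξ
    have a1 : ‖T F ξ + T' F ξ‖ ^ 2 ≤ 2 * ‖T F ξ‖ ^ 2 + 2 * ‖T' F ξ‖ ^ 2 := by
      have := norm_add_le (T F ξ) (T' F ξ)
      have h2 : ‖T F ξ + T' F ξ‖ ^ 2 ≤ (‖T F ξ‖ + ‖T' F ξ‖) ^ 2 := by gcongr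
      nlinarith [sq_nonneg (‖T F ξ‖ - ‖T' F ξ‖)]
    have := h4 ξ
    have := h4' ξ
    rw [Pi.add_apply]
    nlinarith

lemma BO.zero {Γ : Set R2} : BO (0 : XS Γ →ₗ[ℂ] (R2 → ℂ)) :=
  ⟨0, le_rfl, fun F => ⟨continuous_zero, MemW.zero, by simp [nW], by simp⟩⟩

lemma BO.sum {Γ : Set R2} {ι : Type*} (s : Finset ι) {T : ι → XS Γ →ₗ[ℂ] (R2 → ℂ)} (h : ∀ j, BO (T j)) :
    BO (∑ j ∈ s, T j) := by
  classical
  induction s using Finset.induction_on with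
  | empty => simpa using BO.zero
  | insert a s ha ih => rw [Finset.sum_insert ha]; exact (h a).add ih

lemma BO.mul {Γ : Set R2} {T : XS Γ →ₗ[ℂ] (R2 → ℂ)} (h : BO T) {m : R2 → ℂ} (hm : Continuous m)
    {C : ℝ} (hmC : ∀ ξ, ‖m ξ‖ ≤ C) : BO ((LinearMap.mulLeft ℂ m).comp T) := by
  obtain ⟨D, hD0, hD⟩ := h
  refine ⟨C ^ 2 * D, by positivity, fun F => ?_⟩
  obtain ⟨h1, h2, h3, h4⟩ := hD F
  have h5 := h2.mul_bdd hm hmC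
  refine ⟨hm.mul h1, h5.1, ?_, fun ξ => ?_⟩
  · refine h5.2.trans ?_
    rw [mul_assoc]; gcongr
  · have hw := wt_pos ξ
    have e : ((LinearMap.mulLeft ℂ m).comp T) F ξ = m ξ * T F ξ := rfl
    rw [e, norm_mul, mul_pow]
    have : ‖m ξ‖ ^ 2 ≤ C ^ 2 := by gcongr; exact hmC ξ
    calc wt ξ * (‖m ξ‖ ^ 2 * ‖T F ξ‖ ^ 2) ≤ wt ξ * (C ^ 2 * ‖T F ξ‖ ^ 2) := by gcongr
      _ = C ^ 2 * (wt ξ * ‖T F ξ‖ ^ 2) := by ring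
      _ ≤ C ^ 2 * (D * NX F) := mul_le_mul_of_nonneg_left (h4 ξ) (by positivity)
      _ = _ := by ring

/-- convolution as linear map -/
def convT {Γ : Set R2} (k : R2 → ℂ) (hk : IsKer k) (T : XS Γ →ₗ[ℂ] (R2 → ℂ)) (hT : ∀ F, MemW (T F)) :
    XS Γ →ₗ[ℂ] (R2 → ℂ) where
  toFun F := convK k (T F)
  map_add' a b := by
    ext ξ
    simp only [convK, map_add, Pi.add_apply, mul_add]
    exact integral_add (conv_integrable hk (hT a) ξ) (conv_integrable hk (hT b) ξ)
  map_smul' c a := by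
    ext ξ
    simp only [convK, map_smul, Pi.smul_apply, smul_eq_mul, RingHom.id_apply]
    rw [← integral_const_mul]
    congr 1; ext η; ring

lemma convT_BO {Γ : Set R2} {k : R2 → ℂ} (hk : IsKer k) {T : XS Γ →ₗ[ℂ] (R2 → ℂ)} (hT : ∀ F, MemW (T F))
    (hb : ∀ F, nW (T F) ≤ NX F) : BO (convT k hk T hT) := by
  obtain ⟨C, hC0, hC⟩ := conv_wt hk
  refine ⟨C, hC0, fun F => ?_⟩
  obtain ⟨h1, h2, h3⟩ := hC _ (hT F)
  have := mul_le_mul_of_nonneg_left (hb F) hC0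
  exact ⟨conv_cont hk (hT F), h2, h3.trans this, fun ξ => (h1 ξ).trans this⟩

lemma nW_cp0 {Γ : Set R2} (F : XS Γ) : nW (cp0 F) ≤ NX F := by
  unfold NX; linarith [nW_nonneg (cp1 F), nW_nonneg (cpd F)]
lemma nW_cp1 {Γ : Set R2} (F : XS Γ) : nW (cp1 F) ≤ NX F := by
  unfold NX; linarith [nW_nonneg (cp0 F), nW_nonneg (cpd F)]
lemma nW_cpd {Γ : Set R2} (F : XS Γ) : nW (cpd F) ≤ NX F := by
  unfold NX; linarith [nW_nonneg (cp0 F), nW_nonneg (cp1 F)]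

/-- The localisation data. -/
structure GeoData (Γ : Set R2) where
  ι : Type
  fι : Fintype ι
  χ : ι → R2 → ℂ
  ρ : ι → R2 → ℂ
  hχ : ∀ j, Tst (χ j)
  hρ : ∀ j, Tst (ρ j)
  hρ1 : ∀ j, testFT (ρ j) 0 = 1
  U : Set R2
  hU : IsOpen U
  hΓU : closure Γ ⊆ U
  hsum : ∀ x ∈ U, ∑ j, χ j x = 1
  hg : ∀ j, ∀ z ∈ closure Γ, z ∈ tsupport (χ j) → ∀ t ∈ Set.Icc (0 : ℝ) 1,
        ∀ y, ρ j y ≠ 0 → z + t • y ∈ closure Γ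

lemma geoData {Γ : Set R2} (hΓ : IsLipschitzDomain Γ) : Nonempty (GeoData Γ) := by
  obtain ⟨ι, fι, χ, y0, r0, hχ, hr0, ⟨U, hU, hΓU, hsum⟩, hg⟩ := geo hΓ
  have hb : ∀ j, ∃ ρ : R2 → ℂ, Tst ρ ∧ testFT ρ 0 = 1 ∧ ∀ y, ρ y ≠ 0 → y ∈ Metric.ball (y0 j) (r0 j) := by
    intro j
    have hr := hr0 j
    let b : ContDiffBump (y0 j) := ⟨r0 j / 2, r0 j, by positivity, by linarith⟩
    refine ⟨fun y => ((b.normed volume y : ℝ) : ℂ), ⟨?_, ?_⟩, ?_, ?_⟩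
    · exact Complex.ofRealCLM.contDiff.comp b.contDiff_normed
    · exact b.hasCompactSupport_normed.comp_left (g := fun t : ℝ => (t : ℂ)) (by simp)
    · have e : ∀ x : R2, Complex.exp (I * (rdot x 0 : ℂ)) * ((b.normed volume x : ℝ) : ℂ) =
          ((b.normed volume x : ℝ) : ℂ) := by intro x; simp [rdot]
      unfold testFT
      simp_rw [e]
      rw [integral_complex_ofReal, b.integral_normed]; simp
    · intro y hy
      have : y ∈ Function.support (b.normed volume) := by simpa using hy
      rw [b.support_normed_eq] at this
      exact this
  choose ρ h1 h2 h3 using hb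
  exact ⟨⟨ι, fι, χ, ρ, hχ, h1, h2, U, hU, hΓU, hsum, fun j z hz hzs t ht y hy =>
    hg j z hz hzs t ht y (h3 j y hy)⟩⟩
attribute [instance] GeoData.fι

lemma MemW.sum {ι : Type*} (s : Finset ι) {F : ι → R2 → ℂ} (h : ∀ j, MemW (F j)) :
    MemW (fun ξ => ∑ j ∈ s, F j ξ) := by
  classical
  induction s using Finset.induction_on with
  | empty => simp only [Finset.sum_empty]; exact MemW.zero
  | insert a s ha ih =>
    simp_rw [Finset.sum_insert ha]
    exact (h a).add ih

lemma testFT_int {φ : R2 → ℂ} (h : Tst φ) (ξ : R2) :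
    Integrable (fun x => Complex.exp (I * (rdot x ξ : ℂ)) * φ x) volume := by
  have h1 := h.1.continuous
  have h2 : Continuous fun x => rdot x ξ := rdot_cont continuous_id continuous_const
  exact Continuous.integrable_of_hasCompactSupport (by fun_prop) h.2.mul_left

lemma Tst.sum {ι : Type*} (s : Finset ι) {F : ι → R2 → ℂ} (h : ∀ j, Tst (F j)) :
    Tst (fun ξ => ∑ j ∈ s, F j ξ) := by
  classical
  induction s using Finset.induction_on with
  | empty => exact ⟨by simpa using contDiff_const, by simp only [Finset.sum_empty]; exact HasCompactSupport.zero⟩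
  | insert a s ha ih =>
    simp_rw [Finset.sum_insert ha]
    exact ⟨(h a).1.add ih.1, (h a).2.add ih.2⟩

lemma Tst.sub {φ ψ : R2 → ℂ} (h : Tst φ) (h' : Tst ψ) : Tst (fun x => φ x - ψ x) :=
  ⟨h.1.sub h'.1, h.2.sub h'.2⟩

/-- reproducing formula -/
lemma repro {Γ : Set R2} (G : GeoData Γ) {F : R2 → ℂ} (h : HT Γ F) :
    F = fun ξ => ∑ j, convK (kern (G.χ j)) F ξ := by
  have hW := h.memW
  set S : R2 → ℂ := fun ξ => ∑ j, convK (kern (G.χ j)) F ξ with hS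
  have hSW : MemW S := MemW.sum Finset.univ fun j => by
    obtain ⟨C, -, hC⟩ := conv_wt (G.hχ j).kern
    exact (hC F hW).2.1
  have hSc : Continuous S := continuous_finsetSum _ fun j _ => conv_cont (G.hχ j).kern hW
  have key : F - S = 0 := by
    refine testFT_inj (h.1.sub hSc) (hW.sub hSW) (fun φ hφ => ?_)
    have e1 : ∀ ξ, (F - S) ξ * testFT φ ξ = F ξ * testFT φ ξ - S ξ * testFT φ ξ := by
      intro ξ; simp [sub_mul]
    simp_rw [e1]
    rw [integral_sub (hW.mul_ker hφ.isKer) (hSW.mul_ker hφ.isKer)]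
    have hcW : ∀ j, MemW (convK (kern (G.χ j)) F) := fun j => by
      obtain ⟨C, -, hC⟩ := conv_wt (G.hχ j).kern
      exact (hC F hW).2.1
    have e2 : ∫ ξ, S ξ * testFT φ ξ = ∑ j, ∫ ξ, F ξ * testFT (fun x => G.χ j x * φ x) ξ := by
      simp only [hS, Finset.sum_mul]
      rw [integral_finsetSum _ fun j _ => (hcW j).mul_ker hφ.isKer]
      refine Finset.sum_congr rfl fun j _ => conv_pair (G.hχ j) hφ hW
    have hj : ∀ j, Tst (fun x => G.χ j x * φ x) := fun j => (G.hχ j).mul hφ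
    rw [e2, ← integral_finsetSum _ fun j _ => hW.mul_ker (hj j).isKer,
      ← integral_sub (hW.mul_ker hφ.isKer) (integrable_finsetSum _ fun j _ => hW.mul_ker (hj j).isKer)]
    have hψ : Tst (fun x => φ x - ∑ j, G.χ j x * φ x) := hφ.sub (Tst.sum _ hj)
    have e3 : ∀ ξ, F ξ * testFT φ ξ - ∑ j, F ξ * testFT (fun x => G.χ j x * φ x) ξ =
        F ξ * testFT (fun x => φ x - ∑ j, G.χ j x * φ x) ξ := by
      intro ξ
      have : testFT (fun x => φ x - ∑ j, G.χ j x * φ x) ξ =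
          testFT φ ξ - ∑ j, testFT (fun x => G.χ j x * φ x) ξ := by
        unfold testFT
        rw [← integral_finsetSum _ fun j _ => testFT_int (hj j) ξ,
          ← integral_sub (testFT_int hφ ξ) (integrable_finsetSum _ fun j _ => testFT_int (hj j) ξ)]
        congr 1; ext x
        rw [mul_sub, Finset.mul_sum]
      rw [this, mul_sub, Finset.mul_sum]
    simp_rw [e3]
    refine h.2.2 _ hψ ?_
    rw [← Set.disjoint_iff_inter_eq_empty]
    have : tsupport (fun x => φ x - ∑ j, G.χ j x * φ x) ⊆ G.Uᶜ := by
      refine closure_minimal ?_ G.hU.isClosed_compl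
      intro x hx hxU
      apply hx
      simp only
      rw [← Finset.sum_mul, G.hsum x hxU]; ring
    exact (Set.disjoint_left.2 fun x hx hxΓ => this hx (G.hΓU hxΓ))
  have := congrFun key
  ext ξ
  have h1 := this ξ
  simp only [Pi.sub_apply, Pi.zero_apply] at h1
  exact sub_eq_zero.1 h1

section
variable {Γ : Set R2} (G : GeoData Γ)

/-- divergence of the localised fields -/
def dT (j : G.ι) : XS Γ →ₗ[ℂ] (R2 → ℂ) :=
  convT (fun ζ => I * kern (G.χ j) ζ) ((G.hχ j).kern.const_mul I) cpd cpd_memW +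
  convT (fun ζ => I * ((ζ 0 : ℂ) * kern (G.χ j) ζ)) (((G.hχ j).kern.coord_mul 0).const_mul I) cp0
    (fun F => (cp0_HT F).memW) +
  convT (fun ζ => I * ((ζ 1 : ℂ) * kern (G.χ j) ζ)) (((G.hχ j).kern.coord_mul 1).const_mul I) cp1
    (fun F => (cp1_HT F).memW)

lemma dT_BO (j : G.ι) : BO (dT G j) :=
  ((convT_BO _ _ nW_cpd).add (convT_BO _ _ nW_cp0)).add (convT_BO _ _ nW_cp1)

lemma dT_eq (j : G.ι) (F : XS Γ) (ξ : R2) : dT G j F ξ =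
    I * ((ξ 0 : ℂ) * convK (kern (G.χ j)) (cp0 F) ξ + (ξ 1 : ℂ) * convK (kern (G.χ j)) (cp1 F) ξ) := by
  have hk := (G.hχ j).kern
  have e : dT G j F ξ = convK (fun ζ => I * kern (G.χ j) ζ) (cpd F) ξ +
    convK (fun ζ => I * ((ζ 0 : ℂ) * kern (G.χ j) ζ)) (cp0 F) ξ +
    convK (fun ζ => I * ((ζ 1 : ℂ) * kern (G.χ j) ζ)) (cp1 F) ξ := rfl
  have i0 := conv_integrable hk (cp0_HT F).memW ξ
  have i1 := conv_integrable hk (cp1_HT F).memW ξ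
  have j0 := conv_integrable ((hk.coord_mul 0).const_mul I) (cp0_HT F).memW ξ
  have j1 := conv_integrable ((hk.coord_mul 1).const_mul I) (cp1_HT F).memW ξ
  have jd := conv_integrable (hk.const_mul I) (cpd_memW F) ξ
  rw [e]
  unfold convK
  have a0 := integral_add (jd.add j0) j1
  have a1 := integral_add jd j0
  simp only [Pi.add_apply] at a0
  rw [← a1, ← a0, ← integral_const_mul, ← integral_const_mul, ← integral_add (i0.const_mul _) (i1.const_mul _),
    ← integral_const_mul]
  congr 1; ext η
  have ed : cpd F η = (η 0 : ℂ) * cp0 F η + (η 1 : ℂ) * cp1 F η := rfl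
  rw [ed]
  simp only [PiLp.sub_apply]
  push_cast
  ring

lemma cp0_repro (F : XS Γ) (ξ : R2) : cp0 F ξ = ∑ j, convK (kern (G.χ j)) (cp0 F) ξ :=
  congrFun (repro G (cp0_HT F)) ξ
lemma cp1_repro (F : XS Γ) (ξ : R2) : cp1 F ξ = ∑ j, convK (kern (G.χ j)) (cp1 F) ξ :=
  congrFun (repro G (cp1_HT F)) ξ

lemma sum_dT (F : XS Γ) (ξ : R2) : ∑ j, dT G j F ξ = I * cpd F ξ := by
  have ed : cpd F ξ = (ξ 0 : ℂ) * cp0 F ξ + (ξ 1 : ℂ) * cp1 F ξ := rfl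
  rw [ed, cp0_repro G F ξ, cp1_repro G F ξ]
  simp_rw [dT_eq]
  rw [← Finset.mul_sum, Finset.sum_add_distrib, Finset.mul_sum, Finset.mul_sum]

lemma cp0_BO {Γ : Set R2} (G : GeoData Γ) : BO (cp0 (Γ := Γ)) := by
  have : (cp0 (Γ := Γ)) = ∑ j, convT (kern (G.χ j)) (G.hχ j).kern cp0 (fun F => (cp0_HT F).memW) := by
    refine LinearMap.ext fun F => funext fun ξ => ?_
    rw [LinearMap.sum_apply, Finset.sum_apply]
    exact cp0_repro G F ξ
  rw [this]
  exact BO.sum _ fun j => convT_BO _ _ nW_cp0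

lemma cp1_BO {Γ : Set R2} (G : GeoData Γ) : BO (cp1 (Γ := Γ)) := by
  have : (cp1 (Γ := Γ)) = ∑ j, convT (kern (G.χ j)) (G.hχ j).kern cp1 (fun F => (cp1_HT F).memW) := by
    refine LinearMap.ext fun F => funext fun ξ => ?_
    rw [LinearMap.sum_apply, Finset.sum_apply]
    exact cp1_repro G F ξ
  rw [this]
  exact BO.sum _ fun j => convT_BO _ _ nW_cp1

/-- components of the operator `P` -/
def PT (l : Fin 2) : XS Γ →ₗ[ℂ] (R2 → ℂ) :=
  ∑ j, (LinearMap.mulLeft ℂ (mlt (fun y => (y l : ℂ) * G.ρ j y))).comp (dT G j)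

lemma PT_apply (l : Fin 2) (F : XS Γ) (ξ : R2) :
    PT G l F ξ = ∑ j, mlt (fun y => (y l : ℂ) * G.ρ j y) ξ * dT G j F ξ := by
  rw [PT, LinearMap.sum_apply, Finset.sum_apply]; rfl

lemma PT_BO (l : Fin 2) : BO (PT G l) := by
  refine BO.sum _ fun j => ?_
  obtain ⟨h1, ⟨C, -, hC⟩, -⟩ := mlt_mult ((G.hρ j).coord_mul l)
  exact (dT_BO G j).mul h1 hC

/-- remainder -/
def RT : XS Γ →ₗ[ℂ] (R2 → ℂ) :=
  ∑ j, (LinearMap.mulLeft ℂ (fun ξ => I * testFT (G.ρ j) ((-1 : ℝ) • ξ))).comp (dT G j)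

lemma RT_apply (F : XS Γ) (ξ : R2) :
    RT G F ξ = ∑ j, (I * testFT (G.ρ j) ((-1 : ℝ) • ξ)) * dT G j F ξ := by
  rw [RT, LinearMap.sum_apply, Finset.sum_apply]; rfl

lemma rker (j : G.ι) : IsKer (fun ξ => I * testFT (G.ρ j) ((-1 : ℝ) • ξ)) :=
  ((G.hρ j).isKer.comp_smul (c := -1) (by norm_num)).const_mul I

lemma RT_BO : BO (RT G) := by
  refine BO.sum _ fun j => ?_
  obtain ⟨h1, ⟨C, -, hC⟩, -⟩ := (rker G j).mult
  exact (dT_BO G j).mul h1 hC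

lemma PT_div (F : XS Γ) : dotFt (PT G 0 F) (PT G 1 F) = cpd F + RT G F := by
  ext ξ
  rw [dotFt, PT_apply, PT_apply, Pi.add_apply, RT_apply, Finset.mul_sum, Finset.mul_sum,
    ← Finset.sum_add_distrib]
  have e : cpd F ξ = ∑ j, -(I * dT G j F ξ) := by
    rw [Finset.sum_neg_distrib, ← Finset.mul_sum, sum_dT, ← mul_assoc, I_mul_I]; ring
  rw [e, ← Finset.sum_add_distrib]
  refine Finset.sum_congr rfl fun j _ => ?_
  have h := mlt_div (G.hρ j) ξ
  rw [G.hρ1 j] at h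
  have h2 : ((-1 : ℝ) • ξ) = -ξ := by simp
  rw [h2]
  linear_combination (-I * dT G j F ξ) * h + (dT G j F ξ * (ξ.ofLp 0 * mlt (fun y => (y 0 : ℂ) * G.ρ j y) ξ +
    ξ.ofLp 1 * mlt (fun y => (y 1 : ℂ) * G.ρ j y) ξ)) * I_mul_I

lemma PT_HT (l : Fin 2) (F : XS Γ) : HT Γ (PT G l F) := by
  obtain ⟨C, hC0, hC⟩ := PT_BO G l
  obtain ⟨h1, h2, -, -⟩ := hC F
  refine ⟨h1, h2.2, fun φ hφ hs => ?_⟩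
  simp_rw [PT_apply, Finset.sum_mul]
  have hdW : ∀ j, MemW (dT G j F) := fun j => by
    obtain ⟨C, hC0, hC⟩ := dT_BO G j; exact (hC F).2.1
  have hmW : ∀ j, MemW (mlt (fun y => (y l : ℂ) * G.ρ j y) * dT G j F) := fun j => by
    obtain ⟨h1, ⟨C, -, hC⟩, -⟩ := mlt_mult ((G.hρ j).coord_mul l)
    exact ((hdW j).mul_bdd h1 hC).1
  have hmI : ∀ j, Integrable (fun ξ => mlt (fun y => (y l : ℂ) * G.ρ j y) ξ * dT G j F ξ * testFT φ ξ) volume :=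
    fun j => (hmW j).mul_ker hφ.isKer
  rw [integral_finsetSum _ fun j _ => hmI j]
  refine Finset.sum_eq_zero fun j _ => ?_
  simp_rw [mul_assoc]
  refine mlt_zero ((G.hρ j).coord_mul l) ((hdW j).mul_ker hφ.isKer) (fun t ht y hy => ?_)
  have hy' : G.ρ j y ≠ 0 := right_ne_zero_of_mul hy
  -- translate
  set ψ : R2 → ℂ := fun x => φ (x + t • y) with hψd
  have hψ : Tst ψ := hφ.translate _
  have hw0 := (cp0_HT F).memW
  have hw1 := (cp1_HT F).memW
  set v : Fin 2 → R2 := fun l => EuclideanSpace.single l 1 with hv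
  have hψ' : ∀ l, Tst (fun x => fderiv ℝ ψ x (v l)) := fun l => hψ.deriv _
  have hvr : ∀ l ξ, rdot (v l) ξ = ξ l := by
    intro l ξ; fin_cases l <;> simp [hv, rdot]
  have e : ∀ ξ, dT G j F ξ * testFT φ ξ * Complex.exp (-(I * (rdot (t • y) ξ : ℂ))) =
      -(convK (kern (G.χ j)) (cp0 F) ξ * testFT (fun x => fderiv ℝ ψ x (v 0)) ξ) -
      (convK (kern (G.χ j)) (cp1 F) ξ * testFT (fun x => fderiv ℝ ψ x (v 1)) ξ) := by
    intro ξ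
    rw [testFT_deriv hψ, testFT_deriv hψ, hvr, hvr, hψd, testFT_translate, dT_eq]
    ring
  simp_rw [e]
  have hcW : ∀ H : R2 → ℂ, MemW H → MemW (convK (kern (G.χ j)) H) := fun H hH => by
    obtain ⟨C, -, hC⟩ := conv_wt (G.hχ j).kern
    exact (hC H hH).2.1
  have hsub := integral_sub ((hcW _ hw0).mul_ker (hψ' 0).isKer).neg ((hcW _ hw1).mul_ker (hψ' 1).isKer)
  simp only [Pi.neg_apply] at hsub
  rw [hsub, integral_neg, conv_pair (G.hχ j) (hψ' 0) hw0, conv_pair (G.hχ j) (hψ' 1) hw1]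
  have hdisj : ∀ l, tsupport (fun x => G.χ j x * fderiv ℝ ψ x (v l)) ∩ closure Γ = ∅ := by
    intro l
    rw [← Set.disjoint_iff_inter_eq_empty, Set.disjoint_left]
    intro x hx hxΓ
    have hx1 : x ∈ tsupport (G.χ j) := tsupport_mul_subset_left hx
    have hx2 : x ∈ tsupport (fun x => fderiv ℝ ψ x (v l)) := tsupport_mul_subset_right hx
    have hx3 : x ∈ tsupport ψ := tsupport_fderiv_apply_subset ℝ (v l) hx2
    have hx4 : x + t • y ∈ tsupport φ := by
      have := tsupport_comp_eq_preimage φ (Homeomorph.addRight (t • y))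
      have h5 : x ∈ tsupport (φ ∘ (Homeomorph.addRight (t • y))) := hx3
      rw [this] at h5
      exact h5
    have := G.hg j x hxΓ hx1 t ht y hy'
    have h6 : x + t • y ∈ tsupport φ ∩ closure Γ := ⟨hx4, this⟩
    rw [hs] at h6
    exact h6
  rw [(cp0_HT F).2.2 _ ((G.hχ j).mul (hψ' 0)) (hdisj 0),
    (cp1_HT F).2.2 _ ((G.hχ j).mul (hψ' 1)) (hdisj 1)]
  simp

/-- the operator `P` -/
def PX : XS Γ →ₗ[ℂ] XS Γ :=
  LinearMap.codRestrict (XS Γ) ((PT G 0).prod (PT G 1)) (fun F => ⟨PT_HT G 0 F, PT_HT G 1 F, by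
    obtain ⟨C, hC0, hC⟩ := RT_BO G
    have := (cpd_memW F).add (hC F).2.1
    rw [← PT_div] at this
    exact this⟩)

lemma cp0_PX (F : XS Γ) : cp0 (PX G F) = PT G 0 F := rfl
lemma cp1_PX (F : XS Γ) : cp1 (PX G F) = PT G 1 F := rfl
lemma cpd_PX (F : XS Γ) : cpd (PX G F) = cpd F + RT G F := PT_div G F

lemma PX_bdd : ∃ C, 0 ≤ C ∧ ∀ F, NX (PX G F) ≤ C * NX F := by
  obtain ⟨C0, h0, hC0⟩ := PT_BO G 0
  obtain ⟨C1, h1, hC1⟩ := PT_BO G 1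
  obtain ⟨C2, h2, hC2⟩ := RT_BO G
  refine ⟨C0 + C1 + (2 + 2 * C2), by positivity, fun F => ?_⟩
  have a0 := (hC0 F).2.2.1
  have a1 := (hC1 F).2.2.1
  have a2 := nW_add_le (cpd_memW F) (hC2 F).2.1
  have a3 := (hC2 F).2.2.1
  have a4 := nW_cpd F
  have e : NX (PX G F) = nW (PT G 0 F) + nW (PT G 1 F) + nW (cpd F + RT G F) := by
    rw [← PT_div]; rfl
  rw [e]
  linarith

lemma cpd_BO {Γ : Set R2} (G : GeoData Γ) : BO (cpd (Γ := Γ)) := by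
  have h := BO.sum Finset.univ fun j => (dT_BO G j)
  obtain ⟨C, hC0, hC⟩ := h
  have e : ∀ F : XS Γ, cpd F = (fun _ => -I) * (∑ j, dT G j) F := by
    intro F
    funext ξ
    rw [Pi.mul_apply, LinearMap.sum_apply, Finset.sum_apply, sum_dT, ← mul_assoc]
    simp
  refine ⟨C, hC0, fun F => ?_⟩
  obtain ⟨h1, h2, h3, h4⟩ := hC F
  obtain ⟨h5, h6⟩ := h2.mul_bdd (m := fun _ => -I) continuous_const (C := 1) (by simp)
  rw [e]
  refine ⟨continuous_const.mul h1, h5, by linarith, fun ξ => ?_⟩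
  have := h4 ξ
  simpa using this

end

/-! ### limits -/

lemma convK_sub {k F G : R2 → ℂ} (hk : IsKer k) (hF : MemW F) (hG : MemW G) (ξ : R2) :
    convK k F ξ - convK k G ξ = convK k (F - G) ξ := by
  unfold convK
  rw [← integral_sub (conv_integrable hk hF ξ) (conv_integrable hk hG ξ)]
  congr 1; ext η; simp [mul_sub]

lemma tendsto_of_sq {u : ℕ → ℂ} {a : ℂ} {C : ℝ} {b : ℕ → ℝ} (hb : Tendsto b atTop (𝓝 0))
    (h : ∀ n, ‖u n - a‖ ^ 2 ≤ C * b n) : Tendsto u atTop (𝓝 a) := by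
  rw [tendsto_iff_norm_sub_tendsto_zero]
  have h1 : Tendsto (fun n => ‖u n - a‖ ^ 2) atTop (𝓝 0) := by
    refine squeeze_zero (fun n => by positivity) h ?_
    simpa using hb.const_mul C
  have h2 := h1.sqrt
  simpa using h2

lemma ae_of_nW {F : ℕ → R2 → ℂ} {F' G : R2 → ℂ} (hp : ∀ ξ, Tendsto (fun n => F n ξ) atTop (𝓝 (F' ξ)))
    (hW : ∀ n, MemW (F n)) (hG : MemW G)
    (hn : Tendsto (fun n => nW (F n - G)) atTop (𝓝 0)) : F' =ᵐ[volume] G := by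
  have hm : ∀ n, AEMeasurable (fun ξ => ENNReal.ofReal (wt ξ * ‖(F n - G) ξ‖ ^ 2)) volume := fun n =>
    ((hW n).sub hG).2.1.aemeasurable.ennreal_ofReal
  have h1 := lintegral_liminf_le' (μ := (volume : Measure R2)) (u := atTop) hm
  have e1 : ∀ n, ∫⁻ ξ, ENNReal.ofReal (wt ξ * ‖(F n - G) ξ‖ ^ 2) = ENNReal.ofReal (nW (F n - G)) := by
    intro n
    rw [nW, ofReal_integral_eq_lintegral_ofReal ((hW n).sub hG).2]
    exact Eventually.of_forall fun ξ => mul_nonneg (wt_pos ξ).le (by positivity)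
  simp_rw [e1] at h1
  have h2 : Tendsto (fun n => ENNReal.ofReal (nW (F n - G))) atTop (𝓝 0) := by
    have := ENNReal.tendsto_ofReal hn
    simpa using this
  rw [h2.liminf_eq] at h1
  have h3 : ∀ ξ, liminf (fun n => ENNReal.ofReal (wt ξ * ‖(F n - G) ξ‖ ^ 2)) atTop =
      ENNReal.ofReal (wt ξ * ‖F' ξ - G ξ‖ ^ 2) := by
    intro ξ
    apply Tendsto.liminf_eq
    apply ENNReal.tendsto_ofReal
    exact ((((hp ξ).sub_const (G ξ)).norm).pow 2).const_mul _
  simp_rw [h3] at h1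
  have hF' : AEMeasurable F' volume := aemeasurable_of_tendsto_metrizable_ae atTop
    (fun n => (hW n).1.aemeasurable) (Eventually.of_forall hp)
  have h4 : AEMeasurable (fun ξ => ENNReal.ofReal (wt ξ * ‖F' ξ - G ξ‖ ^ 2)) volume :=
    (wt_cont.measurable.aemeasurable.mul ((hF'.sub hG.1.aemeasurable).norm.pow_const 2)).ennreal_ofReal
  have h5 := (lintegral_eq_zero_iff' h4).1 (le_antisymm h1 bot_le)
  filter_upwards [h5] with ξ hξ
  simp only [Pi.zero_apply, ENNReal.ofReal_eq_zero] at hξ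
  have hw := wt_pos ξ
  have : ‖F' ξ - G ξ‖ ^ 2 ≤ 0 := by
    by_contra hc
    push Not at hc
    have := mul_pos hw hc
    linarith
  have h6 : ‖F' ξ - G ξ‖ = 0 := by
    have := sq_nonneg ‖F' ξ - G ξ‖
    exact pow_eq_zero_iff (two_ne_zero) |>.1 (le_antisymm ‹_› this)
  exact sub_eq_zero.1 (norm_eq_zero.1 h6)

lemma nW_congr {F G : R2 → ℂ} (h : F =ᵐ[volume] G) : nW F = nW G := by
  refine integral_congr_ae ?_
  filter_upwards [h] with ξ hξ
  rw [hξ]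

lemma MemW.congr {F G : R2 → ℂ} (h : F =ᵐ[volume] G) (hF : MemW F) : MemW G := by
  refine ⟨hF.1.congr h, hF.2.congr ?_⟩
  filter_upwards [h] with ξ hξ
  rw [hξ]

lemma wt_inv_bound (ξ : R2) {a C : ℝ} (h : wt ξ * a ≤ C) : a ≤ (wt ξ)⁻¹ * C := by
  have hw := wt_pos ξ
  rw [inv_mul_eq_div, le_div_iff₀ hw]
  linarith

lemma HT_limit {Γ : Set R2} (G : GeoData Γ) {F : ℕ → R2 → ℂ} (hF : ∀ n, HT Γ (F n)) {H : R2 → ℂ}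
    (hH : MemW H) (hn : Tendsto (fun n => nW (F n - H)) atTop (𝓝 0)) :
    ∃ F', HT Γ F' ∧ F' =ᵐ[volume] H ∧ ∀ ξ, Tendsto (fun n => F n ξ) atTop (𝓝 (F' ξ)) := by
  have hd : ∀ n, MemW (F n - H) := fun n => (hF n).memW.sub hH
  have hp : ∀ ξ, Tendsto (fun n => F n ξ) atTop (𝓝 (∑ j, convK (kern (G.χ j)) H ξ)) := by
    intro ξ
    have e : ∀ n, F n ξ = ∑ j, convK (kern (G.χ j)) (F n) ξ := fun n => congrFun (repro G (hF n)) ξ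
    simp_rw [e]
    refine tendsto_finsetSum _ fun j _ => ?_
    obtain ⟨C, hC0, hC⟩ := conv_wt (G.hχ j).kern
    refine tendsto_of_sq (C := (wt ξ)⁻¹ * C) hn (fun n => ?_)
    rw [convK_sub (G.hχ j).kern (hF n).memW hH, mul_assoc]
    exact wt_inv_bound ξ ((hC _ (hd n)).1 ξ)
  have hae := ae_of_nW hp (fun n => (hF n).memW) hH hn
  have hFW := hH.congr hae.symm
  refine ⟨_, ⟨continuous_finsetSum _ fun j _ => conv_cont (G.hχ j).kern hH, hFW.2, fun φ hφ hs => ?_⟩, hae, hp⟩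
  have hk : IsKer (fun ζ => testFT φ ((-1 : ℝ) • ζ)) := hφ.isKer.comp_smul (c := -1) (by norm_num)
  obtain ⟨C, hC0, hC⟩ := conv_wt hk
  have e : ∀ K : R2 → ℂ, convK (fun ζ => testFT φ ((-1 : ℝ) • ζ)) K 0 = ∫ ξ, K ξ * testFT φ ξ := by
    intro K
    unfold convK
    congr 1; ext η
    have : ((-1 : ℝ) • ((0 : R2) - η)) = η := by simp
    simp only [this]
    rw [mul_comm]
  rw [← e]
  have hlim : Tendsto (fun n => convK (fun ζ => testFT φ ((-1 : ℝ) • ζ)) (F n) 0) atTop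
      (𝓝 (convK (fun ζ => testFT φ ((-1 : ℝ) • ζ)) (fun ξ => ∑ j, convK (kern (G.χ j)) H ξ) 0)) := by
    refine tendsto_of_sq (C := (wt 0)⁻¹ * C) hn (fun n => ?_)
    have e2 : nW (F n - H) = nW (F n - fun ξ => ∑ j, convK (kern (G.χ j)) H ξ) := by
      refine nW_congr ?_
      filter_upwards [hae] with ξ hξ
      simp only [Pi.sub_apply, hξ]
    rw [convK_sub hk (hF n).memW hFW, mul_assoc, e2]
    exact wt_inv_bound 0 ((hC _ ((hF n).memW.sub hFW)).1 0)
  have hz : ∀ n, convK (fun ζ => testFT φ ((-1 : ℝ) • ζ)) (F n) 0 = 0 := fun n => by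
    rw [e]; exact (hF n).2.2 φ hφ hs
  simp_rw [hz] at hlim
  exact (tendsto_nhds_unique hlim tendsto_const_nhds)

/-! ### the Hilbert space -/

/-- target fibre -/
abbrev C3 : Type := EuclideanSpace ℂ (Fin 3)
/-- ambient Hilbert space -/
abbrev EH : Type := Lp C3 2 (volume : Measure R2)

/-- weighted vector -/
def vec {Γ : Set R2} (F : XS Γ) (ξ : R2) : C3 :=
  ((Real.sqrt (wt ξ) : ℝ) : ℂ) • WithLp.toLp 2 ![cp0 F ξ, cp1 F ξ, cpd F ξ]

lemma vec_norm {Γ : Set R2} (F : XS Γ) (ξ : R2) :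
    ‖vec F ξ‖ ^ 2 = wt ξ * ‖cp0 F ξ‖ ^ 2 + wt ξ * ‖cp1 F ξ‖ ^ 2 + wt ξ * ‖cpd F ξ‖ ^ 2 := by
  have hw := wt_pos ξ
  rw [vec, norm_smul, mul_pow, EuclideanSpace.norm_sq_eq, Fin.sum_univ_three, Complex.norm_real,
    Real.norm_of_nonneg (Real.sqrt_nonneg _), Real.sq_sqrt hw.le]
  simp
  ring

lemma vec_meas {Γ : Set R2} (F : XS Γ) : AEStronglyMeasurable (vec F) volume := by
  have h0 := (cp0_HT F).1
  have h1 := (cp1_HT F).1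
  have h2 : Continuous (cpd F) := by
    have : cpd F = fun ξ : R2 => (ξ 0 : ℂ) * cp0 F ξ + (ξ 1 : ℂ) * cp1 F ξ := rfl
    rw [this]; fun_prop
  have hw := wt_cont
  have : Continuous (vec F) := by
    unfold vec
    have hs : Continuous fun ξ : R2 => ((Real.sqrt (wt ξ) : ℝ) : ℂ) :=
      Complex.continuous_ofReal.comp (Real.continuous_sqrt.comp hw)
    refine hs.smul ?_
    refine (PiLp.continuous_toLp 2 _).comp ?_
    refine continuous_pi fun i => ?_
    fin_cases i <;> simpa
  exact this.aestronglyMeasurable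

lemma vec_mem {Γ : Set R2} (F : XS Γ) : MemLp (vec F) 2 volume := by
  rw [memLp_two_iff_integrable_sq_norm (vec_meas F)]
  simp_rw [vec_norm]
  exact (((cp0_HT F).memW.2).add (cp1_HT F).memW.2).add (cpd_memW F).2

/-- the isometric embedding -/
def JX {Γ : Set R2} : XS Γ →ₗ[ℂ] EH where
  toFun F := (vec_mem F).toLp
  map_add' a b := by
    rw [← MemLp.toLp_add]
    refine MemLp.toLp_congr _ _ (Eventually.of_forall fun ξ => ?_)
    ext i
    simp only [vec, map_add, Pi.add_apply]
    fin_cases i <;> simp <;> ring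
  map_smul' c a := by
    rw [RingHom.id_apply, ← MemLp.toLp_const_smul]
    refine MemLp.toLp_congr _ _ (Eventually.of_forall fun ξ => ?_)
    ext i
    simp only [vec, map_smul, Pi.smul_apply]
    fin_cases i <;> simp <;> ring

lemma JX_coe {Γ : Set R2} (F : XS Γ) : JX F =ᵐ[volume] vec F := MemLp.coeFn_toLp (vec_mem F)

lemma JX_inner {Γ : Set R2} (F H : XS Γ) : inner ℂ (JX F) (JX H) =
    ∫ ξ, (wt ξ : ℂ) * (cp0 H ξ * starRingEnd ℂ (cp0 F ξ) + cp1 H ξ * starRingEnd ℂ (cp1 F ξ) +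
      cpd H ξ * starRingEnd ℂ (cpd F ξ)) := by
  rw [L2.inner_def]
  refine integral_congr_ae ?_
  filter_upwards [JX_coe F, JX_coe H] with ξ h1 h2
  rw [h1, h2, vec, vec, inner_smul_left, inner_smul_right, PiLp.inner_apply, Fin.sum_univ_three]
  have hs : ((Real.sqrt (wt ξ) : ℝ) : ℂ) * ((Real.sqrt (wt ξ) : ℝ) : ℂ) = (wt ξ : ℂ) := by
    rw [← Complex.ofReal_mul, Real.mul_self_sqrt (wt_pos ξ).le]
  rw [← hs]
  simp
  ring

lemma JX_norm {Γ : Set R2} (F : XS Γ) : ‖JX F‖ ^ 2 = NX F := by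
  have h : ((‖JX F‖ ^ 2 : ℝ) : ℂ) = inner ℂ (JX F) (JX F) := by
    rw [inner_self_eq_norm_sq_to_K]; simp
  have h2 : inner ℂ (JX F) (JX F) = ((NX F : ℝ) : ℂ) := by
    have a1 := integral_add (cp0_HT F).memW.2 (cp1_HT F).memW.2
    have a2 := integral_add ((cp0_HT F).memW.2.add (cp1_HT F).memW.2) (cpd_memW F).2
    simp only [Pi.add_apply] at a2
    rw [JX_inner, NX, nW, nW, nW, ← a1, ← a2, ← integral_complex_ofReal]
    congr 1; ext ξ
    simp only [Complex.mul_conj, Complex.normSq_eq_norm_sq]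
    push_cast
    ring
  rw [h2] at h
  exact_mod_cast h

lemma nW_zero_ae {F : R2 → ℂ} (hF : MemW F) (h : nW F = 0) : F =ᵐ[volume] 0 := by
  refine ae_of_nW (F := fun _ => F) (fun ξ => tendsto_const_nhds) (fun _ => hF) MemW.zero ?_
  simp [h]

lemma nW_zero {F : R2 → ℂ} (hF : Continuous F) (hFW : MemW F) (h : nW F = 0) : F = 0 :=
  (Continuous.ae_eq_iff_eq volume hF continuous_zero).1 (nW_zero_ae hFW h)

lemma JX_inj {Γ : Set R2} : Function.Injective (JX (Γ := Γ)) := by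
  rw [injective_iff_map_eq_zero]
  intro F hF
  have h := JX_norm F
  rw [hF] at h
  simp only [norm_zero, ne_eq, OfNat.ofNat_ne_zero, not_false_eq_true, zero_pow] at h
  have h0 : nW (cp0 F) = 0 := le_antisymm (h ▸ nW_cp0 F) (nW_nonneg _)
  have h1 : nW (cp1 F) = 0 := le_antisymm (h ▸ nW_cp1 F) (nW_nonneg _)
  refine Subtype.ext (Prod.ext ?_ ?_)
  · exact nW_zero (cp0_HT F).1 (cp0_HT F).memW h0
  · exact nW_zero (cp1_HT F).1 (cp1_HT F).memW h1

lemma JX_closed {Γ : Set R2} (G : GeoData Γ) : IsClosed (LinearMap.range (JX (Γ := Γ)) : Set EH) := by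
  refine IsSeqClosed.isClosed ?_
  intro u g hu hlim
  choose F hF using hu
  have hm := Lp.aestronglyMeasurable g
  set H : Fin 3 → R2 → ℂ := fun l ξ => ((Real.sqrt (wt ξ))⁻¹ : ℝ) * g ξ l with hH
  have hmH : ∀ l, AEStronglyMeasurable (H l) volume := fun l => by
    have hc : Continuous fun ξ : R2 => (((Real.sqrt (wt ξ))⁻¹ : ℝ) : ℂ) := by
      have := wt_cont
      refine Complex.continuous_ofReal.comp (Continuous.inv₀ (by fun_prop) fun ξ => ?_)
      exact (Real.sqrt_pos.2 (wt_pos ξ)).ne'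
    have hc2 : AEStronglyMeasurable (fun ξ => g ξ l) volume :=
      (EuclideanSpace.proj (𝕜 := ℂ) l).continuous.comp_aestronglyMeasurable hm
    exact hc.aestronglyMeasurable.mul hc2
  have hIntg : ∀ g : EH, Integrable (fun ξ => ‖g ξ‖ ^ 2) volume := fun g =>
    (memLp_two_iff_integrable_sq_norm (Lp.aestronglyMeasurable g)).1 (Lp.memLp g)
  have hsw : ∀ ξ, (Real.sqrt (wt ξ)) ^ 2 = wt ξ := fun ξ => Real.sq_sqrt (wt_pos ξ).le
  have hHn : ∀ l ξ, wt ξ * ‖H l ξ‖ ^ 2 = ‖g ξ l‖ ^ 2 := by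
    intro l ξ
    have hw := wt_pos ξ
    simp only [hH]
    rw [norm_mul, mul_pow, Complex.norm_real, Real.norm_of_nonneg (by positivity), inv_pow, hsw,
      ← mul_assoc, mul_inv_cancel₀ hw.ne', one_mul]
  have hHW : ∀ l, MemW (H l) := fun l => by
    refine ⟨hmH l, ?_⟩
    refine Integrable.mono' (hIntg g) (wt_cont.aestronglyMeasurable.mul ((hmH l).norm.pow 2))
      (Eventually.of_forall fun ξ => ?_)
    rw [Real.norm_of_nonneg (mul_nonneg (wt_pos ξ).le (by positivity)), hHn]
    have := PiLp.norm_apply_le (g ξ) l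
    gcongr
  set c : Fin 3 → XS Γ →ₗ[ℂ] (R2 → ℂ) := ![cp0, cp1, cpd] with hcd
  have hcW : ∀ l K, MemW (c l K) := by
    intro l K
    fin_cases l
    · exact (cp0_HT K).memW
    · exact (cp1_HT K).memW
    · exact cpd_memW K
  have hvec : ∀ l K ξ, vec K ξ l = ((Real.sqrt (wt ξ) : ℝ) : ℂ) * c l K ξ := by
    intro l K ξ
    fin_cases l <;> simp [vec, hcd]
  have hb : ∀ l n, nW (c l (F n) - H l) ≤ ‖u n - g‖ ^ 2 := by
    intro l n
    have e1 : ((‖u n - g‖ ^ 2 : ℝ) : ℂ) = inner ℂ (u n - g) (u n - g) := by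
      rw [inner_self_eq_norm_sq_to_K]; simp
    have e2 : inner ℂ (u n - g) (u n - g) = ((∫ ξ, ‖(u n - g) ξ‖ ^ 2 : ℝ) : ℂ) := by
      rw [L2.inner_def, ← integral_complex_ofReal]
      congr 1; ext ξ
      rw [inner_self_eq_norm_sq_to_K]; simp
    rw [e2] at e1
    have e3 : ‖u n - g‖ ^ 2 = ∫ ξ, ‖(u n - g) ξ‖ ^ 2 := by exact_mod_cast e1
    rw [e3, nW]
    refine integral_mono_ae ((hcW l _).sub (hHW l)).2 (hIntg _) ?_
    have hJ := JX_coe (F n)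
    rw [hF n] at hJ
    filter_upwards [hJ, Lp.coeFn_sub (u n) g] with ξ h1 h2
    rw [h2]
    simp only [Pi.sub_apply]
    rw [h1]
    have h3 := PiLp.norm_apply_le (vec (F n) ξ - g ξ) l
    have h4 : (vec (F n) ξ - g ξ) l = ((Real.sqrt (wt ξ) : ℝ) : ℂ) * (c l (F n) ξ - H l ξ) := by
      have hw := Real.sqrt_pos.2 (wt_pos ξ)
      have hw' : ((Real.sqrt (wt ξ) : ℝ) : ℂ) ≠ 0 := by exact_mod_cast hw.ne'
      rw [PiLp.sub_apply, hvec, mul_sub]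
      simp only [hH]
      push_cast
      rw [← mul_assoc, mul_inv_cancel₀ hw', one_mul]
    rw [h4, norm_mul, Complex.norm_real, Real.norm_of_nonneg (Real.sqrt_nonneg _)] at h3
    have h5 : (Real.sqrt (wt ξ) * ‖c l (F n) ξ - H l ξ‖) ^ 2 ≤ ‖vec (F n) ξ - g ξ‖ ^ 2 := by
      have := Real.sqrt_nonneg (wt ξ)
      gcongr
    rw [mul_pow, hsw] at h5
    exact h5
  have ht : ∀ l, Tendsto (fun n => nW (c l (F n) - H l)) atTop (𝓝 0) := by
    intro l
    refine squeeze_zero (fun n => nW_nonneg _) (hb l) ?_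
    have := ((tendsto_iff_norm_sub_tendsto_zero.1 hlim).pow 2)
    simpa using this
  obtain ⟨F0, a0, b0, c0⟩ := HT_limit G (fun n => cp0_HT (F n)) (hHW 0) (ht 0)
  obtain ⟨F1, a1, b1, c1⟩ := HT_limit G (fun n => cp1_HT (F n)) (hHW 1) (ht 1)
  have c2 : ∀ ξ, Tendsto (fun n => cpd (F n) ξ) atTop (𝓝 (dotFt F0 F1 ξ)) := fun ξ =>
    ((c0 ξ).const_mul _).add ((c1 ξ).const_mul _)
  have b2 : dotFt F0 F1 =ᵐ[volume] H 2 := ae_of_nW c2 (fun n => cpd_memW (F n)) (hHW 2) (ht 2)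
  let K : XS Γ := ⟨(F0, F1), a0, a1, (hHW 2).congr b2.symm⟩
  refine ⟨K, ?_⟩
  refine Lp.ext ?_
  filter_upwards [JX_coe K, b0, b1, b2] with ξ h h0 h1 h2
  rw [h]
  have hw := Real.sqrt_pos.2 (wt_pos ξ)
  have hw' : ((Real.sqrt (wt ξ) : ℝ) : ℂ) ≠ 0 := by exact_mod_cast hw.ne'
  have hfin : ∀ l, ((Real.sqrt (wt ξ) : ℝ) : ℂ) * H l ξ = g ξ l := by
    intro l
    simp only [hH]
    push_cast
    rw [← mul_assoc, mul_inv_cancel₀ hw', one_mul]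
  have hcl : ∀ l, c l K ξ = H l ξ := by
    intro l
    fin_cases l
    · exact h0
    · exact h1
    · exact h2
  ext l
  rw [hvec, hcl, hfin]

/-- the Hilbert space `X` -/
abbrev SX (Γ : Set R2) : Submodule ℂ EH := LinearMap.range (JX (Γ := Γ))

/-- identification -/
def eX {Γ : Set R2} : XS Γ ≃ₗ[ℂ] SX Γ := LinearEquiv.ofInjective JX JX_inj

lemma eX_coe {Γ : Set R2} (F : XS Γ) : ((eX F : SX Γ) : EH) = JX F := rfl

lemma eX_norm {Γ : Set R2} (F : XS Γ) : ‖eX F‖ ^ 2 = NX F := JX_norm F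

lemma eX_inner {Γ : Set R2} (F H : XS Γ) : inner ℂ (eX F) (eX H) =
    ∫ ξ, (wt ξ : ℂ) * (cp0 H ξ * starRingEnd ℂ (cp0 F ξ) + cp1 H ξ * starRingEnd ℂ (cp1 F ξ) +
      cpd H ξ * starRingEnd ℂ (cpd F ξ)) := JX_inner F H

lemma SX_complete {Γ : Set R2} (G : GeoData Γ) : CompleteSpace (SX Γ) :=
  (JX_closed G).completeSpace_coe

lemma SX_sep (Γ : Set R2) : TopologicalSpace.SeparableSpace (SX Γ) := by
  have : Fact ((2 : ENNReal) ≠ ⊤) := ⟨by simp⟩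
  have : SecondCountableTopology EH := Lp.SecondCountableTopology
  infer_instance

/-! ### operators from forms -/

lemma form_op {Γ : Set R2} [CompleteSpace (SX Γ)] (b : XS Γ → XS Γ → ℂ)
    (h1 : ∀ W W' V, b (W + W') V = b W V + b W' V) (h2 : ∀ (c : ℂ) W V, b (c • W) V = c * b W V)
    (h3 : ∀ W V V', b W (V + V') = b W V + b W V')
    (h4 : ∀ (c : ℂ) W V, b W (c • V) = starRingEnd ℂ c * b W V)
    {C : ℝ} (hC : ∀ W V, ‖b W V‖ ≤ C * (NX W + NX V)) :
    ∃ A : SX Γ →L[ℂ] SX Γ, ∀ W V, inner ℂ (eX V) (A (eX W)) = b W V := by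
  let f : SX Γ →ₗ⋆[ℂ] SX Γ →ₗ[ℂ] ℂ := LinearMap.mk₂'ₛₗ (starRingEnd ℂ) (RingHom.id ℂ)
    (fun w v => starRingEnd ℂ (b (eX.symm w) (eX.symm v)))
    (fun a a' c => by rw [map_add, h1, map_add])
    (fun c a v => by rw [map_smul, h2, map_mul]; rfl)
    (fun a v v' => by rw [map_add, h3, map_add])
    (fun c a v => by rw [map_smul, h4, map_mul, Complex.conj_conj]; rfl)
  have hf : ∀ w v, f w v = starRingEnd ℂ (b (eX.symm w) (eX.symm v)) := fun w v => rfl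
  have hb0 : ∀ w v, ‖f w v‖ ≤ C * (‖w‖ ^ 2 + ‖v‖ ^ 2) := by
    intro w v
    rw [hf, RCLike.norm_conj]
    have := hC (eX.symm w) (eX.symm v)
    rwa [← eX_norm, ← eX_norm, LinearEquiv.apply_symm_apply, LinearEquiv.apply_symm_apply] at this
  have hb : ∀ w v, ‖f w v‖ ≤ (2 * C) * ‖w‖ * ‖v‖ := by
    intro w v
    by_cases hw : w = 0
    · simp [hw]
    by_cases hv : v = 0
    · simp [hv]
    have hw' : 0 < ‖w‖ := norm_pos_iff.2 hw
    have hv' : 0 < ‖v‖ := norm_pos_iff.2 hv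
    have := hb0 (((‖w‖⁻¹ : ℝ) : ℂ) • w) (((‖v‖⁻¹ : ℝ) : ℂ) • v)
    rw [LinearMap.map_smul, LinearMap.map_smulₛₗ f, LinearMap.smul_apply, norm_smul, norm_smul, norm_smul,
      norm_smul, RCLike.norm_conj, Complex.norm_real, Complex.norm_real,
      Real.norm_of_nonneg (by positivity), Real.norm_of_nonneg (by positivity),
      inv_mul_cancel₀ hw'.ne', inv_mul_cancel₀ hv'.ne'] at this
    have h5 : ‖f w v‖ = (‖v‖⁻¹ * (‖w‖⁻¹ * ‖f w v‖)) * (‖w‖ * ‖v‖) := by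
      field_simp
    rw [h5]
    have h6 : ‖v‖⁻¹ * (‖w‖⁻¹ * ‖f w v‖) ≤ 2 * C := by linarith
    calc _ ≤ (2 * C) * (‖w‖ * ‖v‖) := by gcongr
      _ = _ := by ring
  let B : SX Γ →L⋆[ℂ] SX Γ →L[ℂ] ℂ := f.mkContinuous₂ (2 * C) hb
  refine ⟨InnerProductSpace.continuousLinearMapOfBilin B, fun W V => ?_⟩
  have h := InnerProductSpace.continuousLinearMapOfBilin_apply B (eX W) (eX V)
  refine (inner_conj_symm (𝕜 := ℂ) (eX V) _).symm.trans ?_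
  rw [h]
  have : B (eX W) (eX V) = starRingEnd ℂ (b W V) := by
    have : B (eX W) (eX V) = f (eX W) (eX V) := rfl
    rw [this, hf, LinearEquiv.symm_apply_apply, LinearEquiv.symm_apply_apply]
  rw [this, Complex.conj_conj]

/-! ### weakly null sequences -/

section
variable {Γ : Set R2} [CompleteSpace (SX Γ)]

lemma BO.eval {T : XS Γ →ₗ[ℂ] (R2 → ℂ)} (hT : BO T) {u : ℕ → SX Γ} (hu : WSeq u) (ξ : R2) :
    Tendsto (fun n => T (eX.symm (u n)) ξ) atTop (𝓝 0) := by
  obtain ⟨C, hC0, hC⟩ := hT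
  let f : SX Γ →ₗ[ℂ] ℂ := (LinearMap.proj ξ).comp (T.comp eX.symm.toLinearMap)
  have hf : ∀ x, ‖f x‖ ≤ Real.sqrt ((wt ξ)⁻¹ * C) * ‖x‖ := by
    intro x
    have h := wt_inv_bound ξ ((hC (eX.symm x)).2.2.2 ξ)
    rw [← eX_norm, LinearEquiv.apply_symm_apply] at h
    have hw := wt_pos ξ
    have : ‖f x‖ = Real.sqrt (‖f x‖ ^ 2) := (Real.sqrt_sq (norm_nonneg _)).symm
    rw [this, ← Real.sqrt_sq (norm_nonneg x), ← Real.sqrt_mul (by positivity)]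
    apply Real.sqrt_le_sqrt
    have e : f x = T (eX.symm x) ξ := rfl
    rw [e]
    linarith
  let g : SX Γ →L[ℂ] ℂ := f.mkContinuous _ hf
  have h := hu.2 ((InnerProductSpace.toDual ℂ (SX Γ)).symm g)
  simp only [InnerProductSpace.toDual_symm_apply] at h
  exact h

lemma WSeq.NXbdd {u : ℕ → SX Γ} (hu : WSeq u) : ∃ M, 0 ≤ M ∧ ∀ n, NX (eX.symm (u n)) ≤ M := by
  obtain ⟨⟨C, hC⟩, -⟩ := hu
  refine ⟨C ^ 2, by positivity, fun n => ?_⟩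
  rw [← eX_norm, LinearEquiv.apply_symm_apply]
  have := hC n
  gcongr

lemma BO.low {T : XS Γ →ₗ[ℂ] (R2 → ℂ)} (hT : BO T) {u : ℕ → SX Γ} (hu : WSeq u) (R : ℝ) :
    Tendsto (fun n => ∫ ξ in Metric.ball (0 : R2) R, wt ξ * ‖T (eX.symm (u n)) ξ‖ ^ 2) atTop (𝓝 0) := by
  obtain ⟨C, hC0, hC⟩ := id hT
  obtain ⟨M, hM0, hM⟩ := hu.NXbdd
  have h0 : (0 : ℝ) = ∫ ξ in Metric.ball (0 : R2) R, (0 : ℝ) := by simp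
  rw [h0]
  refine tendsto_integral_of_dominated_convergence (fun _ => C * M) (fun n => ?_) ?_ (fun n => ?_) ?_
  · exact (hC _).2.1.2.1.restrict
  · exact integrableOn_const (by exact measure_ball_lt_top.ne)
  · refine Eventually.of_forall fun ξ => ?_
    have hw := wt_pos ξ
    rw [Real.norm_of_nonneg (by positivity)]
    exact ((hC _).2.2.2 ξ).trans (by gcongr; exact hM n)
  · refine Eventually.of_forall fun ξ => ?_
    have := (((hT.eval hu ξ).norm).pow 2).const_mul (wt ξ)
    simpa using this

lemma BO.mult_null {T : XS Γ →ₗ[ℂ] (R2 → ℂ)} (hT : BO T) {m : R2 → ℂ} (hm : Mult m)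
    {u : ℕ → SX Γ} (hu : WSeq u) :
    Tendsto (fun n => nW (m * T (eX.symm (u n)))) atTop (𝓝 0) := by
  obtain ⟨C, hC0, hC⟩ := id hT
  obtain ⟨M, hM0, hM⟩ := hu.NXbdd
  obtain ⟨hmc, ⟨D, hD0, hD⟩, hmi⟩ := hm
  rw [Metric.tendsto_atTop]
  intro ε hε
  set δ := Real.sqrt (ε / (2 * (C * M + 1))) with hδ
  have hδ2 : δ ^ 2 * (C * M) < ε := by
    rw [hδ, Real.sq_sqrt (by positivity), div_mul_eq_mul_div, div_lt_iff₀ (by positivity)]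
    nlinarith [mul_nonneg hC0 hM0]
  obtain ⟨R, hR0, hR⟩ := hmi δ (Real.sqrt_pos.2 (by positivity))
  have hlow := (hT.low hu R).const_mul (D ^ 2)
  rw [mul_zero] at hlow
  have hev := hlow.eventually (gt_mem_nhds (sub_pos.2 hδ2))
  obtain ⟨N, hN⟩ := eventually_atTop.1 hev
  refine ⟨N, fun n hn => ?_⟩
  rw [Real.dist_0_eq_abs, abs_of_nonneg (nW_nonneg _)]
  have hTW := (hC (eX.symm (u n))).2.1
  have hI := (hTW.mul_bdd hmc hD).1.2
  rw [nW, ← integral_add_compl (Metric.isOpen_ball.measurableSet (s := Metric.ball (0 : R2) R)) hI]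
  have a1 : ∫ ξ in Metric.ball (0 : R2) R, wt ξ * ‖(m * T (eX.symm (u n))) ξ‖ ^ 2 ≤
      D ^ 2 * ∫ ξ in Metric.ball (0 : R2) R, wt ξ * ‖T (eX.symm (u n)) ξ‖ ^ 2 := by
    rw [← integral_const_mul]
    refine integral_mono hI.integrableOn (hTW.2.integrableOn.const_mul _) (fun ξ => ?_)
    have hw := wt_pos ξ
    simp only [Pi.mul_apply, norm_mul, mul_pow]
    have : ‖m ξ‖ ^ 2 ≤ D ^ 2 := by gcongr; exact hD ξ
    calc wt ξ * (‖m ξ‖ ^ 2 * ‖T (eX.symm (u n)) ξ‖ ^ 2) ≤ wt ξ * (D ^ 2 * ‖T (eX.symm (u n)) ξ‖ ^ 2) := by gcongr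
      _ = _ := by ring
  have a2 : ∫ ξ in (Metric.ball (0 : R2) R)ᶜ, wt ξ * ‖(m * T (eX.symm (u n))) ξ‖ ^ 2 ≤
      δ ^ 2 * (C * M) := by
    calc _ ≤ ∫ ξ in (Metric.ball (0 : R2) R)ᶜ, δ ^ 2 * (wt ξ * ‖T (eX.symm (u n)) ξ‖ ^ 2) := by
          refine setIntegral_mono_on hI.integrableOn (hTW.2.integrableOn.const_mul _)
            Metric.isOpen_ball.measurableSet.compl (fun ξ hξ => ?_)
          have hw := wt_pos ξ
          simp only [Set.mem_compl_iff, Metric.mem_ball, dist_zero_right, not_lt] at hξ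
          simp only [Pi.mul_apply, norm_mul, mul_pow]
          have : ‖m ξ‖ ^ 2 ≤ δ ^ 2 := by gcongr; exact hR ξ hξ
          calc wt ξ * (‖m ξ‖ ^ 2 * ‖T (eX.symm (u n)) ξ‖ ^ 2)
              ≤ wt ξ * (δ ^ 2 * ‖T (eX.symm (u n)) ξ‖ ^ 2) := by gcongr
            _ = _ := by ring
      _ = δ ^ 2 * ∫ ξ in (Metric.ball (0 : R2) R)ᶜ, (wt ξ * ‖T (eX.symm (u n)) ξ‖ ^ 2) := by
          rw [integral_const_mul]
      _ ≤ δ ^ 2 * nW (T (eX.symm (u n))) := by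
          refine mul_le_mul_of_nonneg_left ?_ (by positivity)
          exact setIntegral_le_integral hTW.2 (Eventually.of_forall fun ξ =>
            mul_nonneg (wt_pos ξ).le (by positivity))
      _ ≤ _ := by
          refine mul_le_mul_of_nonneg_left ?_ (by positivity)
          exact ((hC _).2.2.1).trans (by gcongr; exact hM n)
  have := hN n hn
  linarith

/-- operators mapping weakly null sequences to null sequences -/
def NullT (T : XS Γ →ₗ[ℂ] (R2 → ℂ)) : Prop :=
  ∀ u : ℕ → SX Γ, WSeq u → Tendsto (fun n => nW (T (eX.symm (u n)))) atTop (𝓝 0)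

lemma NullT.add {T T' : XS Γ →ₗ[ℂ] (R2 → ℂ)} (h : NullT T) (h' : NullT T') (hW : ∀ F, MemW (T F))
    (hW' : ∀ F, MemW (T' F)) : NullT (T + T') := by
  intro u hu
  refine squeeze_zero (fun n => nW_nonneg _) (fun n => nW_add_le (hW _) (hW' _)) ?_
  have := ((h u hu).const_mul 2).add ((h' u hu).const_mul 2)
  simpa using this

lemma NullT.sum {ι : Type*} (s : Finset ι) {T : ι → XS Γ →ₗ[ℂ] (R2 → ℂ)} (hW : ∀ j, BO (T j))
    (h : ∀ j, NullT (T j)) : NullT (∑ j ∈ s, T j) := by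
  classical
  induction s using Finset.induction_on with
  | empty =>
    intro u hu
    simp [nW]
  | insert a s ha ih =>
    rw [Finset.sum_insert ha]
    refine (h a).add ih ?_ ?_
    · obtain ⟨C, -, hC⟩ := hW a
      exact fun F => (hC F).2.1
    · obtain ⟨C, -, hC⟩ := BO.sum s hW
      exact fun F => (hC F).2.1

lemma PT_null (G : GeoData Γ) (l : Fin 2) : NullT (PT G l) := by
  refine NullT.sum _ (fun j => ?_) (fun j u hu => ?_)
  · obtain ⟨h1, ⟨C, -, hC⟩, -⟩ := mlt_mult ((G.hρ j).coord_mul l)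
    exact (dT_BO G j).mul h1 hC
  · exact (dT_BO G j).mult_null (mlt_mult ((G.hρ j).coord_mul l)) hu

lemma RT_null (G : GeoData Γ) : NullT (RT G) := by
  refine NullT.sum _ (fun j => ?_) (fun j u hu => ?_)
  · obtain ⟨h1, ⟨C, -, hC⟩, -⟩ := (rker G j).mult
    exact (dT_BO G j).mul h1 hC
  · exact (dT_BO G j).mult_null (rker G j).mult hu

end

/-! ### the sesquilinear form -/

/-- integrand -/
def bi (k : ℝ) {Γ : Set R2} (W V : XS Γ) : R2 → ℂ := Bintegrand k (cp0 W) (cp1 W) (cp0 V) (cp1 V)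

lemma R2_norm_sq (ξ : R2) : ‖ξ‖ ^ 2 = (ξ 0) ^ 2 + (ξ 1) ^ 2 := by
  rw [EuclideanSpace.norm_sq_eq, Fin.sum_univ_two]; simp

lemma nd_nc {Γ : Set R2} (W : XS Γ) (ξ : R2) : ‖cpd W ξ‖ ^ 2 + ‖cpc W ξ‖ ^ 2 =
    ‖ξ‖ ^ 2 * (‖cp0 W ξ‖ ^ 2 + ‖cp1 W ξ‖ ^ 2) := by
  have e1 : cpd W ξ = (ξ 0 : ℂ) * cp0 W ξ + (ξ 1 : ℂ) * cp1 W ξ := rfl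
  have e2 : cpc W ξ = (ξ 1 : ℂ) * cp0 W ξ - (ξ 0 : ℂ) * cp1 W ξ := rfl
  rw [e1, e2, R2_norm_sq, ← Complex.normSq_eq_norm_sq, ← Complex.normSq_eq_norm_sq, ← Complex.normSq_eq_norm_sq,
    ← Complex.normSq_eq_norm_sq]
  simp only [Complex.normSq_apply]
  simp
  ring

/-- high frequency symbol, divergence part -/
def Qa (k : ℝ) (ξ : R2) : ℝ := Real.sqrt (‖ξ‖ ^ 2 - k ^ 2) / ‖ξ‖ ^ 2
/-- high frequency symbol, curl part -/
def Qb (k : ℝ) (ξ : R2) : ℝ := k ^ 2 / (Real.sqrt (‖ξ‖ ^ 2 - k ^ 2) * ‖ξ‖ ^ 2)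

lemma bi_high {k : ℝ} (hk : 0 < k) {Γ : Set R2} (W V : XS Γ) {ξ : R2} (h : 2 * k ≤ ‖ξ‖) :
    bi k W V ξ = (Qa k ξ : ℂ) * (cpd W ξ * starRingEnd ℂ (cpd V ξ)) -
      (Qb k ξ : ℂ) * (cpc W ξ * starRingEnd ℂ (cpc V ξ)) := by
  have e : bi k W V ξ = g0hat k ξ *
    (((‖ξ‖ ^ 2 - k ^ 2 : ℝ) : ℂ) * (cpd W ξ * starRingEnd ℂ (cpd V ξ)) -
      ((k ^ 2 : ℝ) : ℂ) * (cpc W ξ * starRingEnd ℂ (cpc V ξ))) /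
    ((‖ξ‖ ^ 2 : ℝ) : ℂ) := rfl
  have hg : g0hat k ξ = 1 / ((Real.sqrt (‖ξ‖ ^ 2 - k ^ 2) : ℝ) : ℂ) := by
    rw [g0hat, if_neg]; linarith
  have hq : 0 < ‖ξ‖ ^ 2 - k ^ 2 := by nlinarith
  have hq' := Real.sqrt_pos.2 hq
  have hr : 0 < ‖ξ‖ := by linarith
  have hs := Real.mul_self_sqrt hq.le
  rw [e, hg, Qa, Qb]
  set q := Real.sqrt (‖ξ‖ ^ 2 - k ^ 2) with hqd
  rw [← hs]
  have hqC : (q : ℂ) ≠ 0 := by exact_mod_cast hq'.ne'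
  have hrC : ((‖ξ‖ : ℝ) : ℂ) ≠ 0 := by exact_mod_cast hr.ne'
  push_cast
  field_simp

lemma Q_bounds {k : ℝ} (hk : 0 < k) {ξ : R2} (h : 2 * k ≤ ‖ξ‖) :
    0 < Qa k ξ ∧ 0 < Qb k ξ ∧ Qa k ξ ≤ (1 + 1 / (2 * k)) * wt ξ ∧
    ‖ξ‖ ^ 2 * Qb k ξ ≤ 2 * k ^ 2 * (1 + 1 / (2 * k)) * wt ξ ∧ wt ξ ≤ 2 * Qa k ξ ∧
    k ^ 2 * wt ξ ≤ ‖ξ‖ ^ 2 * Qb k ξ := by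
  have hr : 0 < ‖ξ‖ := by linarith
  set r := ‖ξ‖ with hrd
  have hq : 0 < r ^ 2 - k ^ 2 := by nlinarith
  set q := Real.sqrt (r ^ 2 - k ^ 2) with hqd
  have hq' : 0 < q := Real.sqrt_pos.2 hq
  have hs : q * q = r ^ 2 - k ^ 2 := Real.mul_self_sqrt hq.le
  have hqr : q ≤ r := by nlinarith
  have hrq : r ≤ 2 * q := by nlinarith
  have w1 : wt ξ ≤ 1 / r := by
    rw [wt_eq, one_div]
    apply inv_anti₀ hr
    apply Real.le_sqrt_of_sq_le
    linarith
  have w2 : 1 / r ≤ (1 + 1 / (2 * k)) * wt ξ := by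
    rw [wt_eq, div_le_iff₀ hr, mul_comm, ← mul_assoc, ← div_eq_mul_inv, le_div_iff₀ (Real.sqrt_pos.2 (by positivity)),
      one_mul]
    have h1 : Real.sqrt (1 + ‖ξ‖ ^ 2) ≤ 1 + r := by
      rw [Real.sqrt_le_left (by positivity)]; nlinarith
    have h2 : 1 ≤ r * (1 / (2 * k)) := by
      rw [mul_one_div, le_div_iff₀ (by positivity)]; linarith
    linarith
  have a1 : Qa k ξ ≤ 1 / r := by
    rw [Qa, div_le_div_iff₀ (by positivity) hr]
    nlinarith
  have a2 : 1 / r ≤ 2 * Qa k ξ := by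
    rw [Qa, ← mul_div_assoc, div_le_div_iff₀ hr (by positivity)]
    change 1 * r ^ 2 ≤ 2 * q * r
    nlinarith
  have b1 : r ^ 2 * Qb k ξ = k ^ 2 / q := by
    rw [Qb]
    change r ^ 2 * (k ^ 2 / (q * r ^ 2)) = k ^ 2 / q
    field_simp
  have b2 : 1 / q ≤ 2 * (1 / r) := by
    rw [← mul_div_assoc, div_le_div_iff₀ hq' hr]; linarith
  have b3 : 1 / r ≤ 1 / q := by
    rw [div_le_div_iff₀ hr hq']; linarith
  refine ⟨by rw [Qa]; positivity, by rw [Qb]; positivity, a1.trans w2, ?_, w1.trans a2, ?_⟩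
  · rw [b1, div_eq_mul_one_div]
    have := mul_le_mul_of_nonneg_left (b2.trans (mul_le_mul_of_nonneg_left w2 (by norm_num : (0:ℝ) ≤ 2))) (by positivity : 0 ≤ k ^ 2)
    linarith
  · rw [b1, div_eq_mul_one_div]
    exact mul_le_mul_of_nonneg_left (w1.trans b3) (by positivity)

/-- pointwise energy -/
def MX {Γ : Set R2} (W : XS Γ) (ξ : R2) : ℝ :=
  wt ξ * ‖cp0 W ξ‖ ^ 2 + wt ξ * ‖cp1 W ξ‖ ^ 2 + wt ξ * ‖cpd W ξ‖ ^ 2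

lemma MX_nonneg {Γ : Set R2} (W : XS Γ) (ξ : R2) : 0 ≤ MX W ξ := by
  have := wt_pos ξ
  unfold MX; positivity

lemma MX_int {Γ : Set R2} (W : XS Γ) : Integrable (MX W) volume :=
  (((cp0_HT W).memW.2).add (cp1_HT W).memW.2).add (cpd_memW W).2

lemma MX_integral {Γ : Set R2} (W : XS Γ) : ∫ ξ, MX W ξ = NX W := by
  have a1 := integral_add (cp0_HT W).memW.2 (cp1_HT W).memW.2
  have a2 := integral_add ((cp0_HT W).memW.2.add (cp1_HT W).memW.2) (cpd_memW W).2
  simp only [Pi.add_apply] at a2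
  rw [NX, nW, nW, nW, ← a1, ← a2]; rfl

lemma bi_high_bound {k : ℝ} (hk : 0 < k) : ∃ C, 0 ≤ C ∧ ∀ {Γ : Set R2} (W V : XS Γ) (ξ : R2), 2 * k ≤ ‖ξ‖ →
    ‖bi k W V ξ‖ ≤ C * (MX W ξ + MX V ξ) := by
  set c := 1 + 1 / (2 * k) with hc
  have hc0 : 0 < c := by positivity
  refine ⟨c + 2 * k ^ 2 * c, by positivity, fun {Γ} W V ξ h => ?_⟩
  obtain ⟨q1, q2, q3, q4, -, -⟩ := Q_bounds hk h
  have hw := wt_pos ξ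
  rw [bi_high hk W V h]
  refine (norm_sub_le _ _).trans ?_
  rw [norm_mul, norm_mul, norm_mul, norm_mul, RCLike.norm_conj, RCLike.norm_conj, Complex.norm_real, Complex.norm_real,
    Real.norm_of_nonneg q1.le, Real.norm_of_nonneg q2.le]
  have hd : ‖cpd W ξ‖ * ‖cpd V ξ‖ ≤ ‖cpd W ξ‖ ^ 2 + ‖cpd V ξ‖ ^ 2 := by
    nlinarith [sq_nonneg (‖cpd W ξ‖ - ‖cpd V ξ‖), sq_nonneg (‖cpd W ξ‖), sq_nonneg (‖cpd V ξ‖)]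
  have hcc : ‖cpc W ξ‖ * ‖cpc V ξ‖ ≤ ‖cpc W ξ‖ ^ 2 + ‖cpc V ξ‖ ^ 2 := by
    nlinarith [sq_nonneg (‖cpc W ξ‖ - ‖cpc V ξ‖), sq_nonneg (‖cpc W ξ‖), sq_nonneg (‖cpc V ξ‖)]
  have hcb : ∀ U : XS Γ, ‖cpc U ξ‖ ^ 2 ≤ ‖ξ‖ ^ 2 * (‖cp0 U ξ‖ ^ 2 + ‖cp1 U ξ‖ ^ 2) := fun U => by
    have := nd_nc U ξ
    nlinarith [sq_nonneg ‖cpd U ξ‖]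
  have s1 : Qa k ξ * (‖cpd W ξ‖ * ‖cpd V ξ‖) ≤ c * wt ξ * (‖cpd W ξ‖ ^ 2 + ‖cpd V ξ‖ ^ 2) := by gcongr
  have s2 : Qb k ξ * (‖cpc W ξ‖ * ‖cpc V ξ‖) ≤ (2 * k ^ 2 * c * wt ξ) * ((‖cp0 W ξ‖ ^ 2 + ‖cp1 W ξ‖ ^ 2) +
      (‖cp0 V ξ‖ ^ 2 + ‖cp1 V ξ‖ ^ 2)) := by
    calc Qb k ξ * (‖cpc W ξ‖ * ‖cpc V ξ‖) ≤ Qb k ξ * (‖ξ‖ ^ 2 * (‖cp0 W ξ‖ ^ 2 + ‖cp1 W ξ‖ ^ 2) +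
          ‖ξ‖ ^ 2 * (‖cp0 V ξ‖ ^ 2 + ‖cp1 V ξ‖ ^ 2)) := by
            gcongr; exact hcc.trans (add_le_add (hcb W) (hcb V))
      _ = (‖ξ‖ ^ 2 * Qb k ξ) * ((‖cp0 W ξ‖ ^ 2 + ‖cp1 W ξ‖ ^ 2) + (‖cp0 V ξ‖ ^ 2 + ‖cp1 V ξ‖ ^ 2)) := by ring
      _ ≤ _ := by gcongr
  refine (add_le_add s1 s2).trans ?_
  unfold MX
  have p1 : 0 ≤ c * wt ξ * (‖cp0 W ξ‖ ^ 2 + ‖cp1 W ξ‖ ^ 2 + (‖cp0 V ξ‖ ^ 2 + ‖cp1 V ξ‖ ^ 2)) := by positivity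
  have p2 : 0 ≤ 2 * k ^ 2 * c * wt ξ * (‖cpd W ξ‖ ^ 2 + ‖cpd V ξ‖ ^ 2) := by positivity
  linarith

/-- size of the field -/
def LX {Γ : Set R2} (W : XS Γ) (ξ : R2) : ℝ := ‖cp0 W ξ‖ + ‖cp1 W ξ‖

lemma LX_nonneg {Γ : Set R2} (W : XS Γ) (ξ : R2) : 0 ≤ LX W ξ := by unfold LX; positivity

lemma bi_low_bound {k : ℝ} (hk : 0 < k) {Γ : Set R2} (W V : XS Γ) {ξ : R2} (h : ‖ξ‖ < 2 * k) :
    ‖bi k W V ξ‖ ≤ ‖g0hat k ξ‖ * (4 * k ^ 2) * (LX W ξ * LX V ξ) := by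
  have e : bi k W V ξ = g0hat k ξ *
    (((‖ξ‖ ^ 2 - k ^ 2 : ℝ) : ℂ) * (cpd W ξ * starRingEnd ℂ (cpd V ξ)) -
      ((k ^ 2 : ℝ) : ℂ) * (cpc W ξ * starRingEnd ℂ (cpc V ξ))) /
    ((‖ξ‖ ^ 2 : ℝ) : ℂ) := rfl
  have hL : ∀ U : XS Γ, ‖cpd U ξ‖ ≤ ‖ξ‖ * LX U ξ ∧ ‖cpc U ξ‖ ≤ ‖ξ‖ * LX U ξ := by
    intro U
    have h1 := nd_nc U ξ
    have h2 : ‖cp0 U ξ‖ ^ 2 + ‖cp1 U ξ‖ ^ 2 ≤ LX U ξ ^ 2 := by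
      unfold LX
      nlinarith [mul_nonneg (norm_nonneg (cp0 U ξ)) (norm_nonneg (cp1 U ξ))]
    have h3 := mul_le_mul_of_nonneg_left h2 (sq_nonneg ‖ξ‖)
    have h4 := LX_nonneg U ξ
    constructor
    · apply le_of_sq_le_sq _ (by positivity)
      nlinarith [sq_nonneg ‖cpc U ξ‖]
    · apply le_of_sq_le_sq _ (by positivity)
      nlinarith [sq_nonneg ‖cpd U ξ‖]
  have hLW := LX_nonneg W ξ
  have hLV := LX_nonneg V ξ
  rcases eq_or_lt_of_le (norm_nonneg ξ) with hr | hr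
  · rw [e, ← hr]
    simp only [ne_eq, OfNat.ofNat_ne_zero, not_false_eq_true, zero_pow, ofReal_zero, div_zero, norm_zero]
    positivity
  rw [e, norm_div, norm_mul, Complex.norm_real, Real.norm_of_nonneg (by positivity),
    div_le_iff₀ (by positivity)]
  have hab : |‖ξ‖ ^ 2 - k ^ 2| ≤ 3 * k ^ 2 := by
    rw [abs_le]; constructor <;> nlinarith
  have key : ‖((‖ξ‖ ^ 2 - k ^ 2 : ℝ) : ℂ) * (cpd W ξ * starRingEnd ℂ (cpd V ξ)) -
      ((k ^ 2 : ℝ) : ℂ) * (cpc W ξ * starRingEnd ℂ (cpc V ξ))‖ ≤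
      3 * k ^ 2 * ((‖ξ‖ * LX W ξ) * (‖ξ‖ * LX V ξ)) + k ^ 2 * ((‖ξ‖ * LX W ξ) * (‖ξ‖ * LX V ξ)) := by
    refine (norm_sub_le _ _).trans ?_
    rw [norm_mul, norm_mul, norm_mul, norm_mul, RCLike.norm_conj, RCLike.norm_conj, Complex.norm_real,
      Complex.norm_real, Real.norm_eq_abs, Real.norm_of_nonneg (by positivity)]
    have := hL W
    have := hL V
    gcongr <;> tauto
  calc _ ≤ ‖g0hat k ξ‖ * (3 * k ^ 2 * ((‖ξ‖ * LX W ξ) * (‖ξ‖ * LX V ξ)) +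
        k ^ 2 * ((‖ξ‖ * LX W ξ) * (‖ξ‖ * LX V ξ))) := by gcongr
    _ = _ := by ring

lemma g0hat_meas (k : ℝ) : Measurable (g0hat k) := by
  unfold g0hat
  refine Measurable.ite (measurableSet_lt measurable_norm measurable_const) ?_ ?_
  · refine Measurable.div measurable_const ?_
    exact Complex.measurable_ofReal.comp (Continuous.measurable (by fun_prop))
  · refine Measurable.div measurable_const ?_
    exact Complex.measurable_ofReal.comp (Continuous.measurable (by fun_prop))

lemma cpd_cont {Γ : Set R2} (F : XS Γ) : Continuous (cpd F) := by
  have h0 := (cp0_HT F).1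
  have h1 := (cp1_HT F).1
  have : cpd F = fun ξ : R2 => (ξ 0 : ℂ) * cp0 F ξ + (ξ 1 : ℂ) * cp1 F ξ := rfl
  rw [this]; fun_prop
lemma cpc_cont {Γ : Set R2} (F : XS Γ) : Continuous (cpc F) := by
  have h0 := (cp0_HT F).1
  have h1 := (cp1_HT F).1
  have : cpc F = fun ξ : R2 => (ξ 1 : ℂ) * cp0 F ξ - (ξ 0 : ℂ) * cp1 F ξ := rfl
  rw [this]; fun_prop
lemma LX_cont {Γ : Set R2} (F : XS Γ) : Continuous (LX F) := by
  have h0 := (cp0_HT F).1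
  have h1 := (cp1_HT F).1
  unfold LX; fun_prop

lemma bi_meas (k : ℝ) {Γ : Set R2} (W V : XS Γ) : Measurable (bi k W V) := by
  have e : bi k W V = fun ξ => g0hat k ξ *
    (((‖ξ‖ ^ 2 - k ^ 2 : ℝ) : ℂ) * (cpd W ξ * starRingEnd ℂ (cpd V ξ)) -
      ((k ^ 2 : ℝ) : ℂ) * (cpc W ξ * starRingEnd ℂ (cpc V ξ))) /
    ((‖ξ‖ ^ 2 : ℝ) : ℂ) := rfl
  have h1 := cpd_cont W
  have h2 := cpd_cont V
  have h3 := cpc_cont W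
  have h4 := cpc_cont V
  rw [e]
  refine Measurable.div ((g0hat_meas k).mul (Continuous.measurable ?_)) (Continuous.measurable ?_)
  · have := Complex.continuous_conj
    fun_prop
  · fun_prop

lemma sqrt_abs_int {k : ℝ} (hk : 0 < k) :
    IntegrableOn (fun y : ℝ => |y - k| ^ (-(1/2) : ℝ)) (Set.Ioo 0 (2 * k)) volume := by
  have h0 : ∀ a b : ℝ, IntervalIntegrable (fun x : ℝ => x ^ (-(1/2) : ℝ)) volume a b := fun a b =>
    intervalIntegral.intervalIntegrable_rpow' (by norm_num)
  have h1 : IntervalIntegrable (fun y : ℝ => (y - k) ^ (-(1/2) : ℝ)) volume k (2 * k) := by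
    have := (h0 0 k).comp_sub_right k
    simpa [two_mul] using this
  have h2 : IntervalIntegrable (fun y : ℝ => (k - y) ^ (-(1/2) : ℝ)) volume 0 k := by
    have := (h0 0 k).comp_sub_left k
    simpa using this.symm
  have i1 : IntegrableOn (fun y : ℝ => |y - k| ^ (-(1/2) : ℝ)) (Set.Ioc k (2 * k)) volume := by
    rw [intervalIntegrable_iff_integrableOn_Ioc_of_le (by linarith)] at h1
    refine h1.congr_fun (fun y hy => ?_) measurableSet_Ioc
    simp only
    rw [abs_of_nonneg (by linarith [hy.1])]
  have i2 : IntegrableOn (fun y : ℝ => |y - k| ^ (-(1/2) : ℝ)) (Set.Ioc 0 k) volume := by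
    rw [intervalIntegrable_iff_integrableOn_Ioc_of_le (by linarith)] at h2
    refine h2.congr_fun (fun y hy => ?_) measurableSet_Ioc
    simp only
    rw [abs_of_nonpos (by linarith [hy.2])]
    congr 1; ring
  refine (i2.union i1).mono_set ?_
  intro y hy
  rcases le_total y k with h | h
  · exact Or.inl ⟨hy.1, h⟩
  · rcases eq_or_lt_of_le h with h' | h'
    · exact Or.inl ⟨hy.1, h'.symm.le⟩
    · exact Or.inr ⟨h', hy.2.le⟩

lemma g0hat_norm_le {k : ℝ} (hk : 0 < k) (ξ : R2) :
    ‖g0hat k ξ‖ ≤ (Real.sqrt k)⁻¹ * |‖ξ‖ - k| ^ (-(1/2) : ℝ) := by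
  have e : ‖g0hat k ξ‖ = (Real.sqrt |‖ξ‖ ^ 2 - k ^ 2|)⁻¹ := by
    unfold g0hat
    have hr := norm_nonneg ξ
    split_ifs with h
    · rw [norm_div, Complex.norm_I, Complex.norm_real, Real.norm_of_nonneg (Real.sqrt_nonneg _), one_div,
        abs_of_nonpos (by nlinarith)]
      congr 2; ring
    · rw [norm_div, norm_one, Complex.norm_real, Real.norm_of_nonneg (Real.sqrt_nonneg _), one_div,
        abs_of_nonneg (by nlinarith)]
  have hr := norm_nonneg ξ
  have e2 : |‖ξ‖ - k| ^ (-(1/2) : ℝ) = (Real.sqrt |‖ξ‖ - k|)⁻¹ := by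
    rw [Real.rpow_neg (abs_nonneg _), Real.sqrt_eq_rpow]
  rw [e, e2, ← mul_inv, ← Real.sqrt_mul hk.le]
  rcases eq_or_ne ‖ξ‖ k with h | h
  · rw [h]; simp
  have hpos : 0 < |‖ξ‖ - k| := abs_pos.2 (sub_ne_zero.2 h)
  apply inv_anti₀ (Real.sqrt_pos.2 (by positivity))
  apply Real.sqrt_le_sqrt
  have : ‖ξ‖ ^ 2 - k ^ 2 = (‖ξ‖ + k) * (‖ξ‖ - k) := by ring
  rw [this, abs_mul, abs_of_pos (show 0 < ‖ξ‖ + k by linarith)]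
  gcongr
  linarith

lemma g0hat_int {k : ℝ} (hk : 0 < k) : IntegrableOn (fun ξ => ‖g0hat k ξ‖) (Metric.ball (0 : R2) (2 * k)) volume := by
  have h : IntegrableOn (fun ξ : R2 => (fun y : ℝ => |y - k| ^ (-(1/2) : ℝ)) ‖ξ‖) (Metric.ball (0 : R2) (2 * k)) volume := by
    refine (integrableOn_fun_norm_addHaar (volume : Measure R2) (f := fun y : ℝ => |y - k| ^ (-(1/2) : ℝ))).2 ?_
    have hd : Module.finrank ℝ R2 - 1 = 1 := by simp
    rw [hd]
    refine Integrable.mono' ((sqrt_abs_int hk).const_mul (2 * k)) ?_ ?_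
    · refine Measurable.aestronglyMeasurable ?_
      simp only [smul_eq_mul, pow_one]
      fun_prop
    · refine (ae_restrict_iff' measurableSet_Ioo).2 (Eventually.of_forall fun y hy => ?_)
      have h1 : 0 ≤ |y - k| ^ (-(1/2) : ℝ) := by positivity
      rw [pow_one, smul_eq_mul, norm_mul, Real.norm_of_nonneg hy.1.le, Real.norm_of_nonneg h1]
      gcongr
      exact hy.2.le
  refine Integrable.mono' (h.const_mul (Real.sqrt k)⁻¹) (g0hat_meas k).norm.aestronglyMeasurable
    (Eventually.of_forall fun ξ => ?_)
  rw [norm_norm]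
  exact g0hat_norm_le hk ξ

lemma LX_bdd {Γ : Set R2} (G : GeoData Γ) (R : ℝ) : ∃ C, 0 ≤ C ∧ ∀ (W : XS Γ) (ξ : R2), ‖ξ‖ < R →
    LX W ξ ^ 2 ≤ C * NX W := by
  obtain ⟨C0, h0, hC0⟩ := cp0_BO G
  obtain ⟨C1, h1, hC1⟩ := cp1_BO G
  refine ⟨2 * ((1 + R ^ 2) * C0) + 2 * ((1 + R ^ 2) * C1), by positivity, fun W ξ h => ?_⟩
  have hN := NX_nonneg W
  have hr := norm_nonneg ξ
  have hw : (wt ξ)⁻¹ ≤ 1 + R ^ 2 := (wt_inv_le ξ).trans (by nlinarith)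
  have a0 := (wt_inv_bound ξ ((hC0 W).2.2.2 ξ)).trans (mul_le_mul_of_nonneg_right hw (by positivity))
  have a1 := (wt_inv_bound ξ ((hC1 W).2.2.2 ξ)).trans (mul_le_mul_of_nonneg_right hw (by positivity))
  unfold LX
  nlinarith [sq_nonneg (‖cp0 W ξ‖ - ‖cp1 W ξ‖)]

/-- integrability and boundedness of the form on a set -/
def FB (k : ℝ) (Γ : Set R2) (s : Set R2) : Prop :=
  ∃ C, 0 ≤ C ∧ ∀ W V : XS Γ, IntegrableOn (bi k W V) s volume ∧ ‖∫ ξ in s, bi k W V ξ‖ ≤ C * (NX W + NX V)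

lemma FB_high {k : ℝ} (hk : 0 < k) (Γ : Set R2) : FB k Γ (Metric.ball (0 : R2) (2 * k))ᶜ := by
  obtain ⟨C, hC0, hC⟩ := bi_high_bound hk
  have hms : MeasurableSet (Metric.ball (0 : R2) (2 * k))ᶜ := Metric.isOpen_ball.measurableSet.compl
  have hle : ∀ W V : XS Γ, ∀ᵐ ξ ∂(volume.restrict (Metric.ball (0 : R2) (2 * k))ᶜ),
      ‖bi k W V ξ‖ ≤ C * (MX W ξ + MX V ξ) := fun W V =>
    (ae_restrict_iff' hms).2 (Eventually.of_forall fun ξ hξ => hC W V ξ (by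
      simpa using hξ))
  refine ⟨C, hC0, fun W V => ⟨?_, ?_⟩⟩
  · exact Integrable.mono' (((MX_int W).add (MX_int V)).const_mul C).integrableOn
      (bi_meas k W V).aestronglyMeasurable (hle W V)
  · refine (norm_integral_le_of_norm_le (((MX_int W).add (MX_int V)).const_mul C).integrableOn (hle W V)).trans ?_
    refine (setIntegral_le_integral (((MX_int W).add (MX_int V)).const_mul C) (Eventually.of_forall fun ξ => ?_)).trans ?_
    · exact mul_nonneg hC0 (add_nonneg (MX_nonneg W ξ) (MX_nonneg V ξ))
    · have := integral_add (MX_int W) (MX_int V)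
      simp only [Pi.add_apply]
      rw [integral_const_mul, this, MX_integral, MX_integral]

lemma FB_low {k : ℝ} (hk : 0 < k) {Γ : Set R2} (G : GeoData Γ) : FB k Γ (Metric.ball (0 : R2) (2 * k)) := by
  obtain ⟨C, hC0, hC⟩ := LX_bdd G (2 * k)
  have hms : MeasurableSet (Metric.ball (0 : R2) (2 * k)) := Metric.isOpen_ball.measurableSet
  have hg := g0hat_int hk
  set I0 := ∫ ξ in Metric.ball (0 : R2) (2 * k), ‖g0hat k ξ‖ with hI0
  have hI0n : 0 ≤ I0 := integral_nonneg fun ξ => norm_nonneg _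
  have hle : ∀ W V : XS Γ, ∀ᵐ ξ ∂(volume.restrict (Metric.ball (0 : R2) (2 * k))),
      ‖bi k W V ξ‖ ≤ ((4 * k ^ 2) * (C * (NX W + NX V))) * ‖g0hat k ξ‖ := fun W V =>
    (ae_restrict_iff' hms).2 (Eventually.of_forall fun ξ hξ => by
      have h : ‖ξ‖ < 2 * k := by simpa using hξ
      refine (bi_low_bound hk W V h).trans ?_
      have h1 := hC W ξ h
      have h2 := hC V ξ h
      have h3 : LX W ξ * LX V ξ ≤ C * (NX W + NX V) := by
        nlinarith [sq_nonneg (LX W ξ - LX V ξ), sq_nonneg (LX W ξ), sq_nonneg (LX V ξ)]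
      calc _ ≤ ‖g0hat k ξ‖ * (4 * k ^ 2) * (C * (NX W + NX V)) := by gcongr
        _ = _ := by ring)
  refine ⟨(4 * k ^ 2) * C * I0, by positivity, fun W V => ⟨?_, ?_⟩⟩
  · exact Integrable.mono' (hg.const_mul _) (bi_meas k W V).aestronglyMeasurable (hle W V)
  · refine (norm_integral_le_of_norm_le (hg.const_mul _) (hle W V)).trans ?_
    rw [integral_const_mul]
    exact le_of_eq (by ring)

lemma bi_add_left (k : ℝ) {Γ : Set R2} (W W' V : XS Γ) (ξ : R2) : bi k (W + W') V ξ = bi k W V ξ + bi k W' V ξ := by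
  simp only [bi, Bintegrand, map_add, dotFt_add, curlFt_add, Pi.add_apply]; ring
lemma bi_smul_left (k : ℝ) {Γ : Set R2} (c : ℂ) (W V : XS Γ) (ξ : R2) : bi k (c • W) V ξ = c * bi k W V ξ := by
  simp only [bi, Bintegrand, map_smul, dotFt_smul, curlFt_smul, Pi.smul_apply, smul_eq_mul]; ring
lemma bi_add_right (k : ℝ) {Γ : Set R2} (W V V' : XS Γ) (ξ : R2) : bi k W (V + V') ξ = bi k W V ξ + bi k W V' ξ := by
  simp only [bi, Bintegrand, map_add, dotFt_add, curlFt_add, Pi.add_apply]; ring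
lemma bi_smul_right (k : ℝ) {Γ : Set R2} (c : ℂ) (W V : XS Γ) (ξ : R2) :
    bi k W (c • V) ξ = starRingEnd ℂ c * bi k W V ξ := by
  simp only [bi, Bintegrand, map_smul, dotFt_smul, curlFt_smul, Pi.smul_apply, smul_eq_mul, map_mul]; ring

lemma FB.op {k : ℝ} {Γ : Set R2} [CompleteSpace (SX Γ)] {s : Set R2} (h : FB k Γ s) :
    ∃ A : SX Γ →L[ℂ] SX Γ, ∀ W V, inner ℂ (eX V) (A (eX W)) = ∫ ξ in s, bi k W V ξ := by
  obtain ⟨C, hC0, hC⟩ := h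
  refine form_op _ ?_ ?_ ?_ ?_ (C := C) (fun W V => (hC W V).2)
  · intro W W' V
    simp_rw [bi_add_left]
    exact integral_add (hC W V).1 (hC W' V).1
  · intro c W V
    simp_rw [bi_smul_left]
    exact integral_const_mul _ _
  · intro W V V'
    simp_rw [bi_add_right]
    exact integral_add (hC W V).1 (hC W V').1
  · intro c W V
    simp_rw [bi_smul_right]
    exact integral_const_mul _ _

/-! ### the two parts of the operator -/

lemma bi_conj {k : ℝ} (hk : 0 < k) {Γ : Set R2} (W V : XS Γ) {ξ : R2} (h : 2 * k ≤ ‖ξ‖) :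
    bi k W V ξ = starRingEnd ℂ (bi k V W ξ) := by
  rw [bi_high hk W V h, bi_high hk V W h]
  simp only [map_sub, map_mul, Complex.conj_ofReal, Complex.conj_conj]
  ring

lemma high_symm {k : ℝ} (hk : 0 < k) {Γ : Set R2} {A : SX Γ →L[ℂ] SX Γ}
    (hA : ∀ W V, inner ℂ (eX V) (A (eX W)) = ∫ ξ in (Metric.ball (0 : R2) (2 * k))ᶜ, bi k W V ξ)
    (x y : SX Γ) : inner ℂ (A x) y = inner ℂ x (A y) := by
  have hms : MeasurableSet (Metric.ball (0 : R2) (2 * k))ᶜ := Metric.isOpen_ball.measurableSet.compl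
  have h1 := hA (eX.symm x) (eX.symm y)
  have h2 := hA (eX.symm y) (eX.symm x)
  rw [LinearEquiv.apply_symm_apply, LinearEquiv.apply_symm_apply] at h1 h2
  refine (inner_conj_symm (𝕜 := ℂ) (A x) y).symm.trans ?_
  rw [h1, h2, ← integral_conj]
  refine setIntegral_congr_fun hms fun ξ hξ => ?_
  exact (bi_conj hk _ _ (by simpa using hξ)).symm

lemma low_CC {k : ℝ} (hk : 0 < k) {Γ : Set R2} [CompleteSpace (SX Γ)] (G : GeoData Γ) {A : SX Γ →L[ℂ] SX Γ}
    (hA : ∀ W V, inner ℂ (eX V) (A (eX W)) = ∫ ξ in Metric.ball (0 : R2) (2 * k), bi k W V ξ) : CC A := by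
  intro u hu
  have hms : MeasurableSet (Metric.ball (0 : R2) (2 * k)) := Metric.isOpen_ball.measurableSet
  obtain ⟨C, hC0, hC⟩ := LX_bdd G (2 * k)
  obtain ⟨M, hM0, hM⟩ := hu.NXbdd
  have hg := g0hat_int hk
  have hLw : ∀ n (ξ : R2), ‖ξ‖ < 2 * k → LX (eX.symm (u n)) ξ ≤ Real.sqrt (C * M) := fun n ξ h =>
    Real.le_sqrt_of_sq_le ((hC _ ξ h).trans (by gcongr; exact hM n))
  have hIntg : ∀ n, IntegrableOn (fun ξ => ‖g0hat k ξ‖ * LX (eX.symm (u n)) ξ) (Metric.ball (0 : R2) (2 * k)) volume := by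
    intro n
    refine Integrable.mono' (hg.const_mul (Real.sqrt (C * M)))
      ((g0hat_meas k).norm.mul (LX_cont _).measurable).aestronglyMeasurable
      ((ae_restrict_iff' hms).2 (Eventually.of_forall fun ξ hξ => ?_))
    have h : ‖ξ‖ < 2 * k := by simpa using hξ
    rw [norm_mul, norm_norm, Real.norm_of_nonneg (LX_nonneg _ _), mul_comm]
    gcongr
    exact hLw n ξ h
  have hJ : Tendsto (fun n => ∫ ξ in Metric.ball (0 : R2) (2 * k), ‖g0hat k ξ‖ * LX (eX.symm (u n)) ξ) atTop (𝓝 0) := by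
    have h0 : (0 : ℝ) = ∫ ξ in Metric.ball (0 : R2) (2 * k), (0 : ℝ) := by simp
    rw [h0]
    refine tendsto_integral_of_dominated_convergence (fun ξ => Real.sqrt (C * M) * ‖g0hat k ξ‖)
      (fun n => (hIntg n).aestronglyMeasurable) (hg.const_mul _) (fun n => ?_) ?_
    · refine (ae_restrict_iff' hms).2 (Eventually.of_forall fun ξ hξ => ?_)
      have h : ‖ξ‖ < 2 * k := by simpa using hξ
      rw [norm_mul, norm_norm, Real.norm_of_nonneg (LX_nonneg _ _), mul_comm]
      gcongr
      exact hLw n ξ h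
    · refine Eventually.of_forall fun ξ => ?_
      have := (((cp0_BO G).eval hu ξ).norm.add ((cp1_BO G).eval hu ξ).norm).const_mul ‖g0hat k ξ‖
      simpa [LX] using this
  have key : ∀ n, ‖A (u n)‖ ≤ (4 * k ^ 2 * Real.sqrt C) *
      ∫ ξ in Metric.ball (0 : R2) (2 * k), ‖g0hat k ξ‖ * LX (eX.symm (u n)) ξ := by
    intro n
    set J := ∫ ξ in Metric.ball (0 : R2) (2 * k), ‖g0hat k ξ‖ * LX (eX.symm (u n)) ξ with hJd
    have hJ0 : 0 ≤ J := integral_nonneg fun ξ => mul_nonneg (norm_nonneg _) (LX_nonneg _ _)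
    have h1 := hA (eX.symm (u n)) (eX.symm (A (u n)))
    rw [LinearEquiv.apply_symm_apply, LinearEquiv.apply_symm_apply] at h1
    have h2 : ‖A (u n)‖ ^ 2 ≤ (4 * k ^ 2 * Real.sqrt C * ‖A (u n)‖) * J := by
      have e : ‖A (u n)‖ ^ 2 = ‖inner ℂ (A (u n)) (A (u n))‖ := by
        refine Eq.trans ?_ (congrArg norm (inner_self_eq_norm_sq_to_K (𝕜 := ℂ) (A (u n)))).symm
        rw [norm_pow]; simp
      rw [e, h1, hJd, ← integral_const_mul]
      refine norm_integral_le_of_norm_le ((hIntg n).const_mul _)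
        ((ae_restrict_iff' hms).2 (Eventually.of_forall fun ξ hξ => ?_))
      have h : ‖ξ‖ < 2 * k := by simpa using hξ
      refine (bi_low_bound hk _ _ h).trans ?_
      have h3 : LX (eX.symm (A (u n))) ξ ≤ Real.sqrt C * ‖A (u n)‖ := by
        have := hC (eX.symm (A (u n))) ξ h
        rw [← eX_norm, LinearEquiv.apply_symm_apply] at this
        have h4 := Real.le_sqrt_of_sq_le this
        rwa [Real.sqrt_mul hC0, Real.sqrt_sq (norm_nonneg _)] at h4
      have h5 := LX_nonneg (eX.symm (u n)) ξ
      calc _ ≤ ‖g0hat k ξ‖ * (4 * k ^ 2) * (LX (eX.symm (u n)) ξ * (Real.sqrt C * ‖A (u n)‖)) := by gcongr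
        _ = _ := by ring
    by_contra hcon
    push Not at hcon
    have hp : 0 < ‖A (u n)‖ := lt_of_le_of_lt (by positivity) hcon
    nlinarith
  refine tendsto_zero_iff_norm_tendsto_zero.2 (squeeze_zero (fun n => norm_nonneg _) key ?_)
  simpa using hJ.const_mul (4 * k ^ 2 * Real.sqrt C)

lemma re_aux1 (d r : ℂ) : ‖d‖ ^ 2 ≤ 2 * (d * starRingEnd ℂ (d + 2 * r)).re + 4 * ‖r‖ ^ 2 := by
  rw [← Complex.normSq_eq_norm_sq, ← Complex.normSq_eq_norm_sq, Complex.normSq_apply, Complex.normSq_apply]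
  simp
  nlinarith [sq_nonneg (d.re + 2 * r.re), sq_nonneg (d.im + 2 * r.im)]

lemma re_aux2 (c q : ℂ) : ‖c‖ ^ 2 ≤ - 2 * (c * starRingEnd ℂ (2 * q - c)).re + 4 * ‖q‖ ^ 2 := by
  rw [← Complex.normSq_eq_norm_sq, ← Complex.normSq_eq_norm_sq, Complex.normSq_apply, Complex.normSq_apply]
  simp
  nlinarith [sq_nonneg (c.re - 2 * q.re), sq_nonneg (c.im - 2 * q.im)]

lemma coercive_pw {k : ℝ} (hk : 0 < k) {Γ : Set R2} (G : GeoData Γ) (W : XS Γ) {ξ : R2} (h : 2 * k ≤ ‖ξ‖) :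
    MX W ξ ≤ (2 + 1 / (2 * k ^ 2) + 1 / k ^ 2) * (2 * (bi k W ((2 : ℂ) • PX G W - W) ξ).re +
      4 * (1 + 1 / (2 * k)) * (wt ξ * ‖RT G W ξ‖ ^ 2) +
      8 * k ^ 2 * (1 + 1 / (2 * k)) * (wt ξ * ‖PT G 0 W ξ‖ ^ 2 + wt ξ * ‖PT G 1 W ξ‖ ^ 2)) := by
  obtain ⟨q1, q2, q3, q4, q5, q6⟩ := Q_bounds hk h
  have hw := wt_pos ξ
  have hr : 0 < ‖ξ‖ := by linarith
  set c := 1 + 1 / (2 * k) with hc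
  have hc0 : 0 < c := by positivity
  have hbi := congrArg Complex.re (bi_high hk W ((2 : ℂ) • PX G W - W) h)
  have e1 : cpd ((2 : ℂ) • PX G W - W) ξ = cpd W ξ + 2 * RT G W ξ := by
    rw [map_sub, map_smul, cpd_PX]; simp; ring
  have e2 : cpc ((2 : ℂ) • PX G W - W) ξ = 2 * cpc (PX G W) ξ - cpc W ξ := by
    rw [map_sub, map_smul]; simp
  rw [e1, e2, Complex.sub_re, Complex.re_ofReal_mul, Complex.re_ofReal_mul] at hbi
  have r1 := re_aux1 (cpd W ξ) (RT G W ξ)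
  have r2 := re_aux2 (cpc W ξ) (cpc (PX G W) ξ)
  have s1 := mul_le_mul_of_nonneg_left r1 q1.le
  have s2 := mul_le_mul_of_nonneg_left r2 q2.le
  have t1 : Qa k ξ * ‖RT G W ξ‖ ^ 2 ≤ c * wt ξ * ‖RT G W ξ‖ ^ 2 := by gcongr
  have t2 : Qb k ξ * ‖cpc (PX G W) ξ‖ ^ 2 ≤ 2 * k ^ 2 * c * wt ξ * (‖PT G 0 W ξ‖ ^ 2 + ‖PT G 1 W ξ‖ ^ 2) := by
    have := nd_nc (PX G W) ξ
    rw [cp0_PX, cp1_PX] at this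
    calc Qb k ξ * ‖cpc (PX G W) ξ‖ ^ 2 ≤ Qb k ξ * (‖ξ‖ ^ 2 * (‖PT G 0 W ξ‖ ^ 2 + ‖PT G 1 W ξ‖ ^ 2)) := by
          gcongr
          nlinarith [sq_nonneg ‖cpd (PX G W) ξ‖]
      _ = (‖ξ‖ ^ 2 * Qb k ξ) * (‖PT G 0 W ξ‖ ^ 2 + ‖PT G 1 W ξ‖ ^ 2) := by ring
      _ ≤ _ := by gcongr
  have main : Qa k ξ * ‖cpd W ξ‖ ^ 2 + Qb k ξ * ‖cpc W ξ‖ ^ 2 ≤ 2 * (bi k W ((2 : ℂ) • PX G W - W) ξ).re +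
      4 * c * (wt ξ * ‖RT G W ξ‖ ^ 2) +
      8 * k ^ 2 * c * (wt ξ * ‖PT G 0 W ξ‖ ^ 2 + wt ξ * ‖PT G 1 W ξ‖ ^ 2) := by
    rw [hbi]
    nlinarith
  refine le_trans ?_ (mul_le_mul_of_nonneg_left main (by positivity))
  set D := ‖cpd W ξ‖ ^ 2 with hD
  set E := ‖cpc W ξ‖ ^ 2 with hE
  have hD0 : 0 ≤ D := by positivity
  have hE0 : 0 ≤ E := by positivity
  have f1 : wt ξ * D ≤ 2 * (Qa k ξ * D) := by
    calc _ ≤ 2 * Qa k ξ * D := by gcongr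
      _ = _ := by ring
  have hF : ‖cp0 W ξ‖ ^ 2 + ‖cp1 W ξ‖ ^ 2 = (D + E) / ‖ξ‖ ^ 2 := by
    rw [eq_div_iff (by positivity)]
    have := nd_nc W ξ
    linarith
  have f2 : wt ξ * D / ‖ξ‖ ^ 2 ≤ 1 / (2 * k ^ 2) * (Qa k ξ * D) := by
    rw [div_le_iff₀ (by positivity)]
    refine f1.trans ?_
    have : 4 * k ^ 2 ≤ ‖ξ‖ ^ 2 := by nlinarith
    calc 2 * (Qa k ξ * D) = 1 / (2 * k ^ 2) * (Qa k ξ * D) * (4 * k ^ 2) := by field_simp; ring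
      _ ≤ _ := by gcongr
  have f3 : wt ξ * E / ‖ξ‖ ^ 2 ≤ 1 / k ^ 2 * (Qb k ξ * E) := by
    rw [div_le_iff₀ (by positivity)]
    calc wt ξ * E = 1 / k ^ 2 * E * (k ^ 2 * wt ξ) := by field_simp
      _ ≤ 1 / k ^ 2 * E * (‖ξ‖ ^ 2 * Qb k ξ) := by gcongr
      _ = _ := by ring
  have e : MX W ξ = wt ξ * D / ‖ξ‖ ^ 2 + wt ξ * E / ‖ξ‖ ^ 2 + wt ξ * D := by
    have : MX W ξ = wt ξ * (‖cp0 W ξ‖ ^ 2 + ‖cp1 W ξ‖ ^ 2) + wt ξ * D := by rw [MX]; ring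
    rw [this, hF]; ring
  rw [e]
  have g1 : 0 ≤ 1 / k ^ 2 * (Qa k ξ * D) := by positivity
  have g2 : 0 ≤ (2 + 1 / (2 * k ^ 2)) * (Qb k ξ * E) := by positivity
  nlinarith

lemma high_PH {k : ℝ} (hk : 0 < k) {Γ : Set R2} [CompleteSpace (SX Γ)] (G : GeoData Γ) {A : SX Γ →L[ℂ] SX Γ}
    (hA : ∀ W V, inner ℂ (eX V) (A (eX W)) = ∫ ξ in (Metric.ball (0 : R2) (2 * k))ᶜ, bi k W V ξ) : PH A := by
  intro u hu hAu
  have hmb : MeasurableSet (Metric.ball (0 : R2) (2 * k)) := Metric.isOpen_ball.measurableSet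
  have hms := hmb.compl
  obtain ⟨M, hM0, hM⟩ := hu.NXbdd
  obtain ⟨CP, hCP0, hCP⟩ := PX_bdd G
  obtain ⟨CF, hCF0, hCF⟩ := FB_high hk Γ
  set w := fun n => eX.symm (u n) with hw
  set V := fun n => (2 : ℂ) • PX G (w n) - w n with hV
  set c := 1 + 1 / (2 * k) with hc
  set c1 := 2 + 1 / (2 * k ^ 2) + 1 / k ^ 2 with hc1
  have hc0 : 0 < c := by positivity
  have hc10 : 0 < c1 := by positivity
  -- low part
  have hlow : Tendsto (fun n => ∫ ξ in Metric.ball (0 : R2) (2 * k), MX (w n) ξ) atTop (𝓝 0) := by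
    have := (((cp0_BO G).low hu (2 * k)).add ((cp1_BO G).low hu (2 * k))).add ((cpd_BO G).low hu (2 * k))
    simp only [add_zero] at this
    refine this.congr fun n => ?_
    have a1 := integral_add (cp0_HT (w n)).memW.2.integrableOn (cp1_HT (w n)).memW.2.integrableOn
      (μ := volume.restrict (Metric.ball (0 : R2) (2 * k)))
    have a2 := integral_add (((cp0_HT (w n)).memW.2.add (cp1_HT (w n)).memW.2).integrableOn)
      (cpd_memW (w n)).2.integrableOn (μ := volume.restrict (Metric.ball (0 : R2) (2 * k)))
    simp only [Pi.add_apply] at a2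
    rw [← a1, ← a2]; rfl
  -- the pairing
  have hVb : ∀ n, ‖eX (V n)‖ ≤ 2 * Real.sqrt (CP * M) + Real.sqrt M := by
    intro n
    have e : eX (V n) = (2 : ℂ) • eX (PX G (w n)) - eX (w n) := by
      simp only [hV]; rw [map_sub, map_smul]
    rw [e]
    refine (norm_sub_le _ _).trans ?_
    rw [norm_smul]
    have h1 : ‖eX (w n)‖ ≤ Real.sqrt M := Real.le_sqrt_of_sq_le (by rw [eX_norm]; exact hM n)
    have h2 : ‖eX (PX G (w n))‖ ≤ Real.sqrt (CP * M) := Real.le_sqrt_of_sq_le (by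
      rw [eX_norm]; exact (hCP _).trans (by gcongr; exact hM n))
    have h3 : ‖(2 : ℂ)‖ = 2 := by simp
    rw [h3]
    linarith
  have hpair : Tendsto (fun n => ‖inner ℂ (eX (V n)) (A (u n))‖) atTop (𝓝 0) := by
    refine squeeze_zero (fun n => norm_nonneg _) (fun n => (norm_inner_le_norm _ _).trans
      (mul_le_mul_of_nonneg_right (hVb n) (norm_nonneg _))) ?_
    simpa using (hAu.norm).const_mul (2 * Real.sqrt (CP * M) + Real.sqrt M)
  -- high part
  have hhigh : ∀ n, ∫ ξ in (Metric.ball (0 : R2) (2 * k))ᶜ, MX (w n) ξ ≤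
      c1 * (2 * ‖inner ℂ (eX (V n)) (A (u n))‖ + 4 * c * nW (RT G (w n)) +
        8 * k ^ 2 * c * (nW (PT G 0 (w n)) + nW (PT G 1 (w n)))) := by
    intro n
    obtain ⟨_, -, hR⟩ := RT_BO G
    obtain ⟨_, -, hP0⟩ := PT_BO G 0
    obtain ⟨_, -, hP1⟩ := PT_BO G 1
    have iR := (hR (w n)).2.1.2
    have iP0 := (hP0 (w n)).2.1.2
    have iP1 := (hP1 (w n)).2.1.2
    have ib := (hCF (w n) (V n)).1
    have ibr : IntegrableOn (fun ξ => (bi k (w n) (V n) ξ).re) (Metric.ball (0 : R2) (2 * k))ᶜ volume := ib.re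
    have i1 := ibr.const_mul 2
    have i2 := (iR.const_mul (4 * c)).integrableOn (s := (Metric.ball (0 : R2) (2 * k))ᶜ)
    have i3 := ((iP0.add iP1).const_mul (8 * k ^ 2 * c)).integrableOn (s := (Metric.ball (0 : R2) (2 * k))ᶜ)
    have hle : ∫ ξ in (Metric.ball (0 : R2) (2 * k))ᶜ, MX (w n) ξ ≤ ∫ ξ in (Metric.ball (0 : R2) (2 * k))ᶜ,
        c1 * (2 * (bi k (w n) (V n) ξ).re + 4 * c * (wt ξ * ‖RT G (w n) ξ‖ ^ 2) +
        8 * k ^ 2 * c * (wt ξ * ‖PT G 0 (w n) ξ‖ ^ 2 + wt ξ * ‖PT G 1 (w n) ξ‖ ^ 2)) := by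
      refine setIntegral_mono_on (MX_int _).integrableOn (((i1.add i2).add i3).const_mul c1) hms fun ξ hξ => ?_
      exact coercive_pw hk G (w n) (by simpa using hξ)
    refine hle.trans ?_
    rw [integral_const_mul]
    refine mul_le_mul_of_nonneg_left ?_ hc10.le
    have a1 := integral_add i1 i2
    have a2 := integral_add (i1.add i2) i3
    simp only [Pi.add_apply] at a2
    rw [a2, a1, integral_const_mul, integral_const_mul, integral_const_mul]
    have hre : ∫ ξ in (Metric.ball (0 : R2) (2 * k))ᶜ, (bi k (w n) (V n) ξ).re =
        (inner ℂ (eX (V n)) (A (u n))).re := by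
      have h1 := hA (w n) (V n)
      have h2 : eX (w n) = u n := by simp only [hw]; rw [LinearEquiv.apply_symm_apply]
      rw [h2] at h1
      rw [h1]
      exact integral_re ib
    rw [hre]
    have b1 := Complex.re_le_norm (inner ℂ (eX (V n)) (A (u n)))
    have b2 : ∫ ξ in (Metric.ball (0 : R2) (2 * k))ᶜ, wt ξ * ‖RT G (w n) ξ‖ ^ 2 ≤ nW (RT G (w n)) :=
      setIntegral_le_integral iR (Eventually.of_forall fun ξ => by have := wt_pos ξ; positivity)
    have b3 : ∫ ξ in (Metric.ball (0 : R2) (2 * k))ᶜ, (wt ξ * ‖PT G 0 (w n) ξ‖ ^ 2 + wt ξ * ‖PT G 1 (w n) ξ‖ ^ 2)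
        ≤ nW (PT G 0 (w n)) + nW (PT G 1 (w n)) := by
      rw [nW, nW, ← integral_add iP0 iP1]
      exact setIntegral_le_integral (iP0.add iP1) (Eventually.of_forall fun ξ => by
        have := wt_pos ξ
        simp only [Pi.add_apply]
        positivity)
    gcongr
  have hhigh0 : Tendsto (fun n => ∫ ξ in (Metric.ball (0 : R2) (2 * k))ᶜ, MX (w n) ξ) atTop (𝓝 0) := by
    refine squeeze_zero (fun n => integral_nonneg fun ξ => MX_nonneg _ _) hhigh ?_
    have := (((hpair.const_mul 2).add ((RT_null G u hu).const_mul (4 * c))).add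
      (((PT_null G 0 u hu).add (PT_null G 1 u hu)).const_mul (8 * k ^ 2 * c))).const_mul c1
    simpa using this
  have hN : Tendsto (fun n => ‖u n‖ ^ 2) atTop (𝓝 0) := by
    have := hlow.add hhigh0
    rw [add_zero] at this
    refine this.congr fun n => ?_
    rw [integral_add_compl hmb (MX_int _), MX_integral, ← eX_norm]
    simp only [hw]
    rw [LinearEquiv.apply_symm_apply]
  refine tendsto_zero_iff_norm_tendsto_zero.2 ?_
  have := hN.sqrt
  simpa [Real.sqrt_sq (norm_nonneg _)] using this

lemma fredholm_XS {Γ : Set R2} (hΓ : IsLipschitzDomain Γ) {k : ℝ} (hk : 0 < k) :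
    ∃ (L : SX Γ →L[ℂ] SX Γ), (∀ W V : XS Γ, inner ℂ (eX V) (L (eX W)) = ∫ ξ, bi k W V ξ) ∧
    ∃ (n : ℕ) (e e' : Fin n → SX Γ), (∀ i, L (e i) = 0) ∧ LinearIndependent ℂ e ∧
      (∀ w, L w = 0 → ∃ c : Fin n → ℂ, w = ∑ i, c i • e i) ∧
      (∀ i v, inner ℂ (e' i) (L v) = 0) ∧ LinearIndependent ℂ e' ∧
      (∀ z, (∀ v, inner ℂ z (L v) = 0) → ∃ c : Fin n → ℂ, z = ∑ i, c i • e' i) ∧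
      (∀ y, (∃ w, L w = y) ↔ ∀ i, inner ℂ (e' i) y = 0) := by
  obtain ⟨G⟩ := geoData hΓ
  haveI := SX_complete G
  haveI := SX_sep Γ
  obtain ⟨A, hA⟩ := (FB_high hk Γ).op
  obtain ⟨K, hK⟩ := (FB_low hk G).op
  refine ⟨A + K, fun W V => ?_, fredholm_abstract (high_symm hk hA) (high_PH hk G hA) (low_CC hk G hK)⟩
  rw [ContinuousLinearMap.add_apply, inner_add_right, hA, hK, add_comm]
  obtain ⟨_, -, h1⟩ := FB_high hk Γ
  obtain ⟨_, -, h2⟩ := FB_low hk G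
  have hms : MeasurableSet (Metric.ball (0 : R2) (2 * k)) := Metric.isOpen_ball.measurableSet
  refine integral_add_compl hms ?_
  have := (h2 W V).1.union (h1 W V).1
  rwa [Set.union_compl_self, integrableOn_univ] at this

/-! ### translation -/

/-- from the frozen structure -/
def toXS {Γ : Set R2} (V : Xelt Γ) : XS Γ :=
  ⟨(V.c1.ft, V.c2.ft), ⟨V.c1.cont, V.c1.mem, fun φ h => V.c1.supp φ h.1 h.2⟩,
    ⟨V.c2.cont, V.c2.mem, fun φ h => V.c2.supp φ h.1 h.2⟩, by
      refine ⟨Continuous.aestronglyMeasurable ?_, V.divMem⟩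
      have h1 := V.c1.cont
      have h2 := V.c2.cont
      unfold dotFt
      fun_prop⟩

/-- to the frozen structure -/
def ofXS {Γ : Set R2} (F : XS Γ) : Xelt Γ where
  c1 := ⟨cp0 F, (cp0_HT F).1, (cp0_HT F).2.1, fun φ h h' => (cp0_HT F).2.2 φ ⟨h, h'⟩⟩
  c2 := ⟨cp1 F, (cp1_HT F).1, (cp1_HT F).2.1, fun φ h h' => (cp1_HT F).2.2 φ ⟨h, h'⟩⟩
  divMem := (cpd_memW F).2

lemma toXS_ofXS {Γ : Set R2} (F : XS Γ) : toXS (ofXS F) = F := rfl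

lemma ofXS_toXS {Γ : Set R2} (V : Xelt Γ) : ofXS (toXS V) = V := rfl

lemma Xelt_ext {Γ : Set R2} {W W' : Xelt Γ} (h1 : ∀ ξ, W.c1.ft ξ = W'.c1.ft ξ)
    (h2 : ∀ ξ, W.c2.ft ξ = W'.c2.ft ξ) : W = W' := by
  obtain ⟨⟨a, _, _, _⟩, ⟨b, _, _, _⟩, _⟩ := W
  obtain ⟨⟨a', _, _, _⟩, ⟨b', _, _, _⟩, _⟩ := W'
  obtain rfl : a = a' := funext h1
  obtain rfl : b = b' := funext h2
  rfl

lemma Bform_eq (k : ℝ) {Γ : Set R2} (W V : Xelt Γ) : Bform k W V = ∫ ξ, bi k (toXS W) (toXS V) ξ := rfl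

lemma Xinner_eq {Γ : Set R2} (Y V : Xelt Γ) :
    Xinner Y V = ((((2 * π) ^ 2)⁻¹ : ℝ) : ℂ) * inner ℂ (eX (toXS V)) (eX (toXS Y)) := by
  rw [eX_inner, Xinner]
  congr 1
  refine integral_congr_ae (Eventually.of_forall fun ξ => ?_)
  have : divFt Y ξ * starRingEnd ℂ (divFt V ξ) = cpd (toXS Y) ξ * starRingEnd ℂ (cpd (toXS V) ξ) := by
    have e : ∀ U : Xelt Γ, divFt U ξ = Complex.I * cpd (toXS U) ξ := fun U => rfl
    rw [e, e, map_mul, Complex.conj_I]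
    linear_combination (-(cpd (toXS Y) ξ * starRingEnd ℂ (cpd (toXS V) ξ))) * Complex.I_mul_I
  simp only [this]
  rfl

lemma toXS_sum {Γ : Set R2} {n : ℕ} (c : Fin n → ℂ) (F : Fin n → XS Γ) (W : XS Γ) :
    W = ∑ i, c i • F i ↔ (∀ ξ, cp0 W ξ = ∑ i, c i * (ofXS (F i)).c1.ft ξ) ∧
      (∀ ξ, cp1 W ξ = ∑ i, c i * (ofXS (F i)).c2.ft ξ) := by
  have h0 : ∀ ξ, cp0 (∑ i, c i • F i) ξ = ∑ i, c i * (ofXS (F i)).c1.ft ξ := fun ξ => by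
    rw [map_sum, Finset.sum_apply]
    exact Finset.sum_congr rfl fun i _ => by rw [map_smul]; rfl
  have h1 : ∀ ξ, cp1 (∑ i, c i • F i) ξ = ∑ i, c i * (ofXS (F i)).c2.ft ξ := fun ξ => by
    rw [map_sum, Finset.sum_apply]
    exact Finset.sum_congr rfl fun i _ => by rw [map_smul]; rfl
  constructor
  · intro h
    rw [h]
    exact ⟨h0, h1⟩
  · rintro ⟨a, b⟩
    refine Subtype.ext (Prod.ext (funext fun ξ => ?_) (funext fun ξ => ?_))
    · exact (a ξ).trans (h0 ξ).symm
    · exact (b ξ).trans (h1 ξ).symm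

lemma li_translate {Γ : Set R2} {n : ℕ} {e : Fin n → SX Γ} (h : LinearIndependent ℂ e) (c : Fin n → ℂ)
    (hc : (∀ ξ : R2, ∑ i, c i * (ofXS (eX.symm (e i))).c1.ft ξ = 0) ∧
         (∀ ξ : R2, ∑ i, c i * (ofXS (eX.symm (e i))).c2.ft ξ = 0)) : c = 0 := by
  have h0 := (toXS_sum c (fun i => eX.symm (e i)) 0).2 ⟨fun ξ => (hc.1 ξ).symm, fun ξ => (hc.2 ξ).symm⟩
  have h1 := congrArg eX h0
  rw [map_zero, map_sum] at h1
  simp only [map_smul, LinearEquiv.apply_symm_apply] at h1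
  exact funext (Fintype.linearIndependent_iff.1 h c h1.symm)

lemma span_translate {Γ : Set R2} {n : ℕ} {e : Fin n → SX Γ} (W : Xelt Γ) (c : Fin n → ℂ)
    (h : eX (toXS W) = ∑ i, c i • e i) :
    (∀ ξ : R2, W.c1.ft ξ = ∑ i, c i * (ofXS (eX.symm (e i))).c1.ft ξ) ∧
      (∀ ξ : R2, W.c2.ft ξ = ∑ i, c i * (ofXS (eX.symm (e i))).c2.ft ξ) := by
  refine (toXS_sum c (fun i => eX.symm (e i)) (toXS W)).1 ?_
  have h1 := congrArg eX.symm h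
  rw [map_sum, LinearEquiv.symm_apply_apply] at h1
  simpa only [map_smul] using h1

/-- Theorem 3.5: the variational problem `B(W,V) = ⟨Y,V⟩ ∀ V ∈ X`
satisfies the Fredholm alternative; the operator `𝓛 : X → X*`, `(𝓛W)(V) = B(W,V)`, is
Fredholm of index zero.  (Bounded conjugate-linear functionals on the Hilbert space
`X` are represented, via Riesz, as `V ↦ Xinner Y V` with `Y ∈ X`.)  Concretely: the
kernel of `𝓛` and the kernel of its adjoint are both spanned by `n` linearly
independent elements for the same finite `n`; the range of `𝓛` is the (closed)
annihilator of the adjoint kernel, hence closed with codimension `n` equal to the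
dimension of the kernel; and `𝓛` is invertible iff its kernel is trivial. -/
theorem statement8 (Γ : Set R2) (hΓ : IsLipschitzDomain Γ) (k : ℝ) (hk : 0 < k) :
    ∃ n : ℕ, ∃ e e' : Fin n → Xelt Γ,
      -- `e` consists of kernel elements of `𝓛`, linearly independent, spanning the kernel
      (∀ i, ∀ V : Xelt Γ, Bform k (e i) V = 0) ∧
      (∀ c : Fin n → ℂ,
        ((∀ ξ : R2, ∑ i, c i * (e i).c1.ft ξ = 0) ∧
         (∀ ξ : R2, ∑ i, c i * (e i).c2.ft ξ = 0)) → c = 0) ∧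
      (∀ W : Xelt Γ, (∀ V : Xelt Γ, Bform k W V = 0) →
        ∃ c : Fin n → ℂ,
          (∀ ξ : R2, W.c1.ft ξ = ∑ i, c i * (e i).c1.ft ξ) ∧
          (∀ ξ : R2, W.c2.ft ξ = ∑ i, c i * (e i).c2.ft ξ)) ∧
      -- `e'` plays the same role for the adjoint of `𝓛`
      (∀ i, ∀ V : Xelt Γ, Bform k V (e' i) = 0) ∧
      (∀ c : Fin n → ℂ,
        ((∀ ξ : R2, ∑ i, c i * (e' i).c1.ft ξ = 0) ∧
         (∀ ξ : R2, ∑ i, c i * (e' i).c2.ft ξ = 0)) → c = 0) ∧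
      (∀ Z : Xelt Γ, (∀ V : Xelt Γ, Bform k V Z = 0) →
        ∃ c : Fin n → ℂ,
          (∀ ξ : R2, Z.c1.ft ξ = ∑ i, c i * (e' i).c1.ft ξ) ∧
          (∀ ξ : R2, Z.c2.ft ξ = ∑ i, c i * (e' i).c2.ft ξ)) ∧
      -- the range of `𝓛` is exactly the annihilator of the adjoint kernel
      (∀ Y : Xelt Γ,
        (∃ W : Xelt Γ, ∀ V : Xelt Γ, Bform k W V = Xinner Y V) ↔
          (∀ i, Xinner Y (e' i) = 0)) ∧
      -- in particular, `𝓛` is invertible iff its kernel is trivial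
      ((∀ W : Xelt Γ, (∀ V : Xelt Γ, Bform k W V = 0) →
          ∀ ξ : R2, W.c1.ft ξ = 0 ∧ W.c2.ft ξ = 0) ↔
        (∀ Y : Xelt Γ, ∃! W : Xelt Γ, ∀ V : Xelt Γ, Bform k W V = Xinner Y V)) := by
  obtain ⟨L, hL, n, e, e', h1, h2, h3, h4, h5, h6, h7⟩ := fredholm_XS hΓ hk
  set κ : ℂ := ((((2 * π) ^ 2)⁻¹ : ℝ) : ℂ) with hκ
  have hκ0 : κ ≠ 0 := by
    rw [hκ]
    exact_mod_cast (by positivity : (0 : ℝ) < ((2 * π) ^ 2)⁻¹).ne'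
  have hB : ∀ W V : Xelt Γ, Bform k W V = inner ℂ (eX (toXS V)) (L (eX (toXS W))) := fun W V => by
    rw [hL, Bform_eq]
  have hsurj : ∀ v : SX Γ, eX (toXS (ofXS (eX.symm v))) = v := fun v => by
    rw [toXS_ofXS, LinearEquiv.apply_symm_apply]
  have hsep : ∀ x y : SX Γ, (∀ V : Xelt Γ, inner ℂ (eX (toXS V)) x = inner ℂ (eX (toXS V)) y) → x = y := by
    intro x y h
    refine ext_inner_left ℂ fun v => ?_
    have := h (ofXS (eX.symm v))
    rwa [hsurj] at this
  have hker : ∀ W : Xelt Γ, (∀ V : Xelt Γ, Bform k W V = 0) ↔ L (eX (toXS W)) = 0 := by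
    intro W
    constructor
    · intro h
      refine hsep _ _ fun V => ?_
      rw [← hB, h V, inner_zero_right]
    · intro h V
      rw [hB, h, inner_zero_right]
  have hsm : ∀ x y : SX Γ, inner ℂ x (κ • y) = κ * inner ℂ x y := fun x y => inner_smul_right (𝕜 := ℂ) x y κ
  have hsol : ∀ W Y : Xelt Γ, (∀ V : Xelt Γ, Bform k W V = Xinner Y V) ↔ L (eX (toXS W)) = κ • eX (toXS Y) := by
    intro W Y
    constructor
    · intro h
      refine hsep _ _ fun V => ?_
      rw [← hB, h V, Xinner_eq, hsm]
    · intro h V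
      rw [hB, h, Xinner_eq, hsm]
  have hrange : ∀ Y : Xelt Γ,
        (∃ W : Xelt Γ, ∀ V : Xelt Γ, Bform k W V = Xinner Y V) ↔
          (∀ i, Xinner Y (ofXS (eX.symm (e' i))) = 0) := by
    intro Y
    have a : (∃ W : Xelt Γ, ∀ V : Xelt Γ, Bform k W V = Xinner Y V) ↔ ∃ w, L w = κ • eX (toXS Y) := by
      constructor
      · rintro ⟨W, hW⟩
        exact ⟨_, (hsol W Y).1 hW⟩
      · rintro ⟨w, hw⟩
        exact ⟨ofXS (eX.symm w), (hsol _ Y).2 (by rw [hsurj, hw])⟩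
    rw [a, h7]
    refine forall_congr' fun i => ?_
    rw [Xinner_eq, hsurj, hsm]
  have hinj : ∀ W W' : Xelt Γ, eX (toXS W) = eX (toXS W') → W = W' := by
    intro W W' h
    have := eX.injective h
    rw [← ofXS_toXS W, this, ofXS_toXS]
  refine ⟨n, fun i => ofXS (eX.symm (e i)), fun i => ofXS (eX.symm (e' i)), fun i => ?_, li_translate h2,
    fun W hW => ?_, fun i V => ?_, li_translate h5, fun Z hZ => ?_, hrange, ?_⟩
  · exact (hker _).2 (by rw [hsurj, h1])
  · obtain ⟨c, hc⟩ := h3 _ ((hker W).1 hW)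
    exact ⟨c, span_translate W c hc⟩
  · rw [hB, hsurj, h4]
  · obtain ⟨c, hc⟩ := h6 (eX (toXS Z)) (fun v => by
      have := hZ (ofXS (eX.symm v))
      rwa [hB, hsurj] at this)
    exact ⟨c, span_translate Z c hc⟩
  · constructor
    · intro h Y
      have hz : ∀ w, L w = 0 → w = 0 := by
        intro w hw
        have h0 := h (ofXS (eX.symm w)) ((hker _).2 (by rw [hsurj, hw]))
        have : ofXS (eX.symm w) = ofXS 0 := Xelt_ext (fun ξ => (h0 ξ).1) (fun ξ => (h0 ξ).2)
        have h2 := congrArg (fun U => eX (toXS U)) this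
        simp only [toXS_ofXS, map_zero, LinearEquiv.apply_symm_apply] at h2
        exact h2
      have hn : ∀ i : Fin n, False := fun i => h2.ne_zero i (hz _ (h1 i))
      obtain ⟨W, hW⟩ := (hrange Y).2 (fun i => (hn i).elim)
      refine ⟨W, hW, fun W' hW' => hinj _ _ ?_⟩
      have a := (hsol _ _).1 hW
      have b := (hsol _ _).1 hW'
      refine sub_eq_zero.1 (hz _ ?_)
      rw [map_sub, a, b, sub_self]
    · intro h W hW
      obtain ⟨W0, -, hu⟩ := h (ofXS 0)
      have z : eX (toXS (ofXS (0 : XS Γ))) = 0 := by rw [toXS_ofXS, map_zero]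
      have a := hu W ((hsol _ _).2 (by rw [z, smul_zero]; exact (hker W).1 hW))
      have b := hu (ofXS 0) ((hsol _ _).2 (by rw [z, smul_zero, map_zero]))
      rw [a, ← b]
      exact fun ξ => ⟨rfl, rfl⟩

end
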